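/- arXiv:1910.05541 — 8 statements merged into one kernel-verified Lean document; each statement's English description precedes it below -/
import Mathlib

section
/- Let K be a nonempty bounded closed convex subset of a uniformly convex Banach space X and let F : K → K be a nonexpansive mapping. Fix ε ∈ (0, 1/2) and sequences η_n, δ_n ∈ (ε, 1−ε). Let w_0 ∈ K and define the Ishikawa iteration w_{n+1} = (1−η_n) w_n + η_n F((1−δ_n) w_n + δ_n F w_n) for n = 0, 1, 2, .... Then ‖w_n − F w_n‖ → 0 as n → ∞. -/
/-!
No fixed point of `F` is needed, only approximate ones, which Banach's contraction principle
supplies: the fixed point `p` of `x ↦ (1 - t) • F x + t • x₀` satisfies `‖F p - p‖ ≤ t * diam K`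
(`exists_approx_fixedPoint`).

If `‖F p - p‖ ≤ κ`, one Ishikawa step increases the distance to `p` by at most `2 * κ`. Moreover
`‖w n - F (w n)‖ ≥ c` forces `w n` and `F y`, where `y = (1 - δ n) • w n + δ n • F (w n)`, to be at
least `ε * c` apart, so uniform convexity turns the step into a gain of a fixed `τ > 0`
(`ishikawa_step`). Here `τ` depends on `c` but not on `p`, `κ` or `n`. Over the first `M` steps the
total gain is at most `diam K + 2 * κ * M`; letting `κ` depend on `M`, it is at most `diam K + 1`.
So the gains are summable, and only finitely many `n` have `‖w n - F (w n)‖ ≥ c`.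
-/

open Filter Topology

/-- A nonexpansive self-map of a nonempty bounded closed convex set has points moved
arbitrarily little. -/
lemma exists_approx_fixedPoint {X : Type*} [NormedAddCommGroup X] [NormedSpace ℝ X]
    [CompleteSpace X] {K : Set X} (hKne : K.Nonempty) (hKb : Bornology.IsBounded K)
    (hKcl : IsClosed K) (hKconv : Convex ℝ K) {F : X → X} (hFK : ∀ w ∈ K, F w ∈ K)
    (hFne : ∀ w ∈ K, ∀ z ∈ K, ‖F w - F z‖ ≤ ‖w - z‖) {κ : ℝ} (hκ : 0 < κ) :
    ∃ p ∈ K, ‖F p - p‖ ≤ κ := by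
  obtain ⟨x₀, hx₀⟩ := hKne
  set D := Metric.diam K
  have hD : 0 ≤ D := Metric.diam_nonneg
  set t := κ / (D + κ)
  have ht0 : 0 < t := by positivity
  have ht1 : t ≤ 1 := div_le_one_of_le₀ (by linarith) (by positivity)
  have htD : t * D ≤ κ := by
    rw [div_mul_eq_mul_div, div_le_iff₀ (by positivity)]
    nlinarith
  have hmaps : Set.MapsTo (fun x => (1 - t) • F x + t • x₀) K K := fun x hx =>
    hKconv (hFK x hx) hx₀ (by linarith) ht0.le (by ring)
  have hcontr : ContractingWith (1 - t).toNNReal (hmaps.restrict _ K K) := by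
    constructor
    · rw [← NNReal.coe_lt_coe, Real.coe_toNNReal _ (by linarith)]
      simpa using ht0
    · refine LipschitzWith.of_dist_le_mul fun x y => ?_
      rw [Real.coe_toNNReal _ (by linarith), Subtype.dist_eq, Subtype.dist_eq]
      simp only [Set.MapsTo.val_restrict_apply, dist_eq_norm, add_sub_add_right_eq_sub, ← smul_sub]
      rw [norm_smul_of_nonneg (by linarith)]
      exact mul_le_mul_of_nonneg_left (hFne _ x.2 _ y.2) (by linarith)
  obtain ⟨p, hp, hfix, -⟩ := hcontr.exists_fixedPoint' hKcl.isComplete hmaps hx₀ (edist_ne_top _ _)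
  refine ⟨p, hp, ?_⟩
  have hpeq : (1 - t) • F p + t • x₀ = p := hfix
  have hsub : F p - p = t • (F p - x₀) := by
    nth_rewrite 2 [← hpeq]
    module
  rw [hsub, norm_smul_of_nonneg ht0.le, ← dist_eq_norm]
  exact (mul_le_mul_of_nonneg_left (Metric.dist_le_diam_of_mem hKb (hFK p hp) hx₀) ht0.le).trans htD

/-- Uniform convexity on all balls of radius at most `B` at once, for convex combinations whose
weights stay away from `0` and `1`. -/
lemma exists_forall_norm_combo_le_sub (X : Type*) [NormedAddCommGroup X] [NormedSpace ℝ X]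
    [UniformConvexSpace X] {a ε : ℝ} (ha : 0 < a) (hε : 0 < ε) (B : ℝ) :
    ∃ τ, 0 < τ ∧ ∀ R ≤ B, ∀ x z : X, ‖x‖ ≤ R → ‖z‖ ≤ R → a ≤ ‖x - z‖ →
      ∀ η ∈ Set.Ioo ε (1 - ε), ‖(1 - η) • x + η • z‖ ≤ R - τ := by
  obtain hB | hB := le_or_gt B 0
  · refine ⟨1, one_pos, fun R hR x z hx hz hxz => ?_⟩
    linarith [norm_sub_le x z]
  obtain ⟨d, hd, h⟩ := exists_forall_closed_ball_dist_add_le_two_sub X (div_pos ha hB)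
  refine ⟨ε * (d * (a / 2)), by positivity, fun R hR x z hx hz hxz η hη => ?_⟩
  -- Points at distance `a` lie in no ball of radius below `a / 2`, so the scale-invariant gain
  -- `d * R` is bounded below.
  have haR : a / 2 ≤ R := by linarith [norm_sub_le x z]
  have hR0 : 0 < R := by linarith
  have hscale : ∀ v : X, ‖R⁻¹ • v‖ = ‖v‖ / R := fun v => by
    rw [norm_smul_of_nonneg (by positivity), inv_mul_eq_div]
  have hsum : ‖x + z‖ ≤ 2 * R - d * R := by
    have key := @h (R⁻¹ • x) (by rw [hscale]; exact (div_le_one hR0).2 hx)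
      (R⁻¹ • z) (by rw [hscale]; exact (div_le_one hR0).2 hz)
      (by rw [← smul_sub, hscale]; gcongr)
    rw [← smul_add, hscale, div_le_iff₀ hR0] at key
    linarith
  have hsum' : ‖x + z‖ ≤ 2 * R - d * (a / 2) := by nlinarith
  obtain ⟨h1, h2⟩ := hη
  -- Split off the weight `ε` from both points.
  have hsplit : (1 - η) • x + η • z = ε • (x + z) + ((1 - η - ε) • x + (η - ε) • z) := by module
  have hx' : ‖(1 - η - ε) • x‖ ≤ (1 - η - ε) * R := by
    rw [norm_smul_of_nonneg (by linarith)]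
    exact mul_le_mul_of_nonneg_left hx (by linarith)
  have hz' : ‖(η - ε) • z‖ ≤ (η - ε) * R := by
    rw [norm_smul_of_nonneg (by linarith)]
    exact mul_le_mul_of_nonneg_left hz (by linarith)
  have hs' : ‖ε • (x + z)‖ ≤ ε * (2 * R - d * (a / 2)) := by
    rw [norm_smul_of_nonneg hε.le]
    exact mul_le_mul_of_nonneg_left hsum' hε.le
  rw [hsplit]
  linarith [norm_add_le_of_le hs' (norm_add_le_of_le hx' hz')]

/-- Seen from a point `p` with `‖F p - p‖ ≤ κ`, the Ishikawa step from `v` averages two vectors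
`v - p` and `F y - p` of norm at most `‖v - p‖ + 2 * κ`, and these are at least `ε * ‖v - F v‖`
apart. -/
lemma ishikawa_step {X : Type*} [NormedAddCommGroup X] [NormedSpace ℝ X] {K : Set X}
    (hKconv : Convex ℝ K) {F : X → X} (hFK : ∀ w ∈ K, F w ∈ K)
    (hFne : ∀ w ∈ K, ∀ z ∈ K, ‖F w - F z‖ ≤ ‖w - z‖) {ε δ κ : ℝ} (hε : 0 < ε)
    (hδ : δ ∈ Set.Ioo ε (1 - ε)) {p v : X} (hp : p ∈ K) (hv : v ∈ K) (hκ : ‖F p - p‖ ≤ κ) :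
    ‖F ((1 - δ) • v + δ • F v) - p‖ ≤ ‖v - p‖ + 2 * κ ∧
      ε * ‖v - F v‖ ≤ ‖(v - p) - (F ((1 - δ) • v + δ • F v) - p)‖ := by
  obtain ⟨h1, h2⟩ := hδ
  have hδ0 : 0 < δ := hε.trans h1
  have hκ0 : 0 ≤ κ := (norm_nonneg _).trans hκ
  set y := (1 - δ) • v + δ • F v with hy
  have hyK : y ∈ K := hKconv hv (hFK v hv) (by linarith) hδ0.le (by ring)
  have hFp : ∀ u ∈ K, ‖F u - p‖ ≤ ‖u - p‖ + κ := fun u hu => by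
    rw [← sub_add_sub_cancel (F u) (F p) p]
    exact norm_add_le_of_le (hFne u hu p hp) hκ
  constructor
  · have hyp : ‖y - p‖ ≤ ‖v - p‖ + κ := by
      have hyp_eq : y - p = (1 - δ) • (v - p) + δ • (F v - p) := by rw [hy]; module
      have hle := norm_add_le ((1 - δ) • (v - p)) (δ • (F v - p))
      rw [← hyp_eq, norm_smul_of_nonneg (by linarith), norm_smul_of_nonneg hδ0.le] at hle
      nlinarith [hFp v hv]
    linarith [hFp y hyK]
  · have hvy : ‖v - y‖ = δ * ‖v - F v‖ := by
      rw [← norm_smul_of_nonneg hδ0.le, hy]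
      congr 1
      module
    have htri := norm_sub_le_norm_sub_add_norm_sub v (F y) (F v)
    have hyv := hFne y hyK v hv
    rw [norm_sub_rev y v, hvy] at hyv
    rw [sub_sub_sub_cancel_right]
    nlinarith [norm_nonneg (v - F v)]

/-- Ishikawa iteration for a nonexpansive self-map of a nonempty bounded closed convex
subset of a uniformly convex Banach space: `‖w n - F (w n)‖ → 0`. -/
theorem ishikawa_norm_sub_image_tendsto_zero
    {X : Type*} [NormedAddCommGroup X] [NormedSpace ℝ X]
    [UniformConvexSpace X] [CompleteSpace X]
    (K : Set X) (hKne : K.Nonempty) (hKb : Bornology.IsBounded K)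
    (hKcl : IsClosed K) (hKconv : Convex ℝ K)
    (F : X → X) (hFK : ∀ w ∈ K, F w ∈ K)
    (hFne : ∀ w ∈ K, ∀ z ∈ K, ‖F w - F z‖ ≤ ‖w - z‖)
    (ε : ℝ) (hε : ε ∈ Set.Ioo (0 : ℝ) (1 / 2))
    (η δ : ℕ → ℝ)
    (hη : ∀ n, η n ∈ Set.Ioo ε (1 - ε)) (hδ : ∀ n, δ n ∈ Set.Ioo ε (1 - ε))
    (w : ℕ → X) (hw0 : w 0 ∈ K)
    (hw : ∀ n, w (n + 1) =
      (1 - η n) • w n + η n • F ((1 - δ n) • w n + δ n • F (w n))) :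
    Tendsto (fun n => ‖w n - F (w n)‖) atTop (𝓝 0) := by
  have hε0 : 0 < ε := hε.1
  set D := Metric.diam K
  have hwK : ∀ n, w n ∈ K := by
    intro n
    induction n with
    | zero => exact hw0
    | succ n ih =>
      rw [hw]
      obtain ⟨h1, h2⟩ := hη n
      obtain ⟨h3, h4⟩ := hδ n
      exact hKconv ih
        (hFK _ (hKconv ih (hFK _ ih) (by linarith) (by linarith) (by ring)))
        (by linarith) (by linarith) (by ring)
  have hdist : ∀ u ∈ K, ∀ v ∈ K, ‖u - v‖ ≤ D := fun u hu v hv => by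
    rw [← dist_eq_norm]
    exact Metric.dist_le_diam_of_mem hKb hu hv
  rw [Metric.tendsto_atTop']
  intro c hc
  -- The radius `‖w n - p‖ + 2 * κ` is at most `D + 1` for the `κ` used below.
  obtain ⟨τ, hτ, hgain⟩ := exists_forall_norm_combo_le_sub X (mul_pos hε0 hc) hε0 (D + 1)
  classical
  set g : ℕ → ℝ := fun n => if c ≤ ‖w n - F (w n)‖ then τ else 0 with hg
  have hg0 : ∀ n, 0 ≤ g n := fun n => by
    simp only [hg]
    split_ifs <;> linarith
  have hsum : ∀ M, ∑ n ∈ Finset.range M, g n ≤ D + 1 := by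
    intro M
    set κ : ℝ := 1 / (2 * (M + 1)) with hκ_def
    have hκ0 : 0 < κ := by positivity
    have hκM : 2 * κ * (M + 1) = 1 := by rw [hκ_def]; field_simp
    have hκ1 : 2 * κ ≤ 1 := by
      nlinarith [mul_nonneg hκ0.le (Nat.cast_nonneg (α := ℝ) M)]
    obtain ⟨p, hp, hpκ⟩ := exists_approx_fixedPoint hKne hKb hKcl hKconv hFK hFne hκ0
    have hstep : ∀ n, ‖w (n + 1) - p‖ ≤ ‖w n - p‖ + 2 * κ - g n := by
      intro n
      obtain ⟨hR, hsep⟩ := ishikawa_step hKconv hFK hFne hε0 (hδ n) hp (hwK n) hpκ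
      have hR' : ‖w n - p‖ ≤ ‖w n - p‖ + 2 * κ := by linarith
      set z := F ((1 - δ n) • w n + δ n • F (w n)) with hz
      have heq : w (n + 1) - p = (1 - η n) • (w n - p) + η n • (z - p) := by
        rw [hw, ← hz]
        module
      rw [heq]
      simp only [hg]
      split_ifs with hcn
      · exact hgain _ (by linarith [hdist _ (hwK n) p hp]) _ _ hR' hR
          ((mul_le_mul_of_nonneg_left hcn hε0.le).trans hsep) _ (hη n)
      · obtain ⟨h1, h2⟩ := hη n
        have hle := norm_add_le ((1 - η n) • (w n - p)) (η n • (z - p))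
        rw [norm_smul_of_nonneg (by linarith), norm_smul_of_nonneg (by linarith)] at hle
        nlinarith
    have htel : ∀ m : ℕ, ‖w m - p‖ + ∑ n ∈ Finset.range m, g n ≤ ‖w 0 - p‖ + 2 * κ * m := by
      intro m
      induction m with
      | zero => simp
      | succ m ih =>
        rw [Finset.sum_range_succ]
        push_cast
        linarith [hstep m]
    linarith [htel M, norm_nonneg (w M - p), hdist _ hw0 p hp]
  have hlim := (summable_of_sum_range_le hg0 hsum).tendsto_atTop_zero
  obtain ⟨N, hN⟩ := eventually_atTop.1 (hlim.eventually (gt_mem_nhds hτ))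
  refine ⟨N, fun n hn => ?_⟩
  rw [Real.dist_0_eq_abs, abs_norm]
  by_contra! hcn
  have hlt := hN n hn.le
  simp only [hg, if_pos hcn, lt_irrefl] at hlt
end

section
/- Let K be a nonempty bounded closed convex subset of a uniformly convex Banach space X and let F : K → K be a nonexpansive mapping. Fix ε ∈ (0, 1/2) and sequences η_n, δ_n ∈ (ε, 1−ε). Let w_0 ∈ K and define w_{n+1} = (1−η_n) w_n + η_n F((1−δ_n) w_n + δ_n F w_n). If F(K) is contained in a compact set, then the sequence {w_n} converges to a fixed point of F. -/
/-!
A nonexpansive `F` whose values on `K` lie in a compact set has this property: any sequence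
`u` in `K` with `u n - F (u n) → 0` has a subsequence converging to a fixed point
(`exists_fixedPoint_of_approx`). It is used twice. Applied to the fixed points of the contractions
`x ↦ (1 - t) • x₀ + t • F x`, `t → 1`, it gives some fixed point `p`. Then `‖w n - p‖` is
nonincreasing, and uniform convexity shows that each step with `s ≤ ‖w n - F (w n)‖` lowers it
by a fixed positive amount depending only on `s`, so `w n - F (w n) → 0`. Applied to `w` itself, the
property gives a subsequential limit `a` that is a fixed point; since `‖w n - a‖` is nonincreasing
and tends to `0` along a subsequence, `w` converges to `a`.
-/

open Filter Topology

/-- Uniform convexity for combinations with weights bounded away from `0` and `1`. The gain `ρ` is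
uniform over all radii `r ≤ R`, including small ones: `s ≤ ‖x - y‖` forces `s / 2 ≤ r`. -/
theorem exists_norm_combo_le_sub {X : Type*} [NormedAddCommGroup X] [NormedSpace ℝ X]
    [UniformConvexSpace X] {s R : ℝ} (hs : 0 < s) (hR : 0 < R) :
    ∃ ρ, 0 < ρ ∧ ∀ r ≤ R, ∀ x y : X, ‖x‖ ≤ r → ‖y‖ ≤ r → s ≤ ‖x - y‖ →
      ∀ ε t : ℝ, 0 < ε → ε ≤ t → t ≤ 1 - ε → ‖(1 - t) • x + t • y‖ ≤ r - ε * ρ := by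
  obtain ⟨δ, hδ, h⟩ := exists_forall_closed_ball_dist_add_le_two_sub X (div_pos hs hR)
  refine ⟨s * δ / 2, by positivity, fun r hrR x y hx hy hxy ε t hε h1 h2 => ?_⟩
  have hsr : s / 2 ≤ r := by linarith [norm_sub_le x y]
  have hr : 0 < r := by linarith
  have hadd : ‖x + y‖ ≤ 2 * r - s * δ / 2 := by
    have key := @h (r⁻¹ • x)
      (by rw [norm_smul, norm_inv, Real.norm_of_nonneg hr.le]
          exact (inv_mul_le_one₀ hr).2 hx) (r⁻¹ • y)
      (by rw [norm_smul, norm_inv, Real.norm_of_nonneg hr.le]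
          exact (inv_mul_le_one₀ hr).2 hy)
      (by rw [← smul_sub, norm_smul, norm_inv, Real.norm_of_nonneg hr.le, inv_mul_eq_div]
          gcongr)
    rw [← smul_add, norm_smul, norm_inv, Real.norm_of_nonneg hr.le, inv_mul_le_iff₀ hr] at key
    nlinarith
  have hρ : 0 < s * δ / 2 := by positivity
  generalize s * δ / 2 = ρ at *
  rcases le_total t (1 / 2) with ht | ht
  · have e : (1 - t) • x + t • y = (1 - 2 * t) • x + t • (x + y) := by module
    rw [e]
    refine (norm_add_le _ _).trans ?_
    rw [norm_smul, norm_smul, Real.norm_of_nonneg (by linarith), Real.norm_of_nonneg (by linarith)]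
    have a1 := mul_le_mul_of_nonneg_left hx (show 0 ≤ 1 - 2 * t by linarith)
    have a2 := mul_le_mul_of_nonneg_left hadd (show 0 ≤ t by linarith)
    have a3 := mul_le_mul_of_nonneg_right h1 hρ.le
    linarith
  · have e : (1 - t) • x + t • y = (2 * t - 1) • y + (1 - t) • (x + y) := by module
    rw [e]
    refine (norm_add_le _ _).trans ?_
    rw [norm_smul, norm_smul, Real.norm_of_nonneg (by linarith), Real.norm_of_nonneg (by linarith)]
    have a1 := mul_le_mul_of_nonneg_left hy (show 0 ≤ 2 * t - 1 by linarith)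
    have a2 := mul_le_mul_of_nonneg_left hadd (show 0 ≤ 1 - t by linarith)
    have a3 := mul_le_mul_of_nonneg_right (show ε ≤ 1 - t by linarith) hρ.le
    linarith

theorem exists_fixedPoint_of_approx {X : Type*} [NormedAddCommGroup X]
    {K C : Set X} (hKcl : IsClosed K) {F : X → X}
    (hFne : ∀ w ∈ K, ∀ z ∈ K, ‖F w - F z‖ ≤ ‖w - z‖)
    (hC : IsCompact C) (hFC : F '' K ⊆ C) {u : ℕ → X} (hu : ∀ n, u n ∈ K)
    (h0 : Tendsto (fun n => u n - F (u n)) atTop (𝓝 0)) :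
    ∃ a ∈ K, F a = a ∧ ∃ φ : ℕ → ℕ, StrictMono φ ∧ Tendsto (u ∘ φ) atTop (𝓝 a) := by
  obtain ⟨a, -, φ, hφ, ha⟩ := hC.tendsto_subseq (fun n => hFC ⟨u n, hu n, rfl⟩)
  have hua : Tendsto (u ∘ φ) atTop (𝓝 a) := by
    have := (h0.comp hφ.tendsto_atTop).add ha
    simpa [Function.comp_def] using this
  have haK : a ∈ K := hKcl.mem_of_tendsto hua (Eventually.of_forall fun n => hu _)
  refine ⟨a, haK, tendsto_nhds_unique ?_ ha, φ, hφ, hua⟩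
  rw [tendsto_iff_norm_sub_tendsto_zero] at hua ⊢
  exact squeeze_zero (fun _ => norm_nonneg _) (fun n => hFne _ (hu _) _ haK) hua

/-- The fixed points of the contractions `x ↦ (1 - t) • x₀ + t • F x`, `t = 1 - 1 / (k + 2)`,
form an approximate fixed point sequence of `F`. -/
theorem exists_approx_fixedPoint_seq {X : Type*} [NormedAddCommGroup X] [NormedSpace ℝ X]
    [CompleteSpace X] {K : Set X} (hKne : K.Nonempty) (hKb : Bornology.IsBounded K)
    (hKcl : IsClosed K) (hKconv : Convex ℝ K) {F : X → X} (hFK : ∀ w ∈ K, F w ∈ K)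
    (hFne : ∀ w ∈ K, ∀ z ∈ K, ‖F w - F z‖ ≤ ‖w - z‖) :
    ∃ u : ℕ → X, (∀ n, u n ∈ K) ∧ Tendsto (fun n => u n - F (u n)) atTop (𝓝 0) := by
  obtain ⟨x₀, hx₀⟩ := hKne
  have key : ∀ k : ℕ, ∃ u ∈ K, u - F u = (1 / ((k : ℝ) + 1 + 1)) • (x₀ - F u) := by
    intro k
    set c : ℝ := 1 / ((k : ℝ) + 1 + 1) with hc
    have hc0 : 0 < c := by positivity
    have hc1 : c ≤ 1 := by
      rw [hc, div_le_one (by positivity)]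
      have : (0 : ℝ) ≤ k := by positivity
      linarith
    let G : X → X := fun x => c • x₀ + (1 - c) • F x
    have hG : Set.MapsTo G K K := fun x hx =>
      hKconv hx₀ (hFK x hx) hc0.le (by linarith) (by ring)
    have hcon : ContractingWith (⟨1 - c, by linarith⟩ : NNReal) (hG.restrict G K K) := by
      constructor
      · change 1 - c < 1
        linarith
      · refine LipschitzWith.of_dist_le_mul fun x y => ?_
        change dist (G x) (G y) ≤ (1 - c) * dist (x : X) y
        rw [dist_eq_norm, dist_eq_norm]
        have e : G x - G y = (1 - c) • (F x - F y) := by simp only [G]; module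
        rw [e, norm_smul, Real.norm_of_nonneg (by linarith)]
        exact mul_le_mul_of_nonneg_left (hFne _ x.2 _ y.2) (by linarith)
    obtain ⟨u, huK, hu, -⟩ :=
      hcon.exists_fixedPoint' hKcl.isComplete hG hx₀ (edist_ne_top _ _)
    refine ⟨u, huK, ?_⟩
    have hu' : c • x₀ + (1 - c) • F u = u := hu
    nth_rewrite 1 [← hu']
    module
  choose u huK hu using key
  refine ⟨u, huK, ?_⟩
  obtain ⟨D, hD⟩ := Metric.isBounded_iff.1 hKb
  have hlim : Tendsto (fun k : ℕ => (1 / ((k : ℝ) + 1 + 1)) * D) atTop (𝓝 0) := by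
    have := (tendsto_one_div_add_atTop_nhds_zero_nat (𝕜 := ℝ)).comp (tendsto_add_atTop_nat 1)
    simpa [Function.comp_def] using this.mul_const D
  refine squeeze_zero_norm (fun k => ?_) hlim
  rw [hu k, norm_smul, Real.norm_of_nonneg (by positivity), ← dist_eq_norm]
  exact mul_le_mul_of_nonneg_left (hD hx₀ (hFK _ (huK k))) (by positivity)

/-- Ishikawa iteration for a nonexpansive self-map of a nonempty bounded closed convex
subset of a uniformly convex Banach space: if `F '' K` lies in a compact set, the
iterates converge to a fixed point of `F`. -/
theorem ishikawa_tendsto_fixedPoint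
    {X : Type*} [NormedAddCommGroup X] [NormedSpace ℝ X]
    [UniformConvexSpace X] [CompleteSpace X]
    (K : Set X) (hKne : K.Nonempty) (hKb : Bornology.IsBounded K)
    (hKcl : IsClosed K) (hKconv : Convex ℝ K)
    (F : X → X) (hFK : ∀ w ∈ K, F w ∈ K)
    (hFne : ∀ w ∈ K, ∀ z ∈ K, ‖F w - F z‖ ≤ ‖w - z‖)
    (ε : ℝ) (hε : ε ∈ Set.Ioo (0 : ℝ) (1 / 2))
    (η δ : ℕ → ℝ)
    (hη : ∀ n, η n ∈ Set.Ioo ε (1 - ε)) (hδ : ∀ n, δ n ∈ Set.Ioo ε (1 - ε))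
    (w : ℕ → X) (hw0 : w 0 ∈ K)
    (hw : ∀ n, w (n + 1) =
      (1 - η n) • w n + η n • F ((1 - δ n) • w n + δ n • F (w n)))
    (hcpt : ∃ C : Set X, IsCompact C ∧ F '' K ⊆ C) :
    ∃ a ∈ K, F a = a ∧ Tendsto w atTop (𝓝 a) := by
  obtain ⟨C, hC, hFC⟩ := hcpt
  obtain ⟨hε0, -⟩ := hε
  have hcombo : ∀ x ∈ K, ∀ y ∈ K, ∀ t ∈ Set.Ioo ε (1 - ε), (1 - t) • x + t • y ∈ K :=
    fun x hx y hy t ht => hKconv hx hy (by linarith [ht.2]) (by linarith [ht.1]) (by ring)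
  have hnc : ∀ (x y p : X), ∀ t ∈ Set.Ioo ε (1 - ε),
      ‖(1 - t) • x + t • y - p‖ ≤ (1 - t) * ‖x - p‖ + t * ‖y - p‖ := by
    intro x y p t ht
    have e : (1 - t) • x + t • y - p = (1 - t) • (x - p) + t • (y - p) := by module
    rw [e]
    refine (norm_add_le _ _).trans ?_
    rw [norm_smul, norm_smul, Real.norm_of_nonneg (by linarith [ht.2]),
      Real.norm_of_nonneg (by linarith [ht.1])]
  have hwK : ∀ n, w n ∈ K := by
    intro n
    induction n with
    | zero => exact hw0
    | succ n ih =>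
      rw [hw]
      exact hcombo _ ih _ (hFK _ (hcombo _ ih _ (hFK _ ih) _ (hδ n))) _ (hη n)
  have hFp : ∀ p ∈ K, F p = p → ∀ x ∈ K, ‖F x - p‖ ≤ ‖x - p‖ := by
    intro p hp hfp x hx
    simpa [hfp] using hFne x hx p hp
  have hstep : ∀ p ∈ K, F p = p → ∀ n, ‖w (n + 1) - p‖ ≤ (1 - η n) * ‖w n - p‖
      + η n * ‖(1 - δ n) • w n + δ n • F (w n) - p‖ := by
    intro p hp hfp n
    rw [hw]
    refine (hnc _ _ _ _ (hη n)).trans ?_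
    have := hFp p hp hfp _ (hcombo _ (hwK n) _ (hFK _ (hwK n)) _ (hδ n))
    have := mul_le_mul_of_nonneg_left this (show 0 ≤ η n by linarith [(hη n).1])
    linarith
  have hanti : ∀ p ∈ K, F p = p → Antitone fun n => ‖w n - p‖ := by
    intro p hp hfp
    refine antitone_nat_of_succ_le fun n => ?_
    have h1 := hstep p hp hfp n
    have h2 := hnc (w n) (F (w n)) p _ (hδ n)
    have h3 := mul_le_mul_of_nonneg_left (hFp p hp hfp _ (hwK n))
      (show 0 ≤ δ n by linarith [(hδ n).1])
    have h4 : ‖(1 - δ n) • w n + δ n • F (w n) - p‖ ≤ ‖w n - p‖ := by linarith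
    have h5 := mul_le_mul_of_nonneg_left h4 (show 0 ≤ η n by linarith [(hη n).1])
    linarith
  obtain ⟨u, huK, hu⟩ := exists_approx_fixedPoint_seq hKne hKb hKcl hKconv hFK hFne
  obtain ⟨p, hp, hfp, -⟩ := exists_fixedPoint_of_approx hKcl hFne hC hFC huK hu
  have h0 : Tendsto (fun n => w n - F (w n)) atTop (𝓝 0) := by
    rw [tendsto_zero_iff_norm_tendsto_zero, Metric.tendsto_atTop]
    intro s hs
    -- A step with `s ≤ ‖w n - F (w n)‖` lowers `‖w n - p‖` by at least `ε * (ε * ρ)`: uniform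
    -- convexity lowers the inner average by `ε * ρ`, and the outer one gives it weight `η n > ε`.
    obtain ⟨ρ, hρ, hconv⟩ := exists_norm_combo_le_sub (X := X) hs
      (show 0 < ‖w 0 - p‖ + 1 by positivity)
    have hlim := tendsto_atTop_ciInf (hanti p hp hfp)
      ⟨0, by rintro _ ⟨n, rfl⟩; exact norm_nonneg _⟩
    have hdiff := hlim.sub (hlim.comp (tendsto_add_atTop_nat 1))
    rw [sub_self] at hdiff
    obtain ⟨N, hN⟩ := eventually_atTop.1
      (hdiff.eventually (gt_mem_nhds (show 0 < ε * (ε * ρ) by positivity)))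
    refine ⟨N, fun n hn => ?_⟩
    rw [dist_zero_right, norm_norm]
    by_contra! hle
    have h1 := hstep p hp hfp n
    have h2 := hconv ‖w n - p‖ (by linarith [hanti p hp hfp (Nat.zero_le n)])
      (w n - p) (F (w n) - p) le_rfl (hFp p hp hfp _ (hwK n))
      (by rwa [sub_sub_sub_cancel_right]) ε (δ n) hε0 (hδ n).1.le (hδ n).2.le
    have e : (1 - δ n) • (w n - p) + δ n • (F (w n) - p)
        = (1 - δ n) • w n + δ n • F (w n) - p := by module
    rw [e] at h2
    have h3 := mul_le_mul_of_nonneg_left h2 (show 0 ≤ η n by linarith [(hη n).1])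
    have h4 := mul_le_mul_of_nonneg_right (hη n).1.le (show 0 ≤ ε * ρ by positivity)
    have h5 := hN n hn
    simp only [Function.comp_apply] at h5
    linarith
  obtain ⟨a, ha, hfa, φ, hφ, hlim⟩ := exists_fixedPoint_of_approx hKcl hFne hC hFC hwK h0
  refine ⟨a, ha, hfa, ?_⟩
  rw [tendsto_iff_norm_sub_tendsto_zero] at hlim ⊢
  exact (tendsto_iff_tendsto_subseq_of_antitone (hanti a ha hfa) hφ.tendsto_atTop).2 hlim
end

section
/- Let M and N be nonempty bounded closed convex subsets of a uniformly convex Banach space and let F : M ∪ N → M ∪ N satisfy (i) F(M) ⊆ M and F(N) ⊆ N, and (ii) ‖Fw − Fz‖ ≤ ‖w − z‖ for all w ∈ M, z ∈ N. Fix ε ∈ (0, 1/2) and sequences η_n, δ_n ∈ (ε, 1−ε). Let w_0 ∈ M and define w_{n+1} = (1−η_n) w_n + η_n F((1−δ_n) w_n + δ_n F w_n). If d(w_n, M_0) → 0, then ‖w_n − F w_n‖ → 0 as n → ∞. -/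
/-!
The iterates satisfy `‖w (n + 1) - y‖ ≤ ‖w n - y‖` for any fixed point `y ∈ N` of `F`, because `F`
does not increase the distance from points of `M` to `y`. So `‖w n - y‖` decreases to some `c`, and
since the `η n` stay away from `0`, the intermediate points `u n = (1 - δ n) w n + δ n F (w n)`
satisfy `‖u n - y‖ → c` too. Now `u n - y` is a convex combination, with weights away from `0` and
`1`, of `w n - y` and `F (w n) - y`, both of norm at most `‖w n - y‖`; uniform convexity
(`tendsto_norm_sub_zero_of_convexComb`) forces `‖w n - F (w n)‖ → 0`.

A fixed point in `N` exists (`exists_fixedPoint_of_relativelyNonexpansive`): it is the asymptotic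
centre in `N` of a Picard orbit `x n = F^[n] x₀` starting in `M`, i.e. the point minimising
`limsup ‖x n - z‖` over `z ∈ N`. In a uniformly convex Banach space this minimiser exists and is
unique, and `F` maps a minimiser to a minimiser.
-/

open Filter Topology

/-- Uniform convexity at the radius `c`, in a form that tolerates small errors in the radius and
that also covers `c = 0`. -/
lemma exists_pos_norm_sub_lt_of_norm_add {X : Type*} [NormedAddCommGroup X] [NormedSpace ℝ X]
    [UniformConvexSpace X] {c : ℝ} (hc : 0 ≤ c) {ε : ℝ} (hε : 0 < ε) :
    ∃ δ > 0, ∀ x y : X, ‖x‖ ≤ c + δ → ‖y‖ ≤ c + δ → 2 * c - δ ≤ ‖x + y‖ → ‖x - y‖ < ε := by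
  obtain ⟨δ₀, hδ₀, H⟩ := exists_forall_closed_ball_dist_add_le_two_mul_sub X (half_pos hε) c
  have hδ : 0 < min (ε / 5) (δ₀ / 4) := lt_min (by positivity) (by positivity)
  have h1 := min_le_left (ε / 5) (δ₀ / 4)
  have h2 := min_le_right (ε / 5) (δ₀ / 4)
  refine ⟨min (ε / 5) (δ₀ / 4), hδ, ?_⟩
  set δ := min (ε / 5) (δ₀ / 4)
  intro x y hx hy hxy
  by_contra! hcon
  have hpos : 0 < c + δ := by linarith
  -- Shrinking the ball of radius `c + δ` to radius `c` moves each of its points by at most `δ`.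
  have shrink : ∀ v : X, ‖v‖ ≤ c + δ →
      ‖(c / (c + δ)) • v‖ ≤ c ∧ ‖v - (c / (c + δ)) • v‖ ≤ δ := by
    intro v hv
    constructor
    · rw [norm_smul, Real.norm_of_nonneg (by positivity)]
      calc c / (c + δ) * ‖v‖ ≤ c / (c + δ) * (c + δ) := by gcongr
        _ = c := by field_simp
    · have : v - (c / (c + δ)) • v = (δ / (c + δ)) • v := by
        have e : δ / (c + δ) = 1 - c / (c + δ) := by field_simp; ring
        rw [e, sub_smul, one_smul]
      rw [this, norm_smul, Real.norm_of_nonneg (by positivity)]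
      calc δ / (c + δ) * ‖v‖ ≤ δ / (c + δ) * (c + δ) := by gcongr
        _ = δ := by field_simp
  obtain ⟨hx1, hx2⟩ := shrink x hx
  obtain ⟨hy1, hy2⟩ := shrink y hy
  set x' := (c / (c + δ)) • x
  set y' := (c / (c + δ)) • y
  have hsub : ‖x - y‖ ≤ ‖x' - y'‖ + ‖x - x'‖ + ‖y - y'‖ := by
    have e : x - y = (x' - y') + (x - x') - (y - y') := by abel
    rw [e]
    exact (norm_sub_le _ _).trans (by gcongr; exact norm_add_le _ _)
  have hadd : ‖x + y‖ ≤ ‖x' + y'‖ + ‖x - x'‖ + ‖y - y'‖ := by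
    have e : x + y = (x' + y') + (x - x') + (y - y') := by abel
    rw [e]
    exact norm_add₃_le
  have := H hx1 hy1 (by linarith)
  linarith

/-- If `‖a n‖ → c`, `‖b n‖ ≤ ‖a n‖`, and convex combinations of `a n` and `b n` with weights bounded
away from `0` and `1` also have norms tending to `c`, then `a n - b n → 0`. -/
lemma tendsto_norm_sub_zero_of_convexComb {X : Type*} [NormedAddCommGroup X] [NormedSpace ℝ X]
    [UniformConvexSpace X] {ε c : ℝ} (hε : 0 < ε) {t : ℕ → ℝ}
    (ht : ∀ n, t n ∈ Set.Ioo ε (1 - ε)) {a b : ℕ → X}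
    (ha : Tendsto (fun n => ‖a n‖) atTop (𝓝 c)) (hba : ∀ n, ‖b n‖ ≤ ‖a n‖)
    (hab : Tendsto (fun n => ‖(1 - t n) • a n + t n • b n‖) atTop (𝓝 c)) :
    Tendsto (fun n => ‖a n - b n‖) atTop (𝓝 0) := by
  have hc : 0 ≤ c := ge_of_tendsto' ha fun n => norm_nonneg _
  refine tendsto_order.2 ⟨fun r hr => .of_forall fun n => hr.trans_le (norm_nonneg _), ?_⟩
  intro r hr
  obtain ⟨ρ, hρ, H⟩ := exists_pos_norm_sub_lt_of_norm_add (X := X) hc hr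
  have hερ : 0 < ε * ρ / 2 := by positivity
  have hε2 : ε < 1 / 2 := by have := ht 0; linarith [this.1, this.2]
  filter_upwards [ha.eventually_lt_const (show c < c + ε * ρ / 2 by linarith),
    hab.eventually_const_lt (show c - ε * ρ / 2 < c by linarith)] with n h1 h2
  obtain ⟨ht1, ht2⟩ := ht n
  have hb := hba n
  -- The combination equals the midpoint, with weight twice the smaller of `t n` and `1 - t n`,
  -- plus the remaining multiple of one endpoint.
  have key : ∀ (s : ℝ) (x y : X), ε < s → s ≤ 1 / 2 → ‖x‖ ≤ c + ε * ρ / 2 →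
      c - ε * ρ / 2 < ‖(1 - s) • x + s • y‖ → 2 * c - ρ ≤ ‖x + y‖ := by
    intro s x y hs hs' hx hxy
    have e : (1 - s) • x + s • y = (1 - 2 * s) • x + s • (x + y) := by module
    have hle : ‖(1 - s) • x + s • y‖ ≤ (1 - 2 * s) * ‖x‖ + s * ‖x + y‖ := by
      rw [e]
      refine (norm_add_le _ _).trans_eq ?_
      rw [norm_smul, norm_smul, Real.norm_of_nonneg (by linarith),
        Real.norm_of_nonneg (by linarith)]
    have hmul : (1 - 2 * s) * ‖x‖ ≤ (1 - 2 * s) * (c + ε * ρ / 2) :=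
      mul_le_mul_of_nonneg_left hx (by linarith)
    have hs0 : 0 < s := hε.trans hs
    have h3 : ε * ρ ≤ s * ρ := by gcongr
    have h4 : 0 ≤ s * (ε * ρ) := by positivity
    refine le_of_mul_le_mul_left ?_ hs0
    nlinarith
  have hρ' : ε * ρ / 2 ≤ ρ := by nlinarith
  refine H _ _ (by linarith) (by linarith) ?_
  rcases le_total (t n) (1 / 2) with h | h
  · exact key (t n) _ _ ht1 h h1.le h2
  · rw [add_comm (a n)]
    refine key (1 - t n) _ _ (by linarith) (by linarith) (by linarith) ?_
    rwa [sub_sub_cancel, add_comm]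

/-- A relatively nonexpansive map preserving `M` and `N` has a fixed point in `N`, namely the
asymptotic centre in `N` of a Picard orbit in `M`. -/
lemma exists_fixedPoint_of_relativelyNonexpansive {X : Type*} [NormedAddCommGroup X]
    [NormedSpace ℝ X] [UniformConvexSpace X] [CompleteSpace X] {M N : Set X}
    (hMne : M.Nonempty) (hMb : Bornology.IsBounded M)
    (hNne : N.Nonempty) (hNcl : IsClosed N) (hNconv : Convex ℝ N)
    {F : X → X} (hFM : ∀ w ∈ M, F w ∈ M) (hFN : ∀ z ∈ N, F z ∈ N)
    (hFne : ∀ w ∈ M, ∀ z ∈ N, ‖F w - F z‖ ≤ ‖w - z‖) :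
    ∃ y ∈ N, F y = y := by
  obtain ⟨x₀, hx₀⟩ := hMne
  let x : ℕ → X := fun n => F^[n] x₀
  have hxM : ∀ n, x n ∈ M := by
    intro n
    induction n with
    | zero => exact hx₀
    | succ k ih =>
      simp only [x, Function.iterate_succ_apply']
      exact hFM _ ih
  have hxs : ∀ n, x (n + 1) = F (x n) := fun n => Function.iterate_succ_apply' F n x₀
  -- `c` is the asymptotic radius `inf_{z ∈ N} limsup ‖x n - z‖`, written without `limsup`.
  let S : Set ℝ := {s | ∃ z ∈ N, ∀ᶠ n in atTop, ‖x n - z‖ ≤ s}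
  let c := sInf S
  have hS0 : ∀ s ∈ S, 0 ≤ s := by
    rintro s ⟨z, -, hz⟩
    obtain ⟨n, hn⟩ := hz.exists
    exact (norm_nonneg _).trans hn
  have hSbdd : BddBelow S := ⟨0, hS0⟩
  have hSne : S.Nonempty := by
    obtain ⟨z, hz⟩ := hNne
    obtain ⟨R, hR⟩ := hMb.exists_norm_le
    exact ⟨R + ‖z‖, z, hz, .of_forall fun n =>
      (norm_sub_le _ _).trans (by gcongr; exact hR _ (hxM n))⟩
  have hc : 0 ≤ c := Real.sInf_nonneg hS0
  -- Near-minimisers are close to each other, since otherwise their midpoint would beat `c`.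
  have huniq : ∀ r > 0, ∃ ρ > 0, ∀ z ∈ N, ∀ z' ∈ N, (∀ᶠ n in atTop, ‖x n - z‖ ≤ c + ρ) →
      (∀ᶠ n in atTop, ‖x n - z'‖ ≤ c + ρ) → ‖z - z'‖ < r := by
    intro r hr
    obtain ⟨ρ, hρ, H⟩ := exists_pos_norm_sub_lt_of_norm_add (X := X) hc hr
    refine ⟨ρ, hρ, fun z hz z' hz' h h' => ?_⟩
    by_contra! hcon
    have hmem : c - ρ / 2 ∈ S := by
      refine ⟨(1 / 2 : ℝ) • z + (1 / 2 : ℝ) • z',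
        hNconv hz hz' (by norm_num) (by norm_num) (by norm_num), ?_⟩
      filter_upwards [h, h'] with n h1 h2
      have e1 : (x n - z') - (x n - z) = z - z' := by abel
      have h3 : ‖(x n - z') + (x n - z)‖ < 2 * c - ρ := by
        by_contra! h3
        have := H _ _ h2 h1 h3
        rw [e1] at this
        linarith
      have e2 : x n - ((1 / 2 : ℝ) • z + (1 / 2 : ℝ) • z')
          = (1 / 2 : ℝ) • ((x n - z') + (x n - z)) := by module
      rw [e2, norm_smul, Real.norm_of_nonneg (by norm_num)]
      linarith
    have : c ≤ c - ρ / 2 := csInf_le hSbdd hmem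
    linarith
  have hmin : ∀ k : ℕ, ∃ z ∈ N, ∀ᶠ n in atTop, ‖x n - z‖ ≤ c + 1 / ((k : ℝ) + 1) := by
    intro k
    have hk : c < c + 1 / ((k : ℝ) + 1) := by
      have : 0 < 1 / ((k : ℝ) + 1) := by positivity
      linarith
    obtain ⟨s, ⟨z, hz, hzs⟩, hs⟩ := exists_lt_of_csInf_lt hSne hk
    exact ⟨z, hz, hzs.mono fun n hn => hn.trans hs.le⟩
  choose z hzN hz using hmin
  have hsmall : ∀ ρ > 0, ∀ᶠ k : ℕ in atTop, 1 / ((k : ℝ) + 1) < ρ := fun ρ hρ =>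
    tendsto_one_div_add_atTop_nhds_zero_nat.eventually_lt_const hρ
  have hcau : CauchySeq z := by
    refine Metric.cauchySeq_iff.2 fun r hr => ?_
    obtain ⟨ρ, hρ, H⟩ := huniq r hr
    obtain ⟨K, hK⟩ := eventually_atTop.1 (hsmall ρ hρ)
    refine ⟨K, fun m hm n hn => ?_⟩
    rw [dist_eq_norm]
    exact H _ (hzN m) _ (hzN n)
      ((hz m).mono fun i hi => hi.trans (by linarith [hK m hm]))
      ((hz n).mono fun i hi => hi.trans (by linarith [hK n hn]))
  obtain ⟨y, hy⟩ := cauchySeq_tendsto_of_complete hcau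
  have hyN : y ∈ N := hNcl.mem_of_tendsto hy (.of_forall hzN)
  have hyc : ∀ s > 0, ∀ᶠ n in atTop, ‖x n - y‖ ≤ c + s := by
    intro s hs
    have h0 := (tendsto_iff_norm_sub_tendsto_zero.1 hy).eventually_lt_const (half_pos hs)
    obtain ⟨k, hk1, hk2⟩ := (h0.and (hsmall _ (half_pos hs))).exists
    filter_upwards [hz k] with n hn
    have := norm_sub_le_norm_sub_add_norm_sub (x n) (z k) y
    linarith
  have hFyc : ∀ s > 0, ∀ᶠ n in atTop, ‖x n - F y‖ ≤ c + s := by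
    intro s hs
    obtain ⟨K, hK⟩ := eventually_atTop.1 (hyc s hs)
    refine eventually_atTop.2 ⟨K + 1, fun n hn => ?_⟩
    obtain ⟨m, rfl⟩ : ∃ m, n = m + 1 := ⟨n - 1, by omega⟩
    rw [hxs]
    exact (hFne _ (hxM m) _ hyN).trans (hK m (by omega))
  refine ⟨y, hyN, ?_⟩
  by_contra hne
  have hpos : 0 < ‖F y - y‖ := norm_pos_iff.2 (sub_ne_zero.2 hne)
  obtain ⟨ρ, hρ, H⟩ := huniq _ hpos
  exact lt_irrefl _ (H _ (hFN y hyN) _ hyN (hFyc ρ hρ) (hyc ρ hρ))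

/-- Theorem 2.1 (first part): Ishikawa iteration for a relatively nonexpansive map
`F : M ∪ N → M ∪ N` with `F(M) ⊆ M`, `F(N) ⊆ N` in a uniformly convex Banach space.
If `d(w n, M₀) → 0` then `‖w n - F (w n)‖ → 0`. -/
theorem ishikawa_relativelyNonexpansive_norm_sub_image_tendsto_zero
    {X : Type*} [NormedAddCommGroup X] [NormedSpace ℝ X]
    [UniformConvexSpace X] [CompleteSpace X]
    (M N : Set X)
    (hMne : M.Nonempty) (hMb : Bornology.IsBounded M) (hMcl : IsClosed M)
    (hMconv : Convex ℝ M)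
    (hNne : N.Nonempty) (hNb : Bornology.IsBounded N) (hNcl : IsClosed N)
    (hNconv : Convex ℝ N)
    (F : X → X) (hFM : ∀ w ∈ M, F w ∈ M) (hFN : ∀ z ∈ N, F z ∈ N)
    (hFne : ∀ w ∈ M, ∀ z ∈ N, ‖F w - F z‖ ≤ ‖w - z‖)
    (ε : ℝ) (hε : ε ∈ Set.Ioo (0 : ℝ) (1 / 2))
    (η δ : ℕ → ℝ)
    (hη : ∀ n, η n ∈ Set.Ioo ε (1 - ε)) (hδ : ∀ n, δ n ∈ Set.Ioo ε (1 - ε))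
    (w : ℕ → X) (hw0 : w 0 ∈ M)
    (hw : ∀ n, w (n + 1) =
      (1 - η n) • w n + η n • F ((1 - δ n) • w n + δ n • F (w n)))
    (hM0 : Tendsto (fun n => Metric.infDist (w n)
      {x ∈ M | ∃ z ∈ N, ‖x - z‖ = sInf {r : ℝ | ∃ a ∈ M, ∃ b ∈ N, r = ‖a - b‖}})
      atTop (𝓝 0)) :
    Tendsto (fun n => ‖w n - F (w n)‖) atTop (𝓝 0) := by
  obtain ⟨y, hyN, hFy⟩ := exists_fixedPoint_of_relativelyNonexpansive hMne hMb hNne hNcl hNconv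
    hFM hFN hFne
  have hε0 : 0 < ε := hε.1
  have hFy' : ∀ v ∈ M, ‖F v - y‖ ≤ ‖v - y‖ := by
    intro v hv
    have := hFne v hv y hyN
    rwa [hFy] at this
  have hcomb : ∀ (t : ℝ) (a b : X), t ∈ Set.Ioo ε (1 - ε) →
      ‖((1 - t) • a + t • b) - y‖ ≤ (1 - t) * ‖a - y‖ + t * ‖b - y‖ := by
    intro t a b ht
    have e : ((1 - t) • a + t • b) - y = (1 - t) • (a - y) + t • (b - y) := by module
    rw [e]
    refine (norm_add_le _ _).trans_eq ?_
    rw [norm_smul, norm_smul, Real.norm_of_nonneg (by linarith [ht.2]),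
      Real.norm_of_nonneg (by linarith [ht.1])]
  have hconv : ∀ (t : ℝ) (a b : X), t ∈ Set.Ioo ε (1 - ε) → a ∈ M → b ∈ M →
      (1 - t) • a + t • b ∈ M := fun t a b ht ha hb =>
    hMconv ha hb (by linarith [ht.2]) (by linarith [ht.1]) (by ring)
  let u : ℕ → X := fun n => (1 - δ n) • w n + δ n • F (w n)
  have hwu : ∀ n, w (n + 1) = (1 - η n) • w n + η n • F (u n) := hw
  have hwM : ∀ n, w n ∈ M := by
    intro n
    induction n with
    | zero => exact hw0
    | succ k ih =>
      rw [hwu]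
      exact hconv _ _ _ (hη k) ih (hFM _ (hconv _ _ _ (hδ k) ih (hFM _ ih)))
  have huM : ∀ n, u n ∈ M := fun n => hconv _ _ _ (hδ n) (hwM n) (hFM _ (hwM n))
  have hu_le : ∀ n, ‖u n - y‖ ≤ ‖w n - y‖ := by
    intro n
    have h1 := hcomb (δ n) (w n) (F (w n)) (hδ n)
    have h2 := mul_le_mul_of_nonneg_left (hFy' _ (hwM n)) (hε0.trans (hδ n).1).le
    calc ‖u n - y‖ ≤ _ := h1
      _ ≤ ‖w n - y‖ := by linarith
  have hstep : ∀ n, ‖w (n + 1) - y‖ ≤ (1 - η n) * ‖w n - y‖ + η n * ‖u n - y‖ := by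
    intro n
    rw [hwu]
    have h2 := mul_le_mul_of_nonneg_left (hFy' _ (huM n)) (hε0.trans (hη n).1).le
    linarith [hcomb (η n) (w n) (F (u n)) (hη n)]
  have hanti : Antitone fun n => ‖w n - y‖ := by
    refine antitone_nat_of_succ_le fun n => ?_
    have h2 := mul_le_mul_of_nonneg_left (hu_le n) (hε0.trans (hη n).1).le
    linarith [hstep n]
  obtain ⟨c, hc⟩ : ∃ c, Tendsto (fun n => ‖w n - y‖) atTop (𝓝 c) :=
    ⟨_, tendsto_atTop_ciInf hanti ⟨0, by rintro _ ⟨n, rfl⟩; exact norm_nonneg _⟩⟩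
  have hu : Tendsto (fun n => ‖u n - y‖) atTop (𝓝 c) := by
    have hlow : Tendsto (fun n => ‖w n - y‖ - (‖w n - y‖ - ‖w (n + 1) - y‖) / ε) atTop (𝓝 c) := by
      have := hc.sub ((hc.sub (hc.comp (tendsto_add_atTop_nat 1))).div_const ε)
      simpa using this
    refine tendsto_of_tendsto_of_tendsto_of_le_of_le hlow hc (fun n => ?_) hu_le
    -- `hstep` rearranges to `η n * (‖w n - y‖ - ‖u n - y‖) ≤ ‖w n - y‖ - ‖w (n + 1) - y‖`.
    have h1 : ε * (‖w n - y‖ - ‖u n - y‖) ≤ η n * (‖w n - y‖ - ‖u n - y‖) :=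
      mul_le_mul_of_nonneg_right (hη n).1.le (by linarith [hu_le n])
    have h2 : ‖w n - y‖ - ‖u n - y‖ ≤ (‖w n - y‖ - ‖w (n + 1) - y‖) / ε := by
      rw [le_div_iff₀ hε0]
      linarith [hstep n]
    show ‖w n - y‖ - (‖w n - y‖ - ‖w (n + 1) - y‖) / ε ≤ ‖u n - y‖
    linarith
  have hu' : Tendsto (fun n => ‖(1 - δ n) • (w n - y) + δ n • (F (w n) - y)‖) atTop (𝓝 c) := by
    refine hu.congr fun n => ?_
    congr 1
    simp only [u]
    module
  simpa using tendsto_norm_sub_zero_of_convexComb hε0 hδ hc (fun n => hFy' _ (hwM n)) hu'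
end

section
/- Let M and N be nonempty bounded closed convex subsets of a uniformly convex Banach space and let F : M ∪ N → M ∪ N satisfy (i) F(M) ⊆ M and F(N) ⊆ N, and (ii) ‖Fw − Fz‖ ≤ ‖w − z‖ for all w ∈ M, z ∈ N. Fix ε ∈ (0, 1/2) and sequences η_n, δ_n ∈ (ε, 1−ε). Let w_0 ∈ M and define w_{n+1} = (1−η_n) w_n + η_n F((1−δ_n) w_n + δ_n F w_n). If d(w_n, M_0) → 0 and F(M) is contained in a compact set, then {w_n} converges to a fixed point of F. -/
open Filter Topology

/-!
The Ishikawa iterates converge because of a rigidity of best proximity pairs. Put `d = d(M, N)`.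
By uniform convexity, the differences `a - b` (`a ∈ M`, `b ∈ N`) with `‖a - b‖` close to `d` are
close to each other (`ProximalSets.near`); compactness of `F(M)` makes `d` attained
(`exists_proximal_vector`). Hence there is one vector `v` with `‖v‖ = d` such that `a - b` is close
to `v` whenever `‖a - b‖` is close to `d`, and `M₀ = {x ∈ M | x - v ∈ N}` (called `K` below). This
has two consequences: `F (x - v) = F x - v` on `K`, and `F` restricted to `M` is continuous at the
points of `K`.

*A fixed point in `N` exists.* For `x₀ ∈ K` and `0 < t < 1` let `G x = (1 - t) F x + t x₀` on `K`.
The function `φ(x, y) = ‖x - y + v‖ - ‖v‖ ≥ 0` satisfies `φ(G x, G y) ≤ (1 - t) φ(x, y)`, so the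
orbits of `G` are Cauchy and `G` has a fixed point `z`, with `‖F z - z‖ = O(t)`. Letting `t → 0`
and using compactness of `F(M)` yields a fixed point `a ∈ K` of `F`, and then `a - v ∈ N` is fixed
as well.

*Convergence.* For a fixed point `y ∈ N` the sequence `‖w n - y‖` decreases, and uniform convexity
gives `w n - F (w n) → 0`. By compactness a subsequence of `w` converges to some `a`, which lies in
`M₀` since `d(w n, M₀) → 0`, and `F a = a` by continuity at `a`. Now `a - v` is a fixed point in
`N`, so `‖w n - (a - v)‖` decreases, and its limit is `‖v‖ = d` along the subsequence; hence
`w n - (a - v) → v`, that is `w n → a`.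
-/

/-! ### Uniform convexity around a given radius -/

section UniformConvexity

variable {X : Type*} [NormedAddCommGroup X] [NormedSpace ℝ X] [UniformConvexSpace X]

/-- Uniform convexity for vectors whose norms exceed the radius `d` by at most `δ`. -/
lemma exists_delta_of_norm_add {d : ℝ} (hd : 0 ≤ d) {ε : ℝ} (hε : 0 < ε) :
    ∃ δ > 0, ∀ a b : X, ‖a‖ ≤ d + δ → ‖b‖ ≤ d + δ → 2 * d - δ ≤ ‖a + b‖ → ‖a - b‖ < ε := by
  obtain ⟨δ₀, hδ₀, H⟩ :=
    exists_forall_closed_ball_dist_add_le_two_mul_sub X (half_pos hε) d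
  refine ⟨min (δ₀ / 4) (ε / 8), by positivity, ?_⟩
  set δ := min (δ₀ / 4) (ε / 8) with hδ
  have h1 : δ ≤ δ₀ / 4 := min_le_left _ _
  have h2 : δ ≤ ε / 8 := min_le_right _ _
  have hδpos : 0 < δ := by positivity
  -- scale by `d / (d + δ)` to land in the closed ball of radius `d`, moving by at most `δ`
  have key : ∀ a : X, ‖a‖ ≤ d + δ → ‖(d / (d + δ)) • a‖ ≤ d ∧ ‖a - (d / (d + δ)) • a‖ ≤ δ := by
    intro a ha
    have hp : 0 < d + δ := by positivity
    constructor
    · rw [norm_smul, Real.norm_of_nonneg (by positivity)]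
      calc d / (d + δ) * ‖a‖ ≤ d / (d + δ) * (d + δ) := by gcongr
        _ = d := by field_simp
    · have : a - (d / (d + δ)) • a = (δ / (d + δ)) • a := by
        have h : δ / (d + δ) = 1 - d / (d + δ) := by field_simp; ring
        rw [h, sub_smul, one_smul]
      rw [this, norm_smul, Real.norm_of_nonneg (by positivity)]
      calc δ / (d + δ) * ‖a‖ ≤ δ / (d + δ) * (d + δ) := by gcongr
        _ = δ := by field_simp
  intro a b ha hb hab
  obtain ⟨ha1, ha2⟩ := key a ha
  obtain ⟨hb1, hb2⟩ := key b hb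
  set a' := (d / (d + δ)) • a
  set b' := (d / (d + δ)) • b
  by_contra! hcon
  have h3 : ‖a - b‖ ≤ ‖a' - b'‖ + (‖a - a'‖ + ‖b - b'‖) := by
    have : a - b = (a' - b') + ((a - a') - (b - b')) := by abel
    rw [this]
    exact (norm_add_le _ _).trans (by gcongr; exact norm_sub_le _ _)
  have h4 : ‖a + b‖ ≤ ‖a' + b'‖ + (‖a - a'‖ + ‖b - b'‖) := by
    have : a + b = (a' + b') + ((a - a') + (b - b')) := by abel
    rw [this]
    exact (norm_add_le _ _).trans (by gcongr; exact norm_add_le _ _)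
  have h5 := H ha1 hb1 (by linarith)
  linarith

/-- The version of `exists_delta_of_norm_add` for convex combinations with weights in
`[e, 1 - e]`. -/
lemma exists_delta_of_norm_combo {d : ℝ} (hd : 0 ≤ d) {ε e : ℝ} (hε : 0 < ε) (he : 0 < e) :
    ∃ δ > 0, ∀ (t : ℝ) (a b : X), e ≤ t → t ≤ 1 - e → ‖a‖ ≤ d + δ → ‖b‖ ≤ d + δ →
      d - δ ≤ ‖(1 - t) • a + t • b‖ → ‖a - b‖ < ε := by
  obtain ⟨δ₀, hδ₀, H⟩ := exists_delta_of_norm_add (X := X) hd hε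
  -- the midpoint is the dominant part of the combination on the side of the larger weight
  have half : ∀ (δ t : ℝ) (a b : X), 0 < δ → δ ≤ δ₀ → 2 * δ ≤ e * δ₀ → e ≤ t → t ≤ 1 / 2 →
      ‖a‖ ≤ d + δ → d - δ ≤ ‖(1 - t) • a + t • b‖ → 2 * d - δ₀ ≤ ‖a + b‖ := by
    intro δ t a b hδ _ hδe het ht ha hab
    have h1 : (1 - t) • a + t • b = (1 - 2 * t) • a + t • (a + b) := by module
    have h2 : ‖(1 - t) • a + t • b‖ ≤ (1 - 2 * t) * ‖a‖ + t * ‖a + b‖ := by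
      rw [h1]
      refine (norm_add_le _ _).trans_eq ?_
      rw [norm_smul, norm_smul, Real.norm_of_nonneg (by linarith),
        Real.norm_of_nonneg (by linarith)]
    have h3 : (1 - 2 * t) * ‖a‖ ≤ (1 - 2 * t) * (d + δ) := by
      gcongr; linarith
    by_contra! hcon
    have ht0 : 0 < t := by linarith
    have h4 : t * ‖a + b‖ < t * (2 * d - δ₀) := by gcongr
    nlinarith
  refine ⟨min δ₀ (e * δ₀ / 2), by positivity, ?_⟩
  set δ := min δ₀ (e * δ₀ / 2)
  have h1 : δ ≤ δ₀ := min_le_left _ _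
  have h2 : δ ≤ e * δ₀ / 2 := min_le_right _ _
  have hδ : 0 < δ := by positivity
  intro t a b het hte ha hb hab
  refine H a b (by linarith) (by linarith) ?_
  rcases le_total t (1 / 2) with ht | ht
  · exact half δ t a b hδ h1 (by linarith) het ht ha hab
  · rw [add_comm a b]
    refine half δ (1 - t) b a hδ h1 (by linarith) (by linarith) (by linarith) hb ?_
    rwa [sub_sub_cancel, add_comm]

end UniformConvexity

/-! ### Almost proximal pairs -/

section Proximal

variable {X : Type*} [NormedAddCommGroup X] [NormedSpace ℝ X]

/-- `d` is a lower bound for the distances between points of the convex sets `M` and `N`. -/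
structure ProximalSets (M N : Set X) (d : ℝ) : Prop where
  convex_left : Convex ℝ M
  convex_right : Convex ℝ N
  nonneg : 0 ≤ d
  le : ∀ a ∈ M, ∀ b ∈ N, d ≤ ‖a - b‖

/-- Differences between points of `M` and `N` that almost realize the lower bound `d` are close to
each other: the midpoints of the two pairs are again at distance at least `d`. -/
lemma ProximalSets.near [UniformConvexSpace X] {M N : Set X} {d : ℝ} (h : ProximalSets M N d)
    {ε : ℝ} (hε : 0 < ε) :
    ∃ δ > 0, ∀ a ∈ M, ∀ b ∈ N, ∀ a' ∈ M, ∀ b' ∈ N, ‖a - b‖ ≤ d + δ → ‖a' - b'‖ ≤ d + δ →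
      ‖(a - b) - (a' - b')‖ < ε := by
  obtain ⟨δ, hδ, H⟩ := exists_delta_of_norm_add (X := X) h.nonneg hε
  refine ⟨δ, hδ, fun a ha b hb a' ha' b' hb' h1 h2 => H _ _ h1 h2 ?_⟩
  have h3 := h.le _ (h.convex_left ha ha' (a := 1 / 2) (b := 1 / 2) (by norm_num) (by norm_num)
    (by norm_num)) _ (h.convex_right hb hb' (a := 1 / 2) (b := 1 / 2) (by norm_num) (by norm_num)
    (by norm_num))
  have h4 : (1 / 2 : ℝ) • a + (1 / 2 : ℝ) • a' - ((1 / 2 : ℝ) • b + (1 / 2 : ℝ) • b')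
      = (1 / 2 : ℝ) • ((a - b) + (a' - b')) := by module
  rw [h4, norm_smul, Real.norm_of_nonneg (by norm_num)] at h3
  linarith

/-- If `v` is a difference of points of `M` and `N` with `‖v‖ = d(M, N)`, then differences whose
norms tend to `‖v‖` tend to `v`. -/
lemma ProximalSets.tendsto [UniformConvexSpace X] {M N : Set X} {p q : X}
    (h : ProximalSets M N ‖p - q‖) (hp : p ∈ M) (hq : q ∈ N) {ι : Type*} {l : Filter ι}
    {a b : ι → X} (ha : ∀ i, a i ∈ M) (hb : ∀ i, b i ∈ N)
    (hab : Tendsto (fun i => ‖a i - b i‖) l (𝓝 ‖p - q‖)) :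
    Tendsto (fun i => a i - b i) l (𝓝 (p - q)) := by
  rw [Metric.tendsto_nhds]
  intro ε hε
  obtain ⟨δ, hδ, H⟩ := h.near hε
  filter_upwards [hab.eventually_le_const (show ‖p - q‖ < ‖p - q‖ + δ by linarith)] with i hi
  rw [dist_eq_norm]
  exact H _ (ha i) _ (hb i) _ hp _ hq hi (by linarith)

/-- The distance between `M` and `N` is attained when `F` is relatively nonexpansive and `F(M)` is
relatively compact: apply `F` to a minimizing sequence of pairs. -/
lemma exists_proximal_vector [UniformConvexSpace X] [CompleteSpace X] {M N : Set X} {d : ℝ}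
    (h : ProximalSets M N d) (hMcl : IsClosed M) (hNcl : IsClosed N)
    {F : X → X} (hFM : ∀ w ∈ M, F w ∈ M) (hFN : ∀ z ∈ N, F z ∈ N)
    (hFne : ∀ w ∈ M, ∀ z ∈ N, ‖F w - F z‖ ≤ ‖w - z‖)
    {C : Set X} (hC : IsCompact C) (hFC : ∀ w ∈ M, F w ∈ C)
    (happrox : ∀ ε > 0, ∃ a ∈ M, ∃ b ∈ N, ‖a - b‖ < d + ε) :
    ∃ p ∈ M, ∃ q ∈ N, ‖p - q‖ = d := by
  choose a haM b hbN hab using fun n : ℕ => happrox (1 / ((n : ℝ) + 1)) (by positivity)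
  obtain ⟨p, -, φ, hφ, hp⟩ := hC.tendsto_subseq fun n => hFC (a n) (haM n)
  have hlim : Tendsto (fun n => ‖F (a n) - F (b n)‖) atTop (𝓝 d) := by
    refine tendsto_of_tendsto_of_tendsto_of_le_of_le tendsto_const_nhds
      (h := fun n : ℕ => d + 1 / ((n : ℝ) + 1)) ?_
      (fun n => h.le _ (hFM _ (haM n)) _ (hFN _ (hbN n)))
      (fun n => (hFne _ (haM n) _ (hbN n)).trans (hab n).le)
    simpa using tendsto_const_nhds.add (tendsto_one_div_add_atTop_nhds_zero_nat (𝕜 := ℝ))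
  have hcau : CauchySeq (fun n => F (a n) - F (b n)) := by
    rw [Metric.cauchySeq_iff]
    intro ε hε
    obtain ⟨δ, hδ, H⟩ := h.near hε
    obtain ⟨n₀, hn₀⟩ := eventually_atTop.1
      (hlim.eventually_le_const (show d < d + δ by linarith))
    refine ⟨n₀, fun m hm n hn => ?_⟩
    rw [dist_eq_norm]
    exact H _ (hFM _ (haM m)) _ (hFN _ (hbN m)) _ (hFM _ (haM n)) _ (hFN _ (hbN n))
      (hn₀ m hm) (hn₀ n hn)
  obtain ⟨v, hv⟩ := cauchySeq_tendsto_of_complete hcau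
  have hpM : p ∈ M := hMcl.mem_of_tendsto hp (Eventually.of_forall fun n => hFM _ (haM _))
  have hq : Tendsto (fun n => F (b (φ n))) atTop (𝓝 (p - v)) := by
    have := hp.sub (hv.comp hφ.tendsto_atTop)
    simpa [Function.comp_def] using this
  have hqN : p - v ∈ N := hNcl.mem_of_tendsto hq (Eventually.of_forall fun n => hFN _ (hbN _))
  refine ⟨p, hpM, p - v, hqN, ?_⟩
  rw [sub_sub_cancel]
  exact tendsto_nhds_unique hv.norm hlim

end Proximal

/-! ### Fixed points on the proximal part -/

section Fixed

variable {X : Type*} [NormedAddCommGroup X] [NormedSpace ℝ X]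

/-- A relatively nonexpansive map on a pair of closed convex sets together with a proximity vector
`v`: a difference `p - q` of points of `M` and `N` with `‖v‖ = d(M, N)`. -/
structure ProximalMap (M N : Set X) (F : X → X) (v : X) : Prop where
  closed_left : IsClosed M
  closed_right : IsClosed N
  proximal : ProximalSets M N ‖v‖
  exists_pair : ∃ p ∈ M, p - v ∈ N
  maps_left : ∀ w ∈ M, F w ∈ M
  maps_right : ∀ z ∈ N, F z ∈ N
  nonexpansive : ∀ w ∈ M, ∀ z ∈ N, ‖F w - F z‖ ≤ ‖w - z‖

namespace ProximalMap

variable {M N : Set X} {F : X → X} {v : X}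

/-- The proximal part `M₀` of `M`, written through the proximity vector. -/
def K (M N : Set X) (v : X) : Set X := {x | x ∈ M ∧ x - v ∈ N}

lemma isClosed_K (h : ProximalMap M N F v) : IsClosed (K M N v) :=
  h.closed_left.inter (h.closed_right.preimage (continuous_id.sub continuous_const))

lemma convex_K (h : ProximalMap M N F v) : Convex ℝ (K M N v) := by
  intro x hx y hy a b ha hb hab
  refine ⟨h.proximal.convex_left hx.1 hy.1 ha hb hab, ?_⟩
  have := h.proximal.convex_right hx.2 hy.2 ha hb hab
  have h2 : a • x + b • y - v = a • (x - v) + b • (y - v) := by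
    have hv : v = (a + b) • v := by rw [hab, one_smul]
    conv_lhs => rw [hv]
    module
  rwa [h2]

lemma tendsto_sub [UniformConvexSpace X] (h : ProximalMap M N F v) {ι : Type*} {l : Filter ι}
    {a b : ι → X} (ha : ∀ i, a i ∈ M) (hb : ∀ i, b i ∈ N)
    (hab : Tendsto (fun i => ‖a i - b i‖) l (𝓝 ‖v‖)) :
    Tendsto (fun i => a i - b i) l (𝓝 v) := by
  obtain ⟨p, hp, hq⟩ := h.exists_pair
  have hv : p - (p - v) = v := sub_sub_cancel p v
  have hprox : ProximalSets M N ‖p - (p - v)‖ := by rw [hv]; exact h.proximal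
  simpa only [hv] using hprox.tendsto hp hq ha hb (by rwa [hv])

lemma sub_eq [UniformConvexSpace X] (h : ProximalMap M N F v) {a b : X} (ha : a ∈ M) (hb : b ∈ N)
    (hab : ‖a - b‖ ≤ ‖v‖) : a - b = v := by
  have hlim : Tendsto (fun _ : ℕ => ‖a - b‖) atTop (𝓝 ‖v‖) := by
    rw [le_antisymm hab (h.proximal.le a ha b hb)]
    exact tendsto_const_nhds
  exact tendsto_nhds_unique tendsto_const_nhds
    (h.tendsto_sub (fun _ : ℕ => ha) (fun _ => hb) hlim)

lemma map_sub [UniformConvexSpace X] (h : ProximalMap M N F v) {x : X} (hx : x ∈ K M N v) :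
    F (x - v) = F x - v := by
  have h1 := h.nonexpansive x hx.1 _ hx.2
  rw [sub_sub_cancel] at h1
  have h2 := h.sub_eq (h.maps_left x hx.1) (h.maps_right _ hx.2) h1
  exact eq_sub_of_add_eq' (sub_eq_iff_eq_add.1 h2).symm

lemma map_K [UniformConvexSpace X] (h : ProximalMap M N F v) {x : X} (hx : x ∈ K M N v) :
    F x ∈ K M N v :=
  ⟨h.maps_left x hx.1, h.map_sub hx ▸ h.maps_right _ hx.2⟩

/-- `F` restricted to `M` is continuous at each proximal point `a`: the images of points near `a`
are almost proximal to `F (a - v)`. -/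
lemma tendsto_map [UniformConvexSpace X] (h : ProximalMap M N F v) {a : X} (ha : a ∈ K M N v)
    {ι : Type*} {l : Filter ι} {x : ι → X} (hx : ∀ i, x i ∈ M) (hxa : Tendsto x l (𝓝 a)) :
    Tendsto (fun i => F (x i)) l (𝓝 (F a)) := by
  have hup : Tendsto (fun i => ‖x i - (a - v)‖) l (𝓝 ‖v‖) := by
    simpa using (hxa.sub_const (a - v)).norm
  have hlim : Tendsto (fun i => ‖F (x i) - F (a - v)‖) l (𝓝 ‖v‖) :=
    tendsto_of_tendsto_of_tendsto_of_le_of_le tendsto_const_nhds hup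
      (fun i => h.proximal.le _ (h.maps_left _ (hx i)) _ (h.maps_right _ ha.2))
      (fun i => h.nonexpansive _ (hx i) _ ha.2)
  have := (h.tendsto_sub (fun i => h.maps_left _ (hx i)) (fun _ => h.maps_right _ ha.2)
    hlim).add_const (F (a - v))
  simpa [h.map_sub ha] using this

/-- `F` composed with a contraction of ratio `1 - t` towards `x₀` has a fixed point in `K`. -/
lemma exists_fixed_contraction [UniformConvexSpace X] [CompleteSpace X] (h : ProximalMap M N F v)
    (hMb : Bornology.IsBounded M) {x₀ : X} (hx₀ : x₀ ∈ K M N v) {t : ℝ} (ht0 : 0 < t)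
    (ht1 : t < 1) : ∃ z ∈ K M N v, (1 - t) • F z + t • x₀ = z := by
  set G : X → X := fun x => (1 - t) • F x + t • x₀ with hG
  have hGK : ∀ x ∈ K M N v, G x ∈ K M N v := fun x hx =>
    h.convex_K (h.map_K hx) hx₀ (by linarith) ht0.le (by ring)
  set z : ℕ → X := fun n => G^[n] x₀ with hz
  have hzs : ∀ n, z (n + 1) = G (z n) := fun n => Function.iterate_succ_apply' G n x₀
  have hzK : ∀ n, z n ∈ K M N v := by
    intro n
    induction n with
    | zero => exact hx₀
    | succ n ih => rw [hzs]; exact hGK _ ih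
  -- `‖x - y + v‖ - ‖v‖` is contracted by `G`
  have hcontr : ∀ x ∈ K M N v, ∀ y ∈ K M N v,
      ‖G x - (G y - v)‖ - ‖v‖ ≤ (1 - t) * (‖x - (y - v)‖ - ‖v‖) := by
    intro x hx y hy
    have h1 : G x - (G y - v) = (1 - t) • (F x - F (y - v)) + t • v := by
      rw [h.map_sub hy]; simp only [hG]; module
    have h2 : ‖G x - (G y - v)‖ ≤ (1 - t) * ‖F x - F (y - v)‖ + t * ‖v‖ := by
      rw [h1]
      refine (norm_add_le _ _).trans_eq ?_
      rw [norm_smul, norm_smul, Real.norm_of_nonneg (by linarith), Real.norm_of_nonneg ht0.le]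
    have h3 : (1 - t) * ‖F x - F (y - v)‖ ≤ (1 - t) * ‖x - (y - v)‖ :=
      mul_le_mul_of_nonneg_left (h.nonexpansive _ hx.1 _ hy.2) (by linarith)
    linarith
  obtain ⟨D, hD⟩ := hMb.exists_norm_le
  have hbound : ∀ n k, ‖z n - (z (n + k) - v)‖ - ‖v‖ ≤ (1 - t) ^ n * (2 * D) := by
    intro n
    induction n with
    | zero =>
      intro k
      have h1 : ‖z 0 - (z (0 + k) - v)‖ ≤ ‖z 0‖ + ‖z (0 + k)‖ + ‖v‖ := by
        rw [show z 0 - (z (0 + k) - v) = z 0 - z (0 + k) + v by abel]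
        exact (norm_add_le _ _).trans (by gcongr; exact norm_sub_le _ _)
      have h2 := hD _ (hzK 0).1
      have h3 := hD _ (hzK (0 + k)).1
      simp only [pow_zero, one_mul]
      linarith
    | succ n ih =>
      intro k
      have h1 := hcontr _ (hzK n) _ (hzK (n + k))
      rw [← hzs, ← hzs, show n + k + 1 = n + 1 + k by ring] at h1
      refine h1.trans ?_
      rw [pow_succ']
      calc (1 - t) * (‖z n - (z (n + k) - v)‖ - ‖v‖) ≤ (1 - t) * ((1 - t) ^ n * (2 * D)) :=
            mul_le_mul_of_nonneg_left (ih k) (by linarith)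
        _ = _ := by ring
  have hpow : Tendsto (fun n : ℕ => (1 - t) ^ n * (2 * D)) atTop (𝓝 0) := by
    simpa using (tendsto_pow_atTop_nhds_zero_of_lt_one (show 0 ≤ 1 - t by linarith)
      (show 1 - t < 1 by linarith)).mul_const (2 * D)
  have hcau : CauchySeq z := by
    rw [Metric.cauchySeq_iff']
    intro ε hε
    obtain ⟨δ, hδ, H⟩ := h.proximal.near hε
    obtain ⟨n₀, hn₀⟩ := eventually_atTop.1 (hpow.eventually_le_const hδ)
    refine ⟨n₀, fun n hn => ?_⟩
    obtain ⟨k, rfl⟩ := Nat.exists_eq_add_of_le hn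
    have h1 := H _ (hzK n₀).1 _ (hzK (n₀ + k)).2 _ hx₀.1 _ hx₀.2
      (by linarith [hbound n₀ k, hn₀ n₀ le_rfl]) (by rw [sub_sub_cancel]; linarith)
    rw [dist_comm, dist_eq_norm]
    rwa [show z n₀ - (z (n₀ + k) - v) - (x₀ - (x₀ - v)) = z n₀ - z (n₀ + k) by abel] at h1
  obtain ⟨a, ha⟩ := cauchySeq_tendsto_of_complete hcau
  have haK : a ∈ K M N v := h.isClosed_K.mem_of_tendsto ha (Eventually.of_forall hzK)
  refine ⟨a, haK, ?_⟩
  have h1 : Tendsto (fun n => G (z n)) atTop (𝓝 (G a)) :=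
    ((h.tendsto_map haK (fun n => (hzK n).1) ha).const_smul (1 - t)).add_const (t • x₀)
  have h2 : Tendsto (fun n => G (z n)) atTop (𝓝 a) := by
    simpa only [hzs] using (tendsto_add_atTop_iff_nat 1).2 ha
  exact tendsto_nhds_unique h1 h2

lemma exists_fixed [UniformConvexSpace X] [CompleteSpace X] (h : ProximalMap M N F v)
    (hMb : Bornology.IsBounded M) {C : Set X} (hC : IsCompact C) (hFC : ∀ w ∈ M, F w ∈ C) :
    ∃ a ∈ K M N v, F a = a := by
  obtain ⟨x₀, hx₀⟩ : ∃ x₀, x₀ ∈ K M N v := h.exists_pair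
  have ht : ∀ n : ℕ, (0 : ℝ) < 1 / ((n : ℝ) + 2) ∧ 1 / ((n : ℝ) + 2) < 1 := fun n =>
    ⟨by positivity, by rw [div_lt_one (by positivity)]; linarith [n.cast_nonneg (α := ℝ)]⟩
  choose z hzK hz using fun n : ℕ => h.exists_fixed_contraction hMb hx₀ (ht n).1 (ht n).2
  obtain ⟨a, -, φ, hφ, ha⟩ := hC.tendsto_subseq fun n => hFC (z n) (hzK n).1
  obtain ⟨D, hD⟩ := hMb.exists_norm_le
  have htl : Tendsto (fun n : ℕ => 1 / ((n : ℝ) + 2)) atTop (𝓝 0) := by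
    refine ((tendsto_add_atTop_iff_nat 1).2
      (tendsto_one_div_add_atTop_nhds_zero_nat (𝕜 := ℝ))).congr fun n => ?_
    push_cast; ring
  have hdiff : Tendsto (fun n => F (z n) - z n) atTop (𝓝 0) := by
    refine squeeze_zero_norm (a := fun n : ℕ => 1 / ((n : ℝ) + 2) * (2 * D)) (fun n => ?_)
      (by simpa using htl.mul_const (2 * D))
    have h1 : F (z n) - z n = (1 / ((n : ℝ) + 2)) • (F (z n) - x₀) := by
      have h2 : F (z n) - ((1 - 1 / ((n : ℝ) + 2)) • F (z n) + (1 / ((n : ℝ) + 2)) • x₀)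
          = (1 / ((n : ℝ) + 2)) • (F (z n) - x₀) := by module
      rwa [hz n] at h2
    rw [h1, norm_smul, Real.norm_of_nonneg (ht n).1.le]
    refine mul_le_mul_of_nonneg_left ?_ (ht n).1.le
    linarith [norm_sub_le (F (z n)) x₀, hD _ (h.maps_left _ (hzK n).1), hD _ hx₀.1]
  have hza : Tendsto (fun n => z (φ n)) atTop (𝓝 a) := by
    simpa [Function.comp_def] using ha.sub (hdiff.comp hφ.tendsto_atTop)
  have haK : a ∈ K M N v := h.isClosed_K.mem_of_tendsto hza (Eventually.of_forall fun n => hzK _)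
  exact ⟨a, haK, tendsto_nhds_unique (h.tendsto_map haK (fun n => (hzK _).1) hza) ha⟩

end ProximalMap

end Fixed

/-! ### The Ishikawa iteration -/

section Iteration

variable {X : Type*} [NormedAddCommGroup X] [NormedSpace ℝ X]

/-- The distance of the Ishikawa iterates to a fixed point of `F` in `N` decreases. The second
inequality is the intermediate bound through `u n = (1 - δ n) w n + δ n F (w n)`. -/
lemma ishikawa_norm_le {M N : Set X} (hM : Convex ℝ M) {F : X → X} (hFM : ∀ w ∈ M, F w ∈ M)
    (hFne : ∀ w ∈ M, ∀ z ∈ N, ‖F w - F z‖ ≤ ‖w - z‖) {η δ : ℝ} (hη0 : 0 ≤ η) (hη1 : η ≤ 1)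
    (hδ0 : 0 ≤ δ) (hδ1 : δ ≤ 1) {w : X} (hw : w ∈ M) {y : X} (hy : y ∈ N) (hFy : F y = y) :
    ‖(1 - η) • w + η • F ((1 - δ) • w + δ • F w) - y‖ ≤ ‖w - y‖ ∧
    ‖(1 - η) • w + η • F ((1 - δ) • w + δ • F w) - y‖ ≤
      (1 - η) * ‖w - y‖ + η * ‖(1 - δ) • (w - y) + δ • (F w - y)‖ := by
  have combo : ∀ (s : ℝ) (a b : X), 0 ≤ s → s ≤ 1 →
      ‖(1 - s) • a + s • b‖ ≤ (1 - s) * ‖a‖ + s * ‖b‖ := by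
    intro s a b h0 h1
    refine (norm_add_le _ _).trans_eq ?_
    rw [norm_smul, norm_smul, Real.norm_of_nonneg (by linarith), Real.norm_of_nonneg h0]
  have hF : ∀ x ∈ M, ‖F x - y‖ ≤ ‖x - y‖ := fun x hx => by
    simpa only [hFy] using hFne x hx y hy
  set u := (1 - δ) • w + δ • F w with hu
  have huM : u ∈ M := hM hw (hFM w hw) (by linarith) hδ0 (by ring)
  have h1 : u - y = (1 - δ) • (w - y) + δ • (F w - y) := by rw [hu]; module
  have h2 : (1 - η) • w + η • F u - y = (1 - η) • (w - y) + η • (F u - y) := by module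
  have h3 : ‖(1 - η) • w + η • F u - y‖ ≤ (1 - η) * ‖w - y‖ + η * ‖u - y‖ := by
    rw [h2]
    refine (combo η _ _ hη0 hη1).trans ?_
    gcongr
    exact hF u huM
  have h4 : ‖u - y‖ ≤ ‖w - y‖ := by
    rw [h1]
    refine (combo δ _ _ hδ0 hδ1).trans ?_
    have := mul_le_mul_of_nonneg_left (hF w hw) hδ0
    linarith
  refine ⟨?_, by rw [← h1]; exact h3⟩
  have := mul_le_mul_of_nonneg_left h4 hη0
  linarith

/-- The Ishikawa iterates are asymptotically fixed by `F` as soon as `F` has a fixed point in `N`. -/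
lemma ishikawa_tendsto_sub [UniformConvexSpace X] {M N : Set X} (hM : Convex ℝ M) {F : X → X}
    (hFM : ∀ w ∈ M, F w ∈ M) (hFne : ∀ w ∈ M, ∀ z ∈ N, ‖F w - F z‖ ≤ ‖w - z‖)
    {ε : ℝ} (hε : 0 < ε) {η δ : ℕ → ℝ}
    (hη : ∀ n, η n ∈ Set.Ioo ε (1 - ε)) (hδ : ∀ n, δ n ∈ Set.Ioo ε (1 - ε))
    {w : ℕ → X} (hwM : ∀ n, w n ∈ M)
    (hw : ∀ n, w (n + 1) = (1 - η n) • w n + η n • F ((1 - δ n) • w n + δ n • F (w n)))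
    {y : X} (hy : y ∈ N) (hFy : F y = y) :
    Tendsto (fun n => w n - F (w n)) atTop (𝓝 0) := by
  have hstep := fun n => ishikawa_norm_le hM hFM hFne (by linarith [(hη n).1])
    (by linarith [(hη n).2]) (by linarith [(hδ n).1]) (by linarith [(hδ n).2]) (hwM n) hy hFy
    (η := η n) (δ := δ n)
  simp only [← hw] at hstep
  have hanti : Antitone fun n => ‖w n - y‖ := antitone_nat_of_succ_le fun n => (hstep n).1
  obtain ⟨r, hr⟩ : ∃ r, Tendsto (fun n => ‖w n - y‖) atTop (𝓝 r) :=
    ⟨_, tendsto_atTop_ciInf hanti ⟨0, by rintro _ ⟨n, rfl⟩; exact norm_nonneg _⟩⟩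
  have hr0 : 0 ≤ r := ge_of_tendsto' hr fun n => norm_nonneg _
  have hr' : Tendsto (fun n => ‖w (n + 1) - y‖) atTop (𝓝 r) :=
    hr.comp (tendsto_add_atTop_nat 1)
  have hlow : Tendsto (fun n => ‖w n - y‖ - (‖w n - y‖ - ‖w (n + 1) - y‖) / ε) atTop (𝓝 r) := by
    simpa using hr.sub ((hr.sub hr').div_const ε)
  rw [Metric.tendsto_nhds]
  intro e he
  obtain ⟨κ, hκ, H⟩ := exists_delta_of_norm_combo (X := X) hr0 he hε
  filter_upwards [hr.eventually_le_const (show r < r + κ by linarith),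
    hlow.eventually_const_le (show r - κ < r by linarith)] with n h1 h2
  rw [dist_zero_right, show w n - F (w n) = (w n - y) - (F (w n) - y) by abel]
  refine H (δ n) _ _ (hδ n).1.le (hδ n).2.le h1 ?_ (h2.trans ?_)
  · have := hFne _ (hwM n) _ hy
    rw [hFy] at this
    exact this.trans h1
  -- `A n - (A n - A (n + 1)) / ε ≤ A n - (A n - A (n + 1)) / η n ≤ ‖u n - y‖`, `A n = ‖w n - y‖`
  · have h3 := (hstep n).2
    have h4 : 0 ≤ ‖w n - y‖ - ‖w (n + 1) - y‖ := sub_nonneg.2 (hstep n).1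
    have hηp : 0 < η n := hε.trans (hη n).1
    have h5 : (‖w n - y‖ - ‖w (n + 1) - y‖) / η n ≤ (‖w n - y‖ - ‖w (n + 1) - y‖) / ε :=
      div_le_div_of_nonneg_left h4 hε (hη n).1.le
    have h6 : ‖w n - y‖ - ‖(1 - δ n) • (w n - y) + δ n • (F (w n) - y)‖
        ≤ (‖w n - y‖ - ‖w (n + 1) - y‖) / η n := by
      rw [le_div_iff₀ hηp]
      linarith
    linarith

end Iteration

/-- Theorem 2.1 (second part): Ishikawa iteration for a relatively nonexpansive map
`F : M ∪ N → M ∪ N` with `F(M) ⊆ M`, `F(N) ⊆ N` in a uniformly convex Banach space.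
If `d(w n, M₀) → 0` and `F '' M` lies in a compact set, then the iterates converge
to a fixed point of `F`. -/
theorem ishikawa_relativelyNonexpansive_tendsto_fixedPoint
    {X : Type*} [NormedAddCommGroup X] [NormedSpace ℝ X]
    [UniformConvexSpace X] [CompleteSpace X]
    (M N : Set X)
    (hMne : M.Nonempty) (hMb : Bornology.IsBounded M) (hMcl : IsClosed M)
    (hMconv : Convex ℝ M)
    (hNne : N.Nonempty) (hNb : Bornology.IsBounded N) (hNcl : IsClosed N)
    (hNconv : Convex ℝ N)
    (F : X → X) (hFM : ∀ w ∈ M, F w ∈ M) (hFN : ∀ z ∈ N, F z ∈ N)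
    (hFne : ∀ w ∈ M, ∀ z ∈ N, ‖F w - F z‖ ≤ ‖w - z‖)
    (ε : ℝ) (hε : ε ∈ Set.Ioo (0 : ℝ) (1 / 2))
    (η δ : ℕ → ℝ)
    (hη : ∀ n, η n ∈ Set.Ioo ε (1 - ε)) (hδ : ∀ n, δ n ∈ Set.Ioo ε (1 - ε))
    (w : ℕ → X) (hw0 : w 0 ∈ M)
    (hw : ∀ n, w (n + 1) =
      (1 - η n) • w n + η n • F ((1 - δ n) • w n + δ n • F (w n)))
    (hM0 : Tendsto (fun n => Metric.infDist (w n)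
      {x ∈ M | ∃ z ∈ N, ‖x - z‖ = sInf {r : ℝ | ∃ a ∈ M, ∃ b ∈ N, r = ‖a - b‖}})
      atTop (𝓝 0))
    (hcpt : ∃ C : Set X, IsCompact C ∧ F '' M ⊆ C) :
    ∃ a ∈ M, F a = a ∧ Tendsto w atTop (𝓝 a) := by
  obtain ⟨C, hC, hFC'⟩ := hcpt
  have hFC : ∀ x ∈ M, F x ∈ C := fun x hx => hFC' ⟨x, hx, rfl⟩
  set S : Set ℝ := {r : ℝ | ∃ a ∈ M, ∃ b ∈ N, r = ‖a - b‖} with hS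
  have hSne : S.Nonempty := ⟨_, hMne.some, hMne.some_mem, hNne.some, hNne.some_mem, rfl⟩
  have hS0 : ∀ r ∈ S, 0 ≤ r := by
    rintro _ ⟨a, -, b, -, rfl⟩
    exact norm_nonneg _
  have hprox : ProximalSets M N (sInf S) :=
    ⟨hMconv, hNconv, Real.sInf_nonneg hS0,
      fun a ha b hb => csInf_le ⟨0, hS0⟩ ⟨a, ha, b, hb, rfl⟩⟩
  obtain ⟨p, hp, q, hq, hpq⟩ := exists_proximal_vector hprox hMcl hNcl hFM hFN hFne hC hFC (by
    intro e he
    obtain ⟨_, ⟨a, ha, b, hb, rfl⟩, hlt⟩ :=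
      exists_lt_of_csInf_lt hSne (show sInf S < sInf S + e by linarith)
    exact ⟨a, ha, b, hb, hlt⟩)
  obtain ⟨v, hv⟩ : ∃ v, v = p - q := ⟨_, rfl⟩
  rw [← hv] at hpq
  have h : ProximalMap M N F v :=
    { closed_left := hMcl
      closed_right := hNcl
      proximal := hpq ▸ hprox
      exists_pair := ⟨p, hp, by rwa [hv, sub_sub_cancel]⟩
      maps_left := hFM
      maps_right := hFN
      nonexpansive := hFne }
  have hK : {x ∈ M | ∃ z ∈ N, ‖x - z‖ = sInf S} = ProximalMap.K M N v := by
    ext x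
    constructor
    · rintro ⟨hx, z, hz, hxz⟩
      refine ⟨hx, ?_⟩
      rwa [← h.sub_eq hx hz (hxz.trans hpq.symm).le, sub_sub_cancel]
    · rintro ⟨hx, hz⟩
      exact ⟨hx, _, hz, by rw [sub_sub_cancel, hpq]⟩
  rw [hK] at hM0
  have hwM : ∀ n, w n ∈ M := by
    intro n
    induction n with
    | zero => exact hw0
    | succ n ih =>
      have h1 := hη n
      have h2 := hδ n
      have h3 := hε.1
      rw [hw]
      exact hMconv ih (hFM _ (hMconv ih (hFM _ ih) (by linarith [h2.2]) (by linarith [h2.1])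
        (by ring))) (by linarith [h1.2]) (by linarith [h1.1]) (by ring)
  obtain ⟨x, hxK, hFx⟩ := h.exists_fixed hMb hC hFC
  have hreg : Tendsto (fun n => w n - F (w n)) atTop (𝓝 0) :=
    ishikawa_tendsto_sub hMconv hFM hFne hε.1 hη hδ hwM hw hxK.2 (by rw [h.map_sub hxK, hFx])
  obtain ⟨a, -, φ, hφ, ha⟩ := hC.tendsto_subseq fun n => hFC (w n) (hwM n)
  have hwa : Tendsto (fun n => w (φ n)) atTop (𝓝 a) := by
    simpa [Function.comp_def] using (hreg.comp hφ.tendsto_atTop).add ha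
  have haK : a ∈ ProximalMap.K M N v := by
    rw [h.isClosed_K.mem_iff_infDist_zero ⟨x, hxK⟩]
    exact tendsto_nhds_unique (((Metric.continuous_infDist_pt _).tendsto a).comp hwa)
      (hM0.comp hφ.tendsto_atTop)
  have hFa : F a = a := tendsto_nhds_unique (h.tendsto_map haK (fun n => hwM _) hwa) ha
  refine ⟨a, haK.1, hFa, ?_⟩
  have hanti : Antitone fun n => ‖w n - (a - v)‖ := antitone_nat_of_succ_le fun n => by
    rw [hw n]
    have h1 := hη n
    have h2 := hδ n
    have h3 := hε.1
    exact (ishikawa_norm_le hMconv hFM hFne (by linarith [h1.1]) (by linarith [h1.2])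
      (by linarith [h2.1]) (by linarith [h2.2]) (hwM n) haK.2 (by rw [h.map_sub haK, hFa])).1
  have hsub : Tendsto (fun n => ‖w (φ n) - (a - v)‖) atTop (𝓝 ‖v‖) := by
    simpa using (hwa.sub_const (a - v)).norm
  have hnorm : Tendsto (fun n => ‖w n - (a - v)‖) atTop (𝓝 ‖v‖) :=
    tendsto_iff_tendsto_subseq_of_antitone hanti hφ.tendsto_atTop |>.2 hsub
  simpa using (h.tendsto_sub hwM (fun _ => haK.2) hnorm).add_const (a - v)
end

section
/- Let M and N be nonempty bounded closed convex subsets of a uniformly convex Banach space and let F : M ∪ N → M ∪ N satisfy (i) F(M) ⊆ M and F(N) ⊆ N, and (ii) ‖Fw − Fz‖ ≤ ‖w − z‖ for all w ∈ M, z ∈ N. Fix ε ∈ (0, 1/2) and sequences η_n, δ_n ∈ (ε, 1−ε). Let w_0 ∈ M_0 and define w_{n+1} = (1−η_n) w_n + η_n F((1−δ_n) w_n + δ_n F w_n). Then ‖w_n − F w_n‖ → 0; moreover, if F(M) is contained in a compact set, then {w_n} converges to a fixed point of F. -/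
open Filter Topology

/-!
The map `F` is nonexpansive only between `M` and `N`, so everything about a sequence in `M` is
measured from points of `N`.

*Fixed point in `N`.* The asymptotic centre in `N` of an orbit `F^[n] x`, `x ∈ M`, is a single point
by uniform convexity, and `F` maps it to an asymptotic centre again, so it is a fixed point `y`
(`exists_fixedPoint`).

*Asymptotic regularity.* The distances `‖w n - y‖` decrease to some `r`. Since `η n` stays away
from `0`, the inner points `v n = (1 - δ n) w n + δ n F (w n)` must satisfy `‖v n - y‖ → r` as well.
As `‖F (w n) - y‖ ≤ ‖w n - y‖` and `δ n` stays away from `0` and `1`, uniform convexity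
(`uniformConvex_combo`) gives `‖w n - F (w n)‖ → 0`.

*Convergence.* By uniform convexity, differences of nearly proximal pairs of `(M, N)` are nearly
equal (`proximal_close`). So all proximal pairs differ by one vector `h`, and `F (x - h) = F x - h`
for `x ∈ M ∩ (N + h)`, a closed convex set containing all iterates. A cluster point `a` of the
iterates satisfies `‖a - F (a - h)‖ ≤ ‖h‖`, hence `F (a - h) = a - h` and `F a = a`. Finally
`‖w n - (a - h)‖` is antitone and tends to `‖h‖` along a subsequence, hence along the whole
sequence, and proximality turns this into `w n → a`.
-/

/-! ### Uniform convexity -/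

/-- Uniform convexity, with a radius that may vanish and norm bounds that hold only
approximately. -/
lemma uniformConvex_approx {X : Type*} [NormedAddCommGroup X] [NormedSpace ℝ X]
    [UniformConvexSpace X] {r e : ℝ} (hr : 0 ≤ r) (he : 0 < e) :
    ∃ δ > 0, ∀ a b : X, ‖a‖ ≤ r + δ → ‖b‖ ≤ r + δ → 2 * (r - δ) ≤ ‖a + b‖ → ‖a - b‖ < e := by
  rcases hr.eq_or_lt with rfl | hr
  · refine ⟨e / 4, by positivity, fun a b ha hb _ => ?_⟩
    linarith [norm_sub_le a b]
  -- After rescaling by the radius `r + δ ≤ r + 1`, points at distance `e` are `e / (r + 1)` apart.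
  obtain ⟨δ₀, hδ₀, H⟩ :=
    exists_forall_closed_ball_dist_add_le_two_sub X (ε := e / (r + 1)) (by positivity)
  refine ⟨min 1 (r * δ₀ / 8), by positivity, fun a b ha hb hab => ?_⟩
  set δ := min 1 (r * δ₀ / 8) with hδ
  have hδ1 : δ ≤ 1 := min_le_left _ _
  have hδ2 : δ ≤ r * δ₀ / 8 := min_le_right _ _
  have hδ0 : 0 < δ := by positivity
  by_contra! hc
  have hs : 0 < r + δ := by positivity
  have hn : ∀ x : X, ‖(r + δ)⁻¹ • x‖ = ‖x‖ / (r + δ) := fun x => by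
    rw [norm_smul, Real.norm_of_nonneg (by positivity)]; ring
  have h := @H ((r + δ)⁻¹ • a) (by rw [hn, div_le_one hs]; exact ha)
    ((r + δ)⁻¹ • b) (by rw [hn, div_le_one hs]; exact hb)
    (by rw [← smul_sub, hn]; gcongr)
  rw [← smul_add, hn, div_le_iff₀ hs] at h
  nlinarith [mul_pos hδ0 hδ₀, mul_pos hr hδ₀]

/-- Uniform convexity for convex combinations whose weights stay away from `0` and `1`. -/
lemma uniformConvex_combo {X : Type*} [NormedAddCommGroup X] [NormedSpace ℝ X]
    [UniformConvexSpace X] {r e ε : ℝ} (hr : 0 ≤ r) (he : 0 < e) (hε : 0 < ε) :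
    ∃ δ > 0, ∀ a b : X, ∀ t ∈ Set.Ioo ε (1 - ε), ‖a‖ ≤ r + δ → ‖b‖ ≤ r + δ →
      r - δ ≤ ‖(1 - t) • a + t • b‖ → ‖a - b‖ < e := by
  obtain ⟨δ₀, hδ₀, H⟩ := uniformConvex_approx (X := X) hr he
  -- By symmetry the smaller weight may be placed on `b`; then
  -- `(1 - t) a + t b = (1 - 2 t) a + t (a + b)`.
  have key : ∀ a b : X, ∀ t, ε < t → t ≤ 1 / 2 → ‖a‖ ≤ r + ε * δ₀ → ‖b‖ ≤ r + ε * δ₀ →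
      r - ε * δ₀ ≤ ‖(1 - t) • a + t • b‖ → ‖a - b‖ < e := by
    intro a b t ht ht2 ha hb hab
    have h1 : ε * δ₀ ≤ δ₀ := by nlinarith
    refine H a b (by linarith) (by linarith) ?_
    have h2 : (1 - t) • a + t • b = (1 - 2 * t) • a + t • (a + b) := by module
    have h3 : ‖(1 - t) • a + t • b‖ ≤ (1 - 2 * t) * ‖a‖ + t * ‖a + b‖ := by
      rw [h2]
      refine (norm_add_le _ _).trans ?_
      rw [norm_smul, norm_smul, Real.norm_of_nonneg (by linarith),
        Real.norm_of_nonneg (by linarith)]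
    have h4 : (1 - 2 * t) * ‖a‖ ≤ (1 - 2 * t) * (r + ε * δ₀) :=
      mul_le_mul_of_nonneg_left ha (by linarith)
    have ht0 : 0 < t := by linarith
    have h6 : ε * δ₀ ≤ t * δ₀ := by gcongr
    have h7 : 0 ≤ t * (ε * δ₀) := by positivity
    refine le_of_mul_le_mul_left ?_ ht0
    nlinarith
  refine ⟨ε * δ₀, by positivity, fun a b t ht ha hb hab => ?_⟩
  rcases le_total t (1 / 2) with h | h
  · exact key a b t ht.1 h ha hb hab
  · rw [norm_sub_rev]
    refine key b a (1 - t) (by linarith [ht.2]) (by linarith) hb ha ?_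
    rwa [sub_sub_cancel, add_comm]

/-! ### Asymptotic centres and fixed points -/

/-- A relatively nonexpansive map has a fixed point in `N`: the asymptotic centre in `N` of any
orbit in `M`. -/
lemma exists_fixedPoint {X : Type*} [NormedAddCommGroup X] [NormedSpace ℝ X]
    [UniformConvexSpace X] [CompleteSpace X] {M N : Set X}
    (hMne : M.Nonempty) (hMb : Bornology.IsBounded M)
    (hNne : N.Nonempty) (hNb : Bornology.IsBounded N) (hNcl : IsClosed N)
    (hNconv : Convex ℝ N) {F : X → X} (hFM : ∀ w ∈ M, F w ∈ M) (hFN : ∀ z ∈ N, F z ∈ N)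
    (hFne : ∀ w ∈ M, ∀ z ∈ N, ‖F w - F z‖ ≤ ‖w - z‖) : ∃ y ∈ N, F y = y := by
  obtain ⟨x₀, hx₀⟩ := hMne
  obtain ⟨y₀, hy₀⟩ := hNne
  set x : ℕ → X := fun n => F^[n] x₀ with hx
  have hxs : ∀ n, x (n + 1) = F (x n) := fun n => Function.iterate_succ_apply' F n x₀
  have hxM : ∀ n, x n ∈ M := by
    intro n
    induction n with
    | zero => exact hx₀
    | succ k ih => rw [hxs]; exact hFM _ ih
  -- `S s` is the sublevel set, up to strictness, of `y ↦ limsup ‖x n - y‖` on `N`.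
  let S : ℝ → Set X := fun s => {y | y ∈ N ∧ ∀ᶠ n in atTop, ‖x n - y‖ ≤ s}
  have hSmono : ∀ s t, s ≤ t → S s ⊆ S t := fun s t hst y hy =>
    ⟨hy.1, hy.2.mono fun n hn => hn.trans hst⟩
  have hSF : ∀ s, ∀ y ∈ S s, F y ∈ S s := by
    intro s y hy
    refine ⟨hFN _ hy.1, ?_⟩
    obtain ⟨n₀, hn₀⟩ := eventually_atTop.1 hy.2
    refine eventually_atTop.2 ⟨n₀ + 1, fun n hn => ?_⟩
    obtain ⟨m, rfl⟩ : ∃ m, n = m + 1 := ⟨n - 1, by omega⟩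
    rw [hxs]
    exact (hFne _ (hxM m) _ hy.1).trans (hn₀ m (by omega))
  let A : Set ℝ := {s | (S s).Nonempty}
  have hA0 : ∀ s ∈ A, 0 ≤ s := by
    rintro s ⟨y, -, hy⟩
    obtain ⟨n, hn⟩ := hy.exists
    exact (norm_nonneg _).trans hn
  have hAne : A.Nonempty := by
    obtain ⟨C, hC⟩ := (hMb.union hNb).exists_norm_le
    refine ⟨C + C, y₀, hy₀, Eventually.of_forall fun n => ?_⟩
    exact (norm_sub_le _ _).trans (add_le_add (hC _ (.inl (hxM n))) (hC _ (.inr hy₀)))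
  have hAbdd : BddBelow A := ⟨0, hA0⟩
  set ρ := sInf A with hρ
  have hρ0 : 0 ≤ ρ := le_csInf hAne hA0
  have hSne : ∀ t > 0, (S (ρ + t)).Nonempty := by
    intro t ht
    obtain ⟨s, hs, hst⟩ := exists_lt_of_csInf_lt hAne (show sInf A < ρ + t by linarith)
    exact hs.mono (hSmono _ _ hst.le)
  -- The sets `S (ρ + δ)` shrink: the midpoint of two distant points would lie in `S (ρ - δ)`.
  have hdiam : ∀ e > 0, ∃ δ > 0, ∀ y ∈ S (ρ + δ), ∀ z ∈ S (ρ + δ), ‖y - z‖ < e := by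
    intro e he
    obtain ⟨δ, hδ, H⟩ := uniformConvex_approx (X := X) hρ0 he
    refine ⟨δ, hδ, fun y hy z hz => ?_⟩
    by_contra! hc
    have hm : ρ - δ ∈ A := by
      refine ⟨(1 / 2 : ℝ) • y + (1 / 2 : ℝ) • z,
        hNconv hy.1 hz.1 (by norm_num) (by norm_num) (by norm_num), ?_⟩
      filter_upwards [hy.2, hz.2] with n h1 h2
      by_contra! h3
      have h4 : (x n - y) + (x n - z) =
          (2 : ℝ) • (x n - ((1 / 2 : ℝ) • y + (1 / 2 : ℝ) • z)) := by module
      have h5 := H (x n - y) (x n - z) h1 h2 (by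
        rw [h4, norm_smul, Real.norm_of_nonneg (by norm_num)]; linarith)
      rw [sub_sub_sub_cancel_left, norm_sub_rev] at h5
      linarith
    linarith [csInf_le hAbdd hm]
  choose y hy using fun k : ℕ => hSne (1 / ((k : ℝ) + 1)) Nat.one_div_pos_of_nat
  have hyS : ∀ t > 0, ∃ K, ∀ k ≥ K, y k ∈ S (ρ + t) := by
    intro t ht
    obtain ⟨K, hK⟩ := exists_nat_one_div_lt ht
    refine ⟨K, fun k hk => hSmono _ _ ?_ (hy k)⟩
    have : 1 / ((k : ℝ) + 1) ≤ 1 / ((K : ℝ) + 1) := Nat.one_div_le_one_div hk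
    linarith
  have hcau : CauchySeq y := by
    refine Metric.cauchySeq_iff.2 fun e he => ?_
    obtain ⟨δ, hδ, H⟩ := hdiam e he
    obtain ⟨K, hK⟩ := hyS δ hδ
    exact ⟨K, fun m hm n hn => by rw [dist_eq_norm]; exact H _ (hK m hm) _ (hK n hn)⟩
  obtain ⟨z, hz⟩ := cauchySeq_tendsto_of_complete hcau
  have hzN : z ∈ N := hNcl.mem_of_tendsto hz (Eventually.of_forall fun k => (hy k).1)
  have hzS : ∀ t > 0, z ∈ S (ρ + t) := by
    intro t ht
    obtain ⟨K, hK⟩ := hyS (t / 2) (half_pos ht)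
    obtain ⟨K', hK'⟩ := Metric.tendsto_atTop.1 hz (t / 2) (half_pos ht)
    have h1 := hK (max K K') (le_max_left _ _)
    have h2 := hK' (max K K') (le_max_right _ _)
    rw [dist_eq_norm] at h2
    refine ⟨hzN, h1.2.mono fun n hn => ?_⟩
    have h3 := norm_sub_le_norm_sub_add_norm_sub (x n) (y (max K K')) z
    linarith
  refine ⟨z, hzN, ?_⟩
  by_contra hne
  obtain ⟨δ, hδ, H⟩ := hdiam ‖F z - z‖ (norm_pos_iff.2 (sub_ne_zero.2 hne))
  exact lt_irrefl _ (H _ (hSF _ _ (hzS δ hδ)) _ (hzS δ hδ))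

/-! ### Proximal pairs -/

/-- Differences of nearly proximal pairs of two convex sets are nearly equal. -/
lemma proximal_close {X : Type*} [NormedAddCommGroup X] [NormedSpace ℝ X]
    [UniformConvexSpace X] {M N : Set X} (hMconv : Convex ℝ M) (hNconv : Convex ℝ N)
    {d : ℝ} (hd0 : 0 ≤ d) (hd : ∀ a ∈ M, ∀ b ∈ N, d ≤ ‖a - b‖) {e : ℝ} (he : 0 < e) :
    ∃ δ > 0, ∀ a ∈ M, ∀ z ∈ N, ∀ a' ∈ M, ∀ z' ∈ N, ‖a - z‖ ≤ d + δ → ‖a' - z'‖ ≤ d + δ →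
      ‖(a - z) - (a' - z')‖ < e := by
  obtain ⟨δ, hδ, H⟩ := uniformConvex_approx (X := X) hd0 he
  refine ⟨δ, hδ, fun a ha z hz a' ha' z' hz' h h' => H _ _ h h' ?_⟩
  have h1 := hd _ (hMconv ha ha' (by norm_num : (0 : ℝ) ≤ 1 / 2) (by norm_num : (0 : ℝ) ≤ 1 / 2)
    (by norm_num)) _ (hNconv hz hz' (by norm_num : (0 : ℝ) ≤ 1 / 2)
    (by norm_num : (0 : ℝ) ≤ 1 / 2) (by norm_num))
  have h2 : (a - z) + (a' - z') = (2 : ℝ) •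
      (((1 / 2 : ℝ) • a + (1 / 2 : ℝ) • a') - ((1 / 2 : ℝ) • z + (1 / 2 : ℝ) • z')) := by module
  rw [h2, norm_smul, Real.norm_of_nonneg (by norm_num)]
  linarith

/-! ### The Ishikawa iteration -/

lemma norm_combo_sub_le {X : Type*} [NormedAddCommGroup X] [NormedSpace ℝ X] {t : ℝ}
    (ht0 : 0 ≤ t) (ht1 : t ≤ 1) (a b y : X) :
    ‖((1 - t) • a + t • b) - y‖ ≤ (1 - t) * ‖a - y‖ + t * ‖b - y‖ := by
  have h : ((1 - t) • a + t • b) - y = (1 - t) • (a - y) + t • (b - y) := by module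
  rw [h]
  refine (norm_add_le _ _).trans ?_
  rw [norm_smul, norm_smul, Real.norm_of_nonneg (by linarith), Real.norm_of_nonneg ht0]

/-- Corollary: Ishikawa iteration started at `w 0 ∈ M₀` for a relatively nonexpansive
map `F : M ∪ N → M ∪ N` with `F(M) ⊆ M`, `F(N) ⊆ N` in a uniformly convex Banach
space: `‖w n - F (w n)‖ → 0`; moreover, if `F '' M` lies in a compact set, the
iterates converge to a fixed point of `F`. -/
theorem ishikawa_relativelyNonexpansive_of_mem_M0
    {X : Type*} [NormedAddCommGroup X] [NormedSpace ℝ X]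
    [UniformConvexSpace X] [CompleteSpace X]
    (M N : Set X)
    (hMne : M.Nonempty) (hMb : Bornology.IsBounded M) (hMcl : IsClosed M)
    (hMconv : Convex ℝ M)
    (hNne : N.Nonempty) (hNb : Bornology.IsBounded N) (hNcl : IsClosed N)
    (hNconv : Convex ℝ N)
    (F : X → X) (hFM : ∀ w ∈ M, F w ∈ M) (hFN : ∀ z ∈ N, F z ∈ N)
    (hFne : ∀ w ∈ M, ∀ z ∈ N, ‖F w - F z‖ ≤ ‖w - z‖)
    (ε : ℝ) (hε : ε ∈ Set.Ioo (0 : ℝ) (1 / 2))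
    (η δ : ℕ → ℝ)
    (hη : ∀ n, η n ∈ Set.Ioo ε (1 - ε)) (hδ : ∀ n, δ n ∈ Set.Ioo ε (1 - ε))
    (w : ℕ → X)
    (hw0 : w 0 ∈
      {x ∈ M | ∃ z ∈ N, ‖x - z‖ = sInf {r : ℝ | ∃ a ∈ M, ∃ b ∈ N, r = ‖a - b‖}})
    (hw : ∀ n, w (n + 1) =
      (1 - η n) • w n + η n • F ((1 - δ n) • w n + δ n • F (w n))) :
    Tendsto (fun n => ‖w n - F (w n)‖) atTop (𝓝 0) ∧
      ((∃ C : Set X, IsCompact C ∧ F '' M ⊆ C) →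
        ∃ a ∈ M, F a = a ∧ Tendsto w atTop (𝓝 a)) := by
  obtain ⟨hε0, hε1⟩ := hε
  have hη0 : ∀ n, 0 < η n := fun n => hε0.trans (hη n).1
  have hη1 : ∀ n, η n < 1 := fun n => by linarith [(hη n).2]
  have hδ0 : ∀ n, 0 < δ n := fun n => hε0.trans (hδ n).1
  have hδ1 : ∀ n, δ n < 1 := fun n => by linarith [(hδ n).2]
  set v : ℕ → X := fun n => (1 - δ n) • w n + δ n • F (w n) with hv
  have hw' : ∀ n, w (n + 1) = (1 - η n) • w n + η n • F (v n) := hw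
  -- Any convex subset of `M` that contains `w 0` and is mapped into itself contains all iterates.
  have hinv : ∀ P : Set X, Convex ℝ P → (∀ x ∈ P, F x ∈ P) → w 0 ∈ P →
      ∀ n, w n ∈ P ∧ v n ∈ P := by
    intro P hP hPF h0
    have hvP : ∀ n, w n ∈ P → v n ∈ P := fun n hn =>
      hP hn (hPF _ hn) (by linarith [hδ1 n]) (hδ0 n).le (by ring)
    have hwP : ∀ n, w n ∈ P := by
      intro n
      induction n with
      | zero => exact h0
      | succ k ih =>
        rw [hw']
        exact hP ih (hPF _ (hvP k ih)) (by linarith [hη1 k]) (hη0 k).le (by ring)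
    exact fun n => ⟨hwP n, hvP n (hwP n)⟩
  have hwM : ∀ n, w n ∈ M := fun n => (hinv M hMconv hFM hw0.1 n).1
  have hvM : ∀ n, v n ∈ M := fun n => (hinv M hMconv hFM hw0.1 n).2
  -- Distances to a fixed point in `N` behave as for nonexpansive maps.
  have hFy : ∀ y ∈ N, F y = y → ∀ x ∈ M, ‖F x - y‖ ≤ ‖x - y‖ := by
    intro y hy hfy x hx
    have := hFne x hx y hy
    rwa [hfy] at this
  have hvy : ∀ y ∈ N, F y = y → ∀ n, ‖v n - y‖ ≤ ‖w n - y‖ := by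
    intro y hy hfy n
    have h1 := norm_combo_sub_le (hδ0 n).le (hδ1 n).le (w n) (F (w n)) y
    have h2 := mul_le_mul_of_nonneg_left (hFy y hy hfy _ (hwM n)) (hδ0 n).le
    change ‖((1 - δ n) • w n + δ n • F (w n)) - y‖ ≤ _
    linarith
  have hwy : ∀ y ∈ N, ∀ n, ‖w (n + 1) - y‖ ≤ (1 - η n) * ‖w n - y‖ + η n * ‖F (v n) - y‖ := by
    intro y hy n
    rw [hw']
    exact norm_combo_sub_le (hη0 n).le (hη1 n).le _ _ _
  have hanti : ∀ y ∈ N, F y = y → Antitone fun n => ‖w n - y‖ := by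
    intro y hy hfy
    refine antitone_nat_of_succ_le fun n => ?_
    have h1 := (hFy y hy hfy _ (hvM n)).trans (hvy y hy hfy n)
    have h2 := mul_le_mul_of_nonneg_left h1 (hη0 n).le
    linarith [hwy y hy n]
  have hreg : Tendsto (fun n => ‖w n - F (w n)‖) atTop (𝓝 0) := by
    obtain ⟨y, hy, hfy⟩ := exists_fixedPoint hMne hMb hNne hNb hNcl hNconv hFM hFN hFne
    have hbdd : BddBelow (Set.range fun n => ‖w n - y‖) :=
      ⟨0, by rintro _ ⟨n, rfl⟩; exact norm_nonneg _⟩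
    have hlim := tendsto_atTop_ciInf (hanti y hy hfy) hbdd
    set r := ⨅ n, ‖w n - y‖ with hr
    have hrle : ∀ n, r ≤ ‖w n - y‖ := fun n => ciInf_le hbdd n
    have hr0 : 0 ≤ r := le_ciInf fun n => norm_nonneg _
    refine Metric.tendsto_atTop.2 fun e he => ?_
    obtain ⟨κ, hκ, H⟩ := uniformConvex_combo (X := X) hr0 he hε0
    have hκ' : ε * κ ≤ κ := by nlinarith
    obtain ⟨n₀, hn₀⟩ := eventually_atTop.1
      (hlim.eventually_lt_const (show r < r + ε * κ by linarith [mul_pos hε0 hκ]))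
    refine ⟨n₀, fun n hn => ?_⟩
    have hn1 := hn₀ n hn
    rw [Real.dist_eq, sub_zero, abs_norm, ← sub_sub_sub_cancel_right (w n) (F (w n)) y]
    refine H (w n - y) (F (w n) - y) (δ n) (hδ n) (by linarith)
      (by linarith [hFy y hy hfy _ (hwM n)]) ?_
    have h1 : (1 - δ n) • (w n - y) + δ n • (F (w n) - y) = v n - y := by
      simp only [hv]; module
    rw [h1]
    refine le_trans ?_ (hFy y hy hfy _ (hvM n))
    -- `r ≤ ‖w (n+1) - y‖ ≤ (1 - η) (r + ε κ) + η ‖F (v n) - y‖` and `ε ≤ η`.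
    have h2 := (hrle (n + 1)).trans (hwy y hy n)
    have h3 : (1 - η n) * ‖w n - y‖ ≤ (1 - η n) * (r + ε * κ) :=
      mul_le_mul_of_nonneg_left hn1.le (by linarith [hη1 n])
    have h4 : ε * κ ≤ η n * κ := mul_le_mul_of_nonneg_right (hη n).1.le hκ.le
    have h5 : 0 ≤ η n * (ε * κ) := by have := hη0 n; positivity
    refine le_of_mul_le_mul_left ?_ (hη0 n)
    nlinarith
  refine ⟨hreg, ?_⟩
  rintro ⟨C, hC, hFC⟩
  obtain ⟨hw0M, z₀, hz₀, hwz⟩ := hw0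
  set d := sInf {r : ℝ | ∃ a ∈ M, ∃ b ∈ N, r = ‖a - b‖} with hd_def
  have hd : ∀ a ∈ M, ∀ b ∈ N, d ≤ ‖a - b‖ := fun a ha b hb =>
    csInf_le ⟨0, by rintro _ ⟨a, -, b, -, rfl⟩; exact norm_nonneg _⟩ ⟨a, ha, b, hb, rfl⟩
  have hd0 : 0 ≤ d := hwz ▸ norm_nonneg _
  set h := w 0 - z₀ with hh
  have huniq : ∀ a ∈ M, ∀ z ∈ N, ‖a - z‖ ≤ d → a - z = h := by
    intro a ha z hz haz
    by_contra hne
    obtain ⟨κ, hκ, H⟩ := proximal_close hMconv hNconv hd0 hd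
      (norm_pos_iff.2 (sub_ne_zero.2 hne))
    exact lt_irrefl _ (H a ha z hz _ hw0M _ hz₀ (by linarith) (by linarith))
  have hFh : ∀ x ∈ M, x - h ∈ N → F x - F (x - h) = h := by
    intro x hx hxh
    refine huniq _ (hFM _ hx) _ (hFN _ hxh) ((hFne _ hx _ hxh).trans ?_)
    rw [sub_sub_cancel, hwz]
  have hwh : ∀ n, w n - h ∈ N := by
    have hP : Convex ℝ {x | x ∈ M ∧ x - h ∈ N} := by
      rintro a ⟨ha, ha'⟩ b ⟨hb, hb'⟩ s t hs ht hst
      refine ⟨hMconv ha hb hs ht hst, ?_⟩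
      have : s • a + t • b - h = s • (a - h) + t • (b - h) := by
        obtain rfl : s = 1 - t := by linarith
        module
      rw [this]
      exact hNconv ha' hb' hs ht hst
    refine fun n => (hinv _ hP ?_ ⟨hw0M, by rwa [hh, sub_sub_cancel]⟩ n).1.2
    rintro x ⟨hx, hx'⟩
    refine ⟨hFM _ hx, ?_⟩
    rw [sub_eq_iff_eq_add'.2 (sub_eq_iff_eq_add.1 (hFh x hx hx'))]
    exact hFN _ hx'
  obtain ⟨a, -, φ, hφ, hFa⟩ :=
    hC.tendsto_subseq fun n => hFC (Set.mem_image_of_mem F (hwM n))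
  have hFa : Tendsto (fun k => F (w (φ k))) atTop (𝓝 a) := hFa
  have hwa : Tendsto (fun k => w (φ k)) atTop (𝓝 a) := by
    have h1 : Tendsto (fun k => w (φ k) - F (w (φ k))) atTop (𝓝 0) :=
      tendsto_zero_iff_norm_tendsto_zero.2 (hreg.comp hφ.tendsto_atTop)
    simpa using h1.add hFa
  have haM : a ∈ M := hMcl.mem_of_tendsto hwa (Eventually.of_forall fun k => hwM _)
  have haN : a - h ∈ N :=
    hNcl.mem_of_tendsto (hwa.sub_const h) (Eventually.of_forall fun k => hwh _)
  have hdist : Tendsto (fun k => ‖w (φ k) - (a - h)‖) atTop (𝓝 d) := by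
    have h1 := (hwa.sub_const (a - h)).norm
    rwa [sub_sub_cancel, hwz] at h1
  have hfix : F (a - h) = a - h := by
    have h1 : ‖a - F (a - h)‖ ≤ d :=
      le_of_tendsto_of_tendsto' (hFa.sub_const _).norm hdist fun k => hFne _ (hwM _) _ haN
    exact (sub_eq_iff_eq_add'.2 (sub_eq_iff_eq_add.1 (huniq a haM _ (hFN _ haN) h1))).symm
  refine ⟨a, haM, ?_, ?_⟩
  · have h1 := hFh a haM haN
    rw [hfix] at h1
    exact sub_left_injective (h1.trans (sub_sub_cancel a h).symm)
  · refine Metric.tendsto_atTop.2 fun e he => ?_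
    obtain ⟨κ, hκ, H⟩ := proximal_close hMconv hNconv hd0 hd he
    obtain ⟨k, hk⟩ := (hdist.eventually_lt_const (show d < d + κ by linarith)).exists
    refine ⟨φ k, fun n hn => ?_⟩
    have h1 := (hanti _ haN hfix hn).trans hk.le
    have h2 := H _ (hwM n) _ haN _ haM _ haN h1 (by rw [sub_sub_cancel, hwz]; linarith)
    rwa [sub_sub_sub_cancel_right, ← dist_eq_norm] at h2
end

section
/- Let M and N be nonempty bounded closed convex subsets of a Hilbert space X and let F : M ∪ N → M ∪ N satisfy (i) F(M) ⊆ M and F(N) ⊆ N, and (ii) ‖Fw − Fz‖ ≤ ‖w − z‖ for all w ∈ M, z ∈ N. Fix ε ∈ (0, 1/2) and sequences η_n, δ_n ∈ (ε, 1−ε). Let w_0 ∈ M and define w_{n+1} = P^n((1−η_n) w_n + η_n F z_n), where z_n = (1−δ_n) w_n + δ_n F w_n and P = P_M ∘ P_N. Then ‖w_n − F w_n‖ → 0 as n → ∞. -/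
/-!
The proof rests on the existence of a point `q ∈ N` with `F q = q` that belongs to a proximal pair
`(p, q)`, `p ∈ M`: writing `h = q - p`, one has `⟪h, m - p⟫ ≤ 0` on `M` and `0 ≤ ⟪h, z - q⟫` on `N`.

* Existence of `q`. A nonexpansive self-map of a bounded closed convex set has a fixed point
  (`exists_fixedPoint_of_nonexpansive`). Applied to `P_M ∘ P_N` on `M`, this produces a proximal
  pair with gap `h`. On `K = {a ∈ M | a + h ∈ N}` relative nonexpansiveness forces
  `F (a + h) = F a + h`, and `⟪h, ·⟫` is constant on `K`, so the cross terms in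
  `‖F a - F b - h‖² ≤ ‖a - b - h‖²` vanish and `F` is nonexpansive on `K`. The fixed point theorem
  applied to `F` on `K` gives `p`, and `q = p + h` (`exists_proximal_fixed_pair`).
* Fejér monotonicity. For `u ∈ M` one has `‖P_N u - p‖ ≤ ‖u - q‖` (`norm_proj_sub_le`); using this
  twice, `‖P u - q‖ ≤ ‖u - q‖`. The identity for `‖(1 - t) a + t b‖²`, used for both convex
  combinations of the iteration, then gives
  `‖w (n+1) - q‖² ≤ ‖w n - q‖² - ε³ ‖w n - F (w n)‖²`, and `‖w n - q‖²` converges.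
-/

open Filter Topology

/-! ### Projections onto convex sets -/

/-- The variational inequality characterising the nearest point. -/
lemma inner_proj_le {X : Type*} [NormedAddCommGroup X] [InnerProductSpace ℝ X]
    {M : Set X} (hM : Convex ℝ M) {x p : X} (hp : p ∈ M) (h : ∀ y ∈ M, ‖x - p‖ ≤ ‖x - y‖)
    {y : X} (hy : y ∈ M) : inner ℝ (x - p) (y - p) ≤ 0 := by
  refine (norm_eq_iInf_iff_real_inner_le_zero hM hp).1 ?_ y hy
  have : Nonempty M := ⟨⟨p, hp⟩⟩
  refine le_antisymm (le_ciInf fun z => h z z.2) ?_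
  exact ciInf_le (f := fun z : M => ‖x - (z : X)‖) ⟨0, by rintro _ ⟨z, rfl⟩; positivity⟩ ⟨p, hp⟩

lemma norm_proj_sub_proj_le {X : Type*} [NormedAddCommGroup X] [InnerProductSpace ℝ X]
    {M : Set X} (hM : Convex ℝ M) {P : X → X}
    (hP : ∀ x : X, P x ∈ M ∧ ∀ y ∈ M, ‖x - P x‖ ≤ ‖x - y‖) (a b : X) :
    ‖P a - P b‖ ≤ ‖a - b‖ := by
  have h1 := inner_proj_le hM (hP a).1 (hP a).2 (hP b).1
  have h2 := inner_proj_le hM (hP b).1 (hP b).2 (hP a).1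
  have h3 : inner ℝ (a - P a) (P b - P a) + inner ℝ (b - P b) (P a - P b)
      = ‖P a - P b‖ ^ 2 - inner ℝ (a - b) (P a - P b) := by
    rw [← real_inner_self_eq_norm_sq]
    simp only [inner_sub_left, inner_sub_right]
    ring
  have h4 := real_inner_le_norm (a - b) (P a - P b)
  by_contra! h5
  nlinarith [norm_nonneg (a - b), norm_nonneg (P a - P b)]

/-- If `y ∈ B` and `x` satisfies the variational inequality of the nearest point of `A` to `y`,
projecting a point `u ∈ A` onto `B` does not increase the distance to the pair, provided `y` is
exchanged for `x` at the same time. -/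
lemma norm_proj_sub_le {X : Type*} [NormedAddCommGroup X] [InnerProductSpace ℝ X]
    {A B : Set X} (hB : Convex ℝ B) {P : X → X}
    (hP : ∀ x : X, P x ∈ B ∧ ∀ y ∈ B, ‖x - P x‖ ≤ ‖x - y‖) {x y : X} (hy : y ∈ B)
    (hxA : ∀ a ∈ A, inner ℝ (y - x) (a - x) ≤ 0) {u : X} (hu : u ∈ A) : ‖P u - x‖ ≤ ‖u - y‖ := by
  have h1 := inner_proj_le hB (hP u).1 (hP u).2 hy
  have h2 := hxA u hu
  have h4 : 0 ≤ ‖u - P u + (y - x)‖ ^ 2 := by positivity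
  have h5 : ‖u - y‖ ^ 2 - ‖P u - x‖ ^ 2 = ‖u - P u + (y - x)‖ ^ 2
      - 2 * inner ℝ (u - P u) (y - P u) - 2 * inner ℝ (y - x) (u - x) := by
    have e1 : u - y = (u - P u) - (y - P u) := by abel
    have e2 : P u - x = (y - x) - (y - P u) := by abel
    have e3 : u - x = (u - P u) - (y - P u) + (y - x) := by abel
    rw [e1, e2, e3]
    generalize u - P u = a
    generalize y - P u = b
    generalize y - x = g
    rw [norm_sub_sq_real, norm_sub_sq_real, norm_add_sq_real, inner_add_right, inner_sub_right,
      real_inner_self_eq_norm_sq, real_inner_comm a g]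
    ring
  exact le_of_sq_le_sq (by linarith) (norm_nonneg _)

/-! ### Fixed points of nonexpansive maps -/

/-- Estimate for two regularised fixed points `a`, `b` (relative to the base point) with parameters
`l ≥ m`, as supplied by the monotonicity of `id - T`. -/
lemma norm_sub_sq_le_of_monotone {X : Type*} [NormedAddCommGroup X] [InnerProductSpace ℝ X]
    {a b : X} {l m : ℝ} (hm : 0 < m) (hml : m ≤ l) (h : inner ℝ (l • a - m • b) (a - b) ≤ 0) :
    ‖a - b‖ ^ 2 ≤ ‖b‖ ^ 2 - ‖a‖ ^ 2 := by
  have e1 : inner ℝ (l • a - m • b) (a - b)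
      = l * ‖a‖ ^ 2 + m * ‖b‖ ^ 2 - (l + m) * inner ℝ a b := by
    simp only [inner_sub_left, inner_sub_right, real_inner_smul_left, real_inner_self_eq_norm_sq,
      real_inner_comm a b]
    ring
  have e2 := norm_sub_sq_real a b
  have e3 : (l + m) * ‖a - b‖ ^ 2 ≤ (l - m) * (‖b‖ ^ 2 - ‖a‖ ^ 2) := by
    rw [e2]; rw [e1] at h; nlinarith
  have e4 : 0 ≤ ‖a - b‖ ^ 2 := by positivity
  rcases hml.eq_or_lt with h' | h'
  · subst h'
    have e5 : ‖a - b‖ ^ 2 = 0 := by nlinarith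
    have e6 : a = b := by simpa [sub_eq_zero] using e5
    simp [e6]
  · have e5 : 0 ≤ ‖b‖ ^ 2 - ‖a‖ ^ 2 := by
      by_contra! h6
      nlinarith
    nlinarith

/-- The Browder fixed point theorem in Hilbert space. The fixed point is the limit of the
fixed points `x n` of the contractions `x ↦ c + (n+1)/(n+2) • (T x - c)`: the norms `‖x n - c‖`
increase and control the mutual distances, so `x n` is Cauchy. -/
lemma exists_fixedPoint_of_nonexpansive {X : Type*} [NormedAddCommGroup X]
    [InnerProductSpace ℝ X] [CompleteSpace X] {K : Set X} (hne : K.Nonempty)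
    (hb : Bornology.IsBounded K) (hcl : IsClosed K) (hconv : Convex ℝ K) (T : X → X)
    (hT : ∀ x ∈ K, T x ∈ K) (hTne : ∀ x ∈ K, ∀ y ∈ K, ‖T x - T y‖ ≤ ‖x - y‖) :
    ∃ x ∈ K, T x = x := by
  obtain ⟨c, hc⟩ := hne
  have key : ∀ n : ℕ, ∃ x ∈ K, T x - x = (1 / ((n : ℝ) + 1)) • (x - c) := by
    intro n
    have hn : (0 : ℝ) < n + 1 := by positivity
    have hn2 : (0 : ℝ) < n + 2 := by positivity
    set r : ℝ := (n + 1) / (n + 2) with hr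
    have hr0 : 0 ≤ r := by positivity
    have hr1 : r < 1 := by rw [hr, div_lt_one hn2]; linarith
    let S : X → X := fun x => c + r • (T x - c)
    have hS : Set.MapsTo S K K := fun x hx => by
      have := hconv hc (hT x hx) (sub_nonneg.2 hr1.le) hr0 (by ring)
      have e : S x = (1 - r) • c + r • T x := by simp only [S]; module
      rwa [e]
    have hctr : ContractingWith ⟨r, hr0⟩ (hS.restrict S K K) := by
      refine ⟨by exact_mod_cast hr1, LipschitzWith.of_dist_le_mul fun x y => ?_⟩
      rw [Subtype.dist_eq, Subtype.dist_eq, dist_eq_norm, dist_eq_norm]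
      have e : S x - S y = r • (T x - T y) := by simp only [S]; module
      change ‖S x - S y‖ ≤ r * ‖(x : X) - y‖
      rw [e, norm_smul, Real.norm_of_nonneg hr0]
      exact mul_le_mul_of_nonneg_left (hTne x x.2 y y.2) hr0
    obtain ⟨x, hxK, hx, -⟩ := hctr.exists_fixedPoint' hcl.isComplete hS hc (edist_ne_top _ _)
    refine ⟨x, hxK, ?_⟩
    have hx' : c + r • (T x - c) = x := hx
    have e2 : T x - c = (1 / r) • (x - c) := by
      have : r ≠ 0 := by positivity
      have e3 : x - c = r • (T x - c) := by rw [← sub_eq_iff_eq_add'.2 hx'.symm]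
      rw [e3, smul_smul, one_div_mul_cancel this, one_smul]
    have e4 : 1 / r = 1 / ((n : ℝ) + 1) + 1 := by rw [hr]; field_simp; ring
    have : T x - x = (T x - c) - (x - c) := by abel
    rw [this, e2, e4]
    module
  choose x hxK hx using key
  have hmono : ∀ m n : ℕ, m ≤ n → ‖x m - x n‖ ^ 2 ≤ ‖x n - c‖ ^ 2 - ‖x m - c‖ ^ 2 := by
    intro m n hmn
    have h1 : inner ℝ ((1 / ((m : ℝ) + 1)) • (x m - c) - (1 / ((n : ℝ) + 1)) • (x n - c))
        ((x m - c) - (x n - c)) ≤ 0 := by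
      have e : (x m - c) - (x n - c) = x m - x n := by abel
      rw [← hx m, ← hx n, e]
      have e2 : T (x m) - x m - (T (x n) - x n) = (T (x m) - T (x n)) - (x m - x n) := by abel
      rw [e2, inner_sub_left, real_inner_self_eq_norm_sq]
      have h2 := real_inner_le_norm (T (x m) - T (x n)) (x m - x n)
      have h3 := hTne _ (hxK m) _ (hxK n)
      nlinarith [norm_nonneg (x m - x n)]
    have h2 := norm_sub_sq_le_of_monotone (by positivity)
      (one_div_le_one_div_of_le (by positivity) (by gcongr)) h1
    simpa using h2
  obtain ⟨R, hR⟩ := hb.exists_norm_le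
  have hbd : ∀ n, ‖x n - c‖ ≤ R + R := fun n =>
    (norm_sub_le _ _).trans (add_le_add (hR _ (hxK n)) (hR _ hc))
  have hbdd : BddAbove (Set.range fun n => ‖x n - c‖ ^ 2) := by
    refine ⟨(R + R) ^ 2, ?_⟩
    rintro _ ⟨n, rfl⟩
    exact pow_le_pow_left₀ (norm_nonneg _) (hbd n) 2
  have hcau : CauchySeq x := by
    rw [Metric.cauchySeq_iff']
    intro e he
    obtain ⟨n₀, hn₀⟩ := exists_lt_of_lt_ciSup
      (show (⨆ n, ‖x n - c‖ ^ 2) - e ^ 2 < ⨆ n, ‖x n - c‖ ^ 2 by nlinarith)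
    refine ⟨n₀, fun n hn => ?_⟩
    have h1 := hmono n₀ n hn
    have h2 := le_ciSup hbdd n
    rw [dist_comm, dist_eq_norm]
    exact lt_of_pow_lt_pow_left₀ 2 he.le (by linarith)
  obtain ⟨p, hp⟩ := cauchySeq_tendsto_of_complete hcau
  have hpK : p ∈ K := hcl.mem_of_tendsto hp (Eventually.of_forall hxK)
  refine ⟨p, hpK, ?_⟩
  have hlim : Tendsto (fun n : ℕ => 2 * ‖x n - p‖ + 1 / ((n : ℝ) + 1) * (R + R)) atTop (𝓝 0) := by
    have h1 := (tendsto_iff_norm_sub_tendsto_zero.1 hp).const_mul 2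
    have h2 := (tendsto_one_div_add_atTop_nhds_zero_nat (𝕜 := ℝ)).mul_const (R + R)
    simpa using h1.add h2
  have hle : ‖T p - p‖ ≤ 0 := by
    refine ge_of_tendsto' hlim fun n => ?_
    have e : T p - p = (T p - T (x n)) + (T (x n) - x n) + (x n - p) := by abel
    have h1 := hTne p hpK (x n) (hxK n)
    rw [norm_sub_rev p] at h1
    have h2 : ‖T (x n) - x n‖ ≤ 1 / ((n : ℝ) + 1) * (R + R) := by
      rw [hx n, norm_smul, Real.norm_of_nonneg (by positivity)]
      exact mul_le_mul_of_nonneg_left (hbd n) (by positivity)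
    rw [e]
    linarith [norm_add₃_le (a := T p - T (x n)) (b := T (x n) - x n) (c := x n - p)]
  exact sub_eq_zero.1 (norm_le_zero_iff.1 hle)

/-! ### Proximal fixed pairs -/

/-- A relatively nonexpansive map leaving `M` and `N` invariant fixes the second point of some
proximal pair `(p, q)`; the two inequalities say that `p`, `q` are nearest points of `M`, `N` to
each other. -/
lemma exists_proximal_fixed_pair {X : Type*} [NormedAddCommGroup X] [InnerProductSpace ℝ X]
    [CompleteSpace X] (M N : Set X)
    (hMne : M.Nonempty) (hMb : Bornology.IsBounded M) (hMcl : IsClosed M)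
    (hMconv : Convex ℝ M) (hNcl : IsClosed N) (hNconv : Convex ℝ N)
    (F : X → X) (hFM : ∀ w ∈ M, F w ∈ M) (hFN : ∀ z ∈ N, F z ∈ N)
    (hFne : ∀ w ∈ M, ∀ z ∈ N, ‖F w - F z‖ ≤ ‖w - z‖)
    (PM PN : X → X)
    (hPM : ∀ x : X, PM x ∈ M ∧ ∀ y ∈ M, ‖x - PM x‖ ≤ ‖x - y‖)
    (hPN : ∀ x : X, PN x ∈ N ∧ ∀ y ∈ N, ‖x - PN x‖ ≤ ‖x - y‖) :
    ∃ p ∈ M, ∃ q ∈ N, F q = q ∧ (∀ m ∈ M, inner ℝ (q - p) (m - p) ≤ 0) ∧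
      ∀ z ∈ N, 0 ≤ inner ℝ (q - p) (z - q) := by
  obtain ⟨x, hxM, hx⟩ := exists_fixedPoint_of_nonexpansive hMne hMb hMcl hMconv
    (fun x => PM (PN x)) (fun x _ => (hPM _).1) (fun a _ b _ =>
      (norm_proj_sub_proj_le hMconv hPM _ _).trans (norm_proj_sub_proj_le hNconv hPN _ _))
  obtain ⟨h, hh⟩ : ∃ h, h = PN x - x := ⟨_, rfl⟩
  have hyN : x + h ∈ N := by rw [hh, add_sub_cancel]; exact (hPN x).1
  have hM : ∀ m ∈ M, inner ℝ h (m - x) ≤ 0 := fun m hm => by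
    have := inner_proj_le hMconv (hPM (PN x)).1 (hPM (PN x)).2 hm
    rwa [hx, ← hh] at this
  have hN : ∀ z ∈ N, 0 ≤ inner ℝ h (z - (x + h)) := fun z hz => by
    have h1 := inner_proj_le hNconv (hPN x).1 (hPN x).2 hz
    have e : x - PN x = -h := by rw [hh]; abel
    have e2 : x + h = PN x := by rw [hh]; abel
    rw [e, inner_neg_left] at h1
    rw [e2]
    linarith
  set K : Set X := {a | a ∈ M ∧ a + h ∈ N} with hK
  have hconst : ∀ a ∈ K, inner ℝ h a = inner ℝ h x := fun a ha => by
    have h1 := hM a ha.1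
    have h2 := hN _ ha.2
    rw [add_sub_add_right_eq_sub] at h2
    rw [inner_sub_right] at h1 h2
    linarith
  -- Among the differences of points of `N` and `M`, `h` is the only one of norm at most `‖h‖`.
  have hFh : ∀ a ∈ K, F (a + h) = F a + h := fun a ha => by
    have h1 := hM _ (hFM a ha.1)
    have h2 := hN _ (hFN _ ha.2)
    have h3 := hFne a ha.1 _ ha.2
    rw [norm_sub_rev, norm_sub_rev a, add_sub_cancel_left] at h3
    have h4 : ‖h‖ ^ 2 ≤ inner ℝ h (F (a + h) - F a) := by
      simp only [inner_sub_right, inner_add_right, real_inner_self_eq_norm_sq] at h1 h2 ⊢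
      linarith
    have h5 := norm_sub_sq_real h (F (a + h) - F a)
    have h6 := pow_le_pow_left₀ (norm_nonneg _) h3 2
    have h7 : ‖h - (F (a + h) - F a)‖ ^ 2 = 0 := le_antisymm (by linarith) (by positivity)
    have h8 : h - (F (a + h) - F a) = 0 := by simpa using h7
    rw [eq_comm, ← sub_eq_zero, ← h8]
    abel
  have hFK : ∀ a ∈ K, F a ∈ K := fun a ha =>
    ⟨hFM a ha.1, by rw [← hFh a ha]; exact hFN _ ha.2⟩
  obtain ⟨p, hpK, hp⟩ := exists_fixedPoint_of_nonexpansive (K := K) ⟨x, hxM, hyN⟩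
    (hMb.subset fun a ha => ha.1)
    (hMcl.inter (hNcl.preimage (continuous_add_const h)))
    (hMconv.inter (hNconv.translate_preimage_left h)) F hFK (fun a ha b hb => by
      have h1 := hFne a ha.1 _ hb.2
      rw [hFh b hb, ← sub_sub, ← sub_sub] at h1
      have h2 := pow_le_pow_left₀ (norm_nonneg _) h1 2
      rw [norm_sub_sq_real (F a - F b), norm_sub_sq_real (a - b), real_inner_comm h,
        real_inner_comm h, inner_sub_right, inner_sub_right, hconst a ha, hconst b hb, hconst _ (hFK a ha),
        hconst _ (hFK b hb)] at h2
      exact le_of_sq_le_sq (by linarith) (norm_nonneg _))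
  refine ⟨p, hpK.1, p + h, hpK.2, by rw [hFh p hpK, hp], fun m hm => ?_, fun z hz => ?_⟩
  · have := hM m hm
    rw [add_sub_cancel_left, inner_sub_right, hconst p hpK, ← inner_sub_right]
    exact this
  · have := hN z hz
    rw [inner_sub_right, inner_add_right] at this
    rw [add_sub_cancel_left, inner_sub_right, inner_add_right, hconst p hpK]
    exact this

/-! ### Convergence of the iteration -/

lemma norm_convex_comb_sub_sq {X : Type*} [NormedAddCommGroup X] [InnerProductSpace ℝ X]
    (a b y : X) (t : ℝ) : ‖((1 - t) • a + t • b) - y‖ ^ 2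
      = (1 - t) * ‖a - y‖ ^ 2 + t * ‖b - y‖ ^ 2 - t * (1 - t) * ‖a - b‖ ^ 2 := by
  have e1 : ((1 - t) • a + t • b) - y = (1 - t) • (a - y) + t • (b - y) := by module
  have e2 : a - b = (a - y) - (b - y) := by abel
  rw [e1, e2, norm_add_sq_real, norm_sub_sq_real (a - y), norm_smul, norm_smul, real_inner_smul_left,
    real_inner_smul_right, mul_pow, mul_pow, Real.norm_eq_abs, Real.norm_eq_abs, sq_abs, sq_abs]
  ring

/-- Theorem 2.5 (first part): modified Ishikawa iteration with von Neumann projections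
for a relatively nonexpansive map `F : M ∪ N → M ∪ N` with `F(M) ⊆ M`, `F(N) ⊆ N`
in a Hilbert space: `‖w n - F (w n)‖ → 0`. -/
theorem ishikawa_vonNeumann_norm_sub_image_tendsto_zero
    {X : Type*} [NormedAddCommGroup X] [InnerProductSpace ℝ X] [CompleteSpace X]
    (M N : Set X)
    (hMne : M.Nonempty) (hMb : Bornology.IsBounded M) (hMcl : IsClosed M)
    (hMconv : Convex ℝ M)
    (hNne : N.Nonempty) (hNb : Bornology.IsBounded N) (hNcl : IsClosed N)
    (hNconv : Convex ℝ N)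
    (F : X → X) (hFM : ∀ w ∈ M, F w ∈ M) (hFN : ∀ z ∈ N, F z ∈ N)
    (hFne : ∀ w ∈ M, ∀ z ∈ N, ‖F w - F z‖ ≤ ‖w - z‖)
    (PM PN : X → X)
    (hPM : ∀ x : X, PM x ∈ M ∧ ∀ y ∈ M, ‖x - PM x‖ ≤ ‖x - y‖)
    (hPN : ∀ x : X, PN x ∈ N ∧ ∀ y ∈ N, ‖x - PN x‖ ≤ ‖x - y‖)
    (ε : ℝ) (hε : ε ∈ Set.Ioo (0 : ℝ) (1 / 2))
    (η δ : ℕ → ℝ)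
    (hη : ∀ n, η n ∈ Set.Ioo ε (1 - ε)) (hδ : ∀ n, δ n ∈ Set.Ioo ε (1 - ε))
    (w : ℕ → X) (hw0 : w 0 ∈ M)
    (hw : ∀ n, w (n + 1) = (fun x => PM (PN x))^[n]
      ((1 - η n) • w n + η n • F ((1 - δ n) • w n + δ n • F (w n)))) :
    Tendsto (fun n => ‖w n - F (w n)‖) atTop (𝓝 0) := by
  obtain ⟨p, hp, q, hq, hFq, hpM, hqN⟩ := exists_proximal_fixed_pair M N hMne hMb hMcl hMconv
    hNcl hNconv F hFM hFN hFne PM PN hPM hPN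
  have hP : ∀ u ∈ M, ‖PM (PN u) - q‖ ≤ ‖u - q‖ := fun u hu => by
    refine le_trans ?_ (norm_proj_sub_le hNconv hPN hq hpM hu)
    -- The roles of `M` and `N` are exchanged here, so the gap vector changes sign.
    refine norm_proj_sub_le (A := N) hMconv hPM hp (fun a ha => ?_) (hPN u).1
    rw [← neg_sub q p, inner_neg_left]
    linarith [hqN a ha]
  have hPn : ∀ n : ℕ, ∀ u ∈ M, (fun x => PM (PN x))^[n] u ∈ M ∧
      ‖(fun x => PM (PN x))^[n] u - q‖ ≤ ‖u - q‖ := by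
    intro n
    induction n with
    | zero => exact fun u hu => ⟨hu, le_rfl⟩
    | succ k ih =>
      intro u hu
      rw [Function.iterate_succ_apply]
      obtain ⟨h1, h2⟩ := ih (PM (PN u)) (hPM _).1
      exact ⟨h1, h2.trans (hP u hu)⟩
  have hcomb : ∀ a ∈ M, ∀ b ∈ M, ∀ t ∈ Set.Ioo ε (1 - ε), (1 - t) • a + t • b ∈ M :=
    fun a ha b hb t ht =>
      hMconv ha hb (by linarith [ht.2, hε.1]) (by linarith [ht.1, hε.1]) (by ring)
  have hzM : ∀ u ∈ M, ∀ n, (1 - η n) • u + η n • F ((1 - δ n) • u + δ n • F u) ∈ M :=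
    fun u hu n => hcomb u hu _ (hFM _ (hcomb u hu _ (hFM u hu) _ (hδ n))) _ (hη n)
  have hwM : ∀ n, w n ∈ M := by
    intro n
    induction n with
    | zero => exact hw0
    | succ k ih => rw [hw k]; exact (hPn k _ (hzM _ ih k)).1
  have hstep : ∀ n, ε ^ 3 * ‖w n - F (w n)‖ ^ 2 ≤ ‖w n - q‖ ^ 2 - ‖w (n + 1) - q‖ ^ 2 := by
    intro n
    have hε0 := hε.1
    obtain ⟨hη1, hη2⟩ := hη n
    obtain ⟨hδ1, hδ2⟩ := hδ n
    have hF : ∀ a ∈ M, ‖F a - q‖ ^ 2 ≤ ‖a - q‖ ^ 2 := fun a ha => by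
      have := hFne a ha q hq
      rw [hFq] at this
      exact pow_le_pow_left₀ (norm_nonneg _) this 2
    have h1 := pow_le_pow_left₀ (norm_nonneg _) (hPn n _ (hzM _ (hwM n) n)).2 2
    rw [← hw n, norm_convex_comb_sub_sq] at h1
    have h2 := hF _ (hcomb _ (hwM n) _ (hFM _ (hwM n)) _ (hδ n))
    rw [norm_convex_comb_sub_sq (w n) (F (w n))] at h2
    have h3 := hF _ (hwM n)
    set z := (1 - δ n) • w n + δ n • F (w n)
    have h4 : 0 ≤ η n * (1 - η n) * ‖w n - F z‖ ^ 2 := by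
      have : 0 ≤ 1 - η n := by linarith
      have : 0 ≤ η n := by linarith
      positivity
    have h5 : δ n * ‖F (w n) - q‖ ^ 2 ≤ δ n * ‖w n - q‖ ^ 2 :=
      mul_le_mul_of_nonneg_left h3 (by linarith)
    have h6 : η n * ‖F z - q‖ ^ 2
        ≤ η n * (‖w n - q‖ ^ 2 - δ n * (1 - δ n) * ‖w n - F (w n)‖ ^ 2) :=
      mul_le_mul_of_nonneg_left (by linarith) (by linarith)
    have h7 : ε ^ 3 ≤ η n * (δ n * (1 - δ n)) := by
      have : ε ^ 3 = ε * (ε * ε) := by ring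
      rw [this]
      have h9 : ε ≤ 1 - δ n := by linarith
      have h8 : ε * ε ≤ δ n * (1 - δ n) :=
        mul_le_mul hδ1.le h9 hε0.le (by linarith)
      exact mul_le_mul hη1.le h8 (by positivity) (by linarith)
    have h8 := mul_le_mul_of_nonneg_right h7 (sq_nonneg ‖w n - F (w n)‖)
    linarith
  have hε3 : 0 < ε ^ 3 := pow_pos hε.1 3
  have hanti : Antitone fun n => ‖w n - q‖ ^ 2 := antitone_nat_of_succ_le fun n => by
    have : 0 ≤ ε ^ 3 * ‖w n - F (w n)‖ ^ 2 := by positivity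
    linarith [hstep n]
  have hlim := tendsto_atTop_ciInf hanti ⟨0, by rintro _ ⟨n, rfl⟩; positivity⟩
  have hdiff := (hlim.sub (hlim.comp (tendsto_add_atTop_nat 1))).div_const (ε ^ 3)
  rw [sub_self, zero_div] at hdiff
  have hsq : Tendsto (fun n => ‖w n - F (w n)‖ ^ 2) atTop (𝓝 0) := by
    refine squeeze_zero (fun n => by positivity) (fun n => ?_) hdiff
    rw [le_div_iff₀ hε3]
    have := hstep n
    simp only [Function.comp]
    linarith
  have := hsq.sqrt
  simpa using this
end

section
/- Let M and N be nonempty bounded closed convex subsets of a Hilbert space X and let F : M ∪ N → M ∪ N satisfy (i) F(M) ⊆ M and F(N) ⊆ N, and (ii) ‖Fw − Fz‖ ≤ ‖w − z‖ for all w ∈ M, z ∈ N. Fix ε ∈ (0, 1/2) and sequences η_n, δ_n ∈ (ε, 1−ε). Let w_0 ∈ M and define w_{n+1} = P^n((1−η_n) w_n + η_n F z_n), where z_n = (1−δ_n) w_n + δ_n F w_n and P = P_M ∘ P_N. If F(M) is contained in a compact set and ‖w_n − F z_n‖ → 0, then {w_n} converges to a fixed point of F. -/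
open Filter Topology

/-!
The proof rests on best proximity pairs: `(b, q) ∈ M × N` with `P_N b = q` and `P_M q = b`. Put
`v = q - b`. The variational inequalities of the two projections say that `⟪m - b, v⟫ ≤ 0` on `M`
and `0 ≤ ⟪y - q, v⟫` on `N`. They give `‖m - b‖² + ‖v‖² ≤ ‖m - q‖²` for `m ∈ M`
(`sq_add_sq_le_of_pair`), and, combined with relative nonexpansiveness, `F q - F b = v`, so that
`‖F m - F b‖² ≤ ‖m - q‖² - ‖v‖²` (`map_dist_sq_le_of_pair`). Hence `F` is continuous at `b` along
`M`, although it need not be continuous elsewhere.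

* A cluster point which belongs to such a pair: the points `F (z n)` lie in a compact set and
  `w n - F (z n) → 0`, so `w (n + 1) = P^n (u n)` clusters at some `b`, along indices for which
  `u n → a` as well. Since `P` is nonexpansive, `P^n a → b` along these indices; alternating
  projections are asymptotically regular (`altProj_tendsto`), hence `P b = b`.
* This `b` is fixed by `F`: passing to the limit in
  `‖F (z n) - F b‖² ≤ ‖z n - q‖² - ‖v‖²` gives `‖b - F b‖ ≤ (1 - ε) ‖b - F b‖`.
* The whole sequence converges: `F q = q`, and `P` does not increase the distance to `q` on `M`
  (`altProj_dist_le_of_pair`), so `‖w n - q‖` is antitone. Its limit is `‖b - q‖ = ‖v‖`, by looking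
  at the subsequence, and then `‖w n - b‖² ≤ ‖w n - q‖² - ‖v‖² → 0`.
-/

section AlternatingProjections

variable {X : Type*} [NormedAddCommGroup X] [InnerProductSpace ℝ X]

/-- The variational inequality characterising a nearest point of a convex set. -/
lemma inner_le_zero_of_nearest {M : Set X} (hM : Convex ℝ M) {x p : X} (hp : p ∈ M)
    (hmin : ∀ y ∈ M, ‖x - p‖ ≤ ‖x - y‖) : ∀ y ∈ M, inner ℝ (x - p) (y - p) ≤ 0 := by
  refine (norm_eq_iInf_iff_real_inner_le_zero hM hp).1 ?_
  have : Nonempty M := ⟨⟨p, hp⟩⟩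
  refine le_antisymm (le_ciInf fun y => hmin y y.2) ?_
  exact ciInf_le (f := fun y : M => ‖x - y‖) ⟨0, by rintro _ ⟨y, rfl⟩; positivity⟩ ⟨p, hp⟩

lemma nearest_nonexpansive {M : Set X} (hM : Convex ℝ M) {Q : X → X}
    (hQ : ∀ x : X, Q x ∈ M ∧ ∀ y ∈ M, ‖x - Q x‖ ≤ ‖x - y‖) (x y : X) :
    ‖Q x - Q y‖ ≤ ‖x - y‖ := by
  have h1 := inner_le_zero_of_nearest hM (hQ x).1 (hQ x).2 _ (hQ y).1
  have h2 := inner_le_zero_of_nearest hM (hQ y).1 (hQ y).2 _ (hQ x).1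
  have h3 : ‖Q x - Q y‖ * ‖Q x - Q y‖ ≤ inner ℝ (x - y) (Q x - Q y) := by
    rw [← real_inner_self_eq_norm_mul_norm]
    simp only [inner_sub_left, inner_sub_right] at *
    linarith
  have h4 := h3.trans (real_inner_le_norm _ _)
  by_contra! h
  nlinarith [norm_nonneg (x - y)]

/-- Asymptotic regularity of alternating projections. It needs no best proximity pair: the
squared steps are bounded by the decrements of the squared distances to `N`. -/
lemma altProj_tendsto {M N : Set X} (hM : Convex ℝ M) {PM PN : X → X}
    (hPM : ∀ x : X, PM x ∈ M ∧ ∀ y ∈ M, ‖x - PM x‖ ≤ ‖x - y‖)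
    (hPN : ∀ x : X, PN x ∈ N ∧ ∀ y ∈ N, ‖x - PN x‖ ≤ ‖x - y‖) (x : ℕ → X)
    (hx0 : x 0 ∈ M) (hx : ∀ n, x (n + 1) = PM (PN (x n))) :
    Tendsto (fun n => ‖x (n + 1) - x n‖) atTop (𝓝 0) := by
  have hxM : ∀ n, x n ∈ M := by
    rintro (_ | n)
    · exact hx0
    · rw [hx]; exact (hPM _).1
  have key : ∀ n, ‖x (n + 1) - x n‖ ^ 2
      ≤ ‖x n - PN (x n)‖ ^ 2 - ‖x (n + 1) - PN (x (n + 1))‖ ^ 2 := by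
    intro n
    have h1 := inner_le_zero_of_nearest hM (hPM (PN (x n))).1 (hPM (PN (x n))).2 _ (hxM n)
    rw [← hx] at h1
    have h2 := (hPN (x (n + 1))).2 _ (hPN (x n)).1
    have h3 : ‖x (n + 1) - PN (x (n + 1))‖ ^ 2 ≤ ‖x (n + 1) - PN (x n)‖ ^ 2 := by gcongr
    have h4 : ‖x n - PN (x n)‖ ^ 2 = ‖x (n + 1) - PN (x n)‖ ^ 2 + ‖x (n + 1) - x n‖ ^ 2
        - 2 * inner ℝ (PN (x n) - x (n + 1)) (x n - x (n + 1)) := by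
      have e : x n - PN (x n) = (x n - x (n + 1)) - (PN (x n) - x (n + 1)) := by abel
      rw [e, norm_sub_sq_real, real_inner_comm, norm_sub_rev (x n), norm_sub_rev (PN (x n))]
      ring
    linarith
  have hanti : Antitone fun n => ‖x n - PN (x n)‖ ^ 2 :=
    antitone_nat_of_succ_le fun n => by
      have := key n
      have := sq_nonneg ‖x (n + 1) - x n‖
      linarith
  have hlim := tendsto_atTop_ciInf hanti ⟨0, by rintro _ ⟨n, rfl⟩; positivity⟩
  have hsq : Tendsto (fun n => ‖x (n + 1) - x n‖ ^ 2) atTop (𝓝 0) := by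
    refine squeeze_zero (fun n => by positivity) key ?_
    simpa using hlim.sub (hlim.comp (tendsto_add_atTop_nat 1))
  have := hsq.sqrt
  simpa using this

/-- The hypothesis `hb` is the variational inequality for `b` as the nearest point of `M` to `q`. -/
lemma sq_add_sq_le_of_pair {M : Set X} {b q : X}
    (hb : ∀ m ∈ M, inner ℝ (q - b) (m - b) ≤ 0) {m : X} (hm : m ∈ M) :
    ‖m - b‖ ^ 2 + ‖q - b‖ ^ 2 ≤ ‖m - q‖ ^ 2 := by
  have e : m - q = (m - b) - (q - b) := by abel
  rw [e, norm_sub_sq_real (m - b) (q - b), real_inner_comm]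
  linarith [hb m hm]

/-- On `M`, the alternating projection does not increase the distance to the `N`-component `q` of
a best proximity pair `(b, q)`. Nonexpansiveness of the projections only gives this for the
distance to `b`. -/
lemma altProj_dist_le_of_pair {M N : Set X} (hM : Convex ℝ M) (hN : Convex ℝ N) {PM PN : X → X}
    (hPM : ∀ x : X, PM x ∈ M ∧ ∀ y ∈ M, ‖x - PM x‖ ≤ ‖x - y‖)
    (hPN : ∀ x : X, PN x ∈ N ∧ ∀ y ∈ N, ‖x - PN x‖ ≤ ‖x - y‖) {b q : X} (hbM : b ∈ M)
    (hq : PN b = q) (hb : ∀ m ∈ M, inner ℝ (q - b) (m - b) ≤ 0) {x : X} (hx : x ∈ M) :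
    ‖PM (PN x) - q‖ ≤ ‖x - q‖ := by
  have h1 := inner_le_zero_of_nearest hM (hPM (PN x)).1 (hPM (PN x)).2 _ hbM
  have h2 : ‖PN x - q‖ ≤ ‖x - b‖ := hq ▸ nearest_nonexpansive hN hPN x b
  have h3 := sq_add_sq_le_of_pair hb hx
  have h5 : ‖PN x - q‖ ^ 2 ≤ ‖x - b‖ ^ 2 := by gcongr
  -- With `p = PM (PN x) - b` and `r = PN x - q`, the variational inequality at `PM (PN x)` reads
  -- `‖p‖² - ⟪v, p⟫ ≤ ⟪r, p⟫`, whence `‖p‖² - 2⟪v, p⟫ ≤ 2⟪r, p⟫ - ‖p‖² ≤ ‖r‖²`.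
  have h4 : ‖PM (PN x) - q‖ ^ 2 ≤ ‖PN x - q‖ ^ 2 + ‖q - b‖ ^ 2 := by
    have h6 := sq_nonneg ‖(PM (PN x) - b) - (PN x - q)‖
    have e1 : PM (PN x) - q = (PM (PN x) - b) - (q - b) := by abel
    have e2 : PN x - PM (PN x) = (PN x - q) + (q - b) - (PM (PN x) - b) := by abel
    have e3 : b - PM (PN x) = -(PM (PN x) - b) := by abel
    rw [e2, e3] at h1
    rw [norm_sub_sq_real] at h6
    rw [e1, norm_sub_sq_real]
    generalize PM (PN x) - b = p at *
    generalize PN x - q = r at *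
    generalize q - b = v at *
    simp only [inner_neg_right, inner_sub_left, inner_add_left, real_inner_self_eq_norm_sq] at h1
    rw [real_inner_comm] at h6
    rw [real_inner_comm p v] at h1
    linarith
  exact le_of_sq_le_sq (by linarith) (norm_nonneg _)

/-- A relatively nonexpansive map carries a best proximity pair to a translate of it. -/
lemma map_pair_sub {M N : Set X} {F : X → X} (hFM : ∀ w ∈ M, F w ∈ M) (hFN : ∀ z ∈ N, F z ∈ N)
    (hFne : ∀ w ∈ M, ∀ z ∈ N, ‖F w - F z‖ ≤ ‖w - z‖) {b q : X} (hbM : b ∈ M) (hqN : q ∈ N)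
    (hb : ∀ m ∈ M, inner ℝ (q - b) (m - b) ≤ 0)
    (hq : ∀ y ∈ N, 0 ≤ inner ℝ (q - b) (y - q)) :
    F q - F b = q - b ∧ inner ℝ (q - b) (F b - b) = 0 := by
  have h1 := hb _ (hFM _ hbM)
  have h2 := hq _ (hFN _ hqN)
  have h3 : ‖F q - F b‖ ≤ ‖q - b‖ := by
    rw [norm_sub_rev, norm_sub_rev q]; exact hFne _ hbM _ hqN
  have h4 : ‖F q - F b‖ ^ 2 ≤ ‖q - b‖ ^ 2 := by gcongr
  have h5 : inner ℝ (q - b) (F q - F b) = inner ℝ (q - b) (F q - q) - inner ℝ (q - b) (F b - b)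
      + ‖q - b‖ ^ 2 := by
    rw [← real_inner_self_eq_norm_sq, ← inner_sub_right, ← inner_add_right]
    congr 1; abel
  have h6 := norm_sub_sq_real (F q - F b) (q - b)
  rw [real_inner_comm] at h6
  have h7 : F q - F b = q - b := by
    rw [← sub_eq_zero, ← norm_eq_zero]
    have := sq_nonneg ‖F q - F b - (q - b)‖
    exact pow_eq_zero_iff two_ne_zero |>.1 (by linarith)
  refine ⟨h7, ?_⟩
  rw [h7, real_inner_self_eq_norm_sq] at h5
  linarith

/-- Continuity of `F` at `b` along `M`, in quantitative form. The right-hand side is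
`‖m - q‖ ^ 2 - ‖q - b‖ ^ 2`. -/
lemma map_dist_sq_le_of_pair {M N : Set X} {F : X → X} (hFM : ∀ w ∈ M, F w ∈ M)
    (hFN : ∀ z ∈ N, F z ∈ N)
    (hFne : ∀ w ∈ M, ∀ z ∈ N, ‖F w - F z‖ ≤ ‖w - z‖) {b q : X} (hbM : b ∈ M) (hqN : q ∈ N)
    (hb : ∀ m ∈ M, inner ℝ (q - b) (m - b) ≤ 0)
    (hq : ∀ y ∈ N, 0 ≤ inner ℝ (q - b) (y - q)) {m : X} (hm : m ∈ M) :
    ‖F m - F b‖ ^ 2 ≤ ‖m - b‖ ^ 2 - 2 * inner ℝ (q - b) (m - b) := by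
  obtain ⟨h1, h2⟩ := map_pair_sub hFM hFN hFne hbM hqN hb hq
  have h3 : ‖F m - F q‖ ^ 2 ≤ ‖m - q‖ ^ 2 := by
    gcongr
    exact hFne _ hm _ hqN
  have h4 : ∀ y ∈ M, inner ℝ (F q - F b) (y - F b) ≤ 0 := by
    intro y hy
    have e : y - F b = (y - b) - (F b - b) := by abel
    rw [h1, e, inner_sub_right, h2]
    linarith [hb y hy]
  have h5 := sq_add_sq_le_of_pair h4 (hFM _ hm)
  have e : m - q = (m - b) - (q - b) := by abel
  rw [e, norm_sub_sq_real (m - b) (q - b), real_inner_comm] at h3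
  rw [h1] at h5
  linarith

end AlternatingProjections

/-- Theorem 2.5 (second part): modified Ishikawa iteration with von Neumann projections
for a relatively nonexpansive map `F : M ∪ N → M ∪ N` with `F(M) ⊆ M`, `F(N) ⊆ N` in a
Hilbert space: if `F '' M` lies in a compact set and `‖w n - F (z n)‖ → 0`, then the
iterates converge to a fixed point of `F`. -/
theorem ishikawa_vonNeumann_tendsto_fixedPoint
    {X : Type*} [NormedAddCommGroup X] [InnerProductSpace ℝ X] [CompleteSpace X]
    (M N : Set X)
    (hMne : M.Nonempty) (hMb : Bornology.IsBounded M) (hMcl : IsClosed M)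
    (hMconv : Convex ℝ M)
    (hNne : N.Nonempty) (hNb : Bornology.IsBounded N) (hNcl : IsClosed N)
    (hNconv : Convex ℝ N)
    (F : X → X) (hFM : ∀ w ∈ M, F w ∈ M) (hFN : ∀ z ∈ N, F z ∈ N)
    (hFne : ∀ w ∈ M, ∀ z ∈ N, ‖F w - F z‖ ≤ ‖w - z‖)
    (PM PN : X → X)
    (hPM : ∀ x : X, PM x ∈ M ∧ ∀ y ∈ M, ‖x - PM x‖ ≤ ‖x - y‖)
    (hPN : ∀ x : X, PN x ∈ N ∧ ∀ y ∈ N, ‖x - PN x‖ ≤ ‖x - y‖)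
    (ε : ℝ) (hε : ε ∈ Set.Ioo (0 : ℝ) (1 / 2))
    (η δ : ℕ → ℝ)
    (hη : ∀ n, η n ∈ Set.Ioo ε (1 - ε)) (hδ : ∀ n, δ n ∈ Set.Ioo ε (1 - ε))
    (w z : ℕ → X) (hw0 : w 0 ∈ M)
    (hz : ∀ n, z n = (1 - δ n) • w n + δ n • F (w n))
    (hw : ∀ n, w (n + 1) = (fun x => PM (PN x))^[n]
      ((1 - η n) • w n + η n • F (z n)))
    (hcpt : ∃ C : Set X, IsCompact C ∧ F '' M ⊆ C)
    (hwz : Tendsto (fun n => ‖w n - F (z n)‖) atTop (𝓝 0)) :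
    ∃ a, F a = a ∧ Tendsto w atTop (𝓝 a) := by
  obtain ⟨C, hC, hFC⟩ := hcpt
  have hε0 : 0 < ε := hε.1
  have hη0 : ∀ n, 0 ≤ η n := fun n => by linarith [(hη n).1]
  have hη1 : ∀ n, 0 ≤ 1 - η n := fun n => by linarith [(hη n).2]
  have hδ0 : ∀ n, 0 ≤ δ n := fun n => by linarith [(hδ n).1]
  have hδ1 : ∀ n, 0 ≤ 1 - δ n := fun n => by linarith [(hδ n).2]
  set P : X → X := fun x => PM (PN x) with hP
  set u : ℕ → X := fun n => (1 - η n) • w n + η n • F (z n) with hu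
  have hPit : ∀ n : ℕ, ∀ x ∈ M, P^[n] x ∈ M := fun n x hx =>
    (show Set.MapsTo P M M from fun _ _ => (hPM _).1).iterate n hx
  have hPne : ∀ x y, ‖P x - P y‖ ≤ ‖x - y‖ := fun x y =>
    (nearest_nonexpansive hMconv hPM _ _).trans (nearest_nonexpansive hNconv hPN _ _)
  have hPitne : ∀ (n : ℕ) (x y : X), ‖P^[n] x - P^[n] y‖ ≤ ‖x - y‖ := by
    intro n
    induction n with
    | zero => intro x y; exact le_rfl
    | succ k ih =>
      intro x y
      rw [Function.iterate_succ_apply', Function.iterate_succ_apply']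
      exact (hPne _ _).trans (ih x y)
  have hzM' : ∀ n, w n ∈ M → z n ∈ M := fun n h => by
    rw [hz]; exact hMconv h (hFM _ h) (hδ1 n) (hδ0 n) (by ring)
  have huM' : ∀ n, w n ∈ M → u n ∈ M := fun n h =>
    hMconv h (hFM _ (hzM' n h)) (hη1 n) (hη0 n) (by ring)
  have hwM : ∀ n, w n ∈ M := by
    intro n
    induction n with
    | zero => exact hw0
    | succ k ih => rw [hw]; exact hPit _ _ (huM' k ih)
  have hzM := fun n => hzM' n (hwM n)
  have huM := fun n => huM' n (hwM n)
  have hFzC : ∀ n, F (z n) ∈ C := fun n => hFC ⟨_, hzM n, rfl⟩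
  have hwz0 : Tendsto (fun n => w n - F (z n)) atTop (𝓝 0) :=
    tendsto_zero_iff_norm_tendsto_zero.2 hwz
  have huw0 : Tendsto (fun n => u n - w n) atTop (𝓝 0) := by
    refine squeeze_zero_norm (fun n => ?_) hwz
    have e : u n - w n = -(η n • (w n - F (z n))) := by
      simp only [hu]; module
    rw [e, norm_neg, norm_smul, Real.norm_of_nonneg (hη0 n)]
    exact mul_le_of_le_one_left (norm_nonneg _) (by linarith [hη1 n])
  -- A cluster point `a` of `w` along `φ`, then a cluster point `b` of the shifted subsequence.
  obtain ⟨a, -, φ, hφ, hφa⟩ := hC.tendsto_subseq hFzC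
  obtain ⟨b, -, ψ, hψ, hψb⟩ := hC.tendsto_subseq (fun k => hFzC (φ k + 1))
  have hφt := hφ.tendsto_atTop
  have hψt := hψ.tendsto_atTop
  have hwa : Tendsto (fun k => w (φ k)) atTop (𝓝 a) := by
    simpa using (hwz0.comp hφt).add hφa
  have hua : Tendsto (fun k => u (φ k)) atTop (𝓝 a) := by
    simpa using (huw0.comp hφt).add hwa
  have hs : Tendsto (fun j => φ (ψ j) + 1) atTop atTop :=
    (tendsto_add_atTop_nat 1).comp (hφt.comp hψt)
  have hwb : Tendsto (fun j => w (φ (ψ j) + 1)) atTop (𝓝 b) := by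
    simpa using (hwz0.comp hs).add hψb
  have haM : a ∈ M := hMcl.mem_of_tendsto hwa (Eventually.of_forall fun k => hwM _)
  have hbM : b ∈ M := hMcl.mem_of_tendsto hwb (Eventually.of_forall fun k => hwM _)
  have hPa : Tendsto (fun j => P^[φ (ψ j)] a) atTop (𝓝 b) := by
    have h1 : Tendsto (fun j => w (φ (ψ j) + 1) - P^[φ (ψ j)] a) atTop (𝓝 0) := by
      have h2 : Tendsto (fun j => ‖u (φ (ψ j)) - a‖) atTop (𝓝 0) :=
        tendsto_iff_norm_sub_tendsto_zero.1 (hua.comp hψt)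
      refine squeeze_zero_norm (fun j => ?_) h2
      rw [hw]
      exact hPitne _ _ _
    simpa using hwb.sub h1
  have hPb : P b = b := by
    have hreg := altProj_tendsto hMconv hPM hPN (fun n => P^[n] a) haM
      (fun n => Function.iterate_succ_apply' P n a)
    have h1 := tendsto_zero_iff_norm_tendsto_zero.2 (hreg.comp (hφt.comp hψt))
    have h2 : Tendsto (fun j => P (P^[φ (ψ j)] a)) atTop (𝓝 b) := by
      have := h1.add hPa
      simpa [Function.iterate_succ_apply', -Function.iterate_succ] using this
    have hPc : Continuous P :=
      (LipschitzWith.of_dist_le' (K := 1) fun x y => by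
        simpa [dist_eq_norm] using hPne x y).continuous
    exact tendsto_nhds_unique ((hPc.tendsto b).comp hPa) h2
  obtain ⟨q, hqdef⟩ : ∃ q, PN b = q := ⟨_, rfl⟩
  have hqb : PM q = b := by rw [← hqdef]; exact hPb
  have hqN : q ∈ N := hqdef ▸ (hPN b).1
  have hb : ∀ m ∈ M, inner ℝ (q - b) (m - b) ≤ 0 := by
    have := inner_le_zero_of_nearest hMconv (hPM q).1 (hPM q).2
    rwa [hqb] at this
  have hq : ∀ y ∈ N, 0 ≤ inner ℝ (q - b) (y - q) := by
    intro y hy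
    have := inner_le_zero_of_nearest hNconv (hPN b).1 (hPN b).2 y hy
    rw [hqdef, ← neg_sub q b, inner_neg_left] at this
    linarith
  obtain ⟨hFqb, horth⟩ := map_pair_sub hFM hFN hFne hbM hqN hb hq
  have hFdist := fun m (hm : m ∈ M) => map_dist_sq_le_of_pair hFM hFN hFne hbM hqN hb hq hm
  have hFb : F b = b := by
    have hin : Tendsto (fun j => inner ℝ (q - b) (w (φ (ψ j) + 1) - b)) atTop (𝓝 0) := by
      have := (tendsto_const_nhds (x := q - b)).inner (𝕜 := ℝ) (hwb.sub_const b)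
      simpa using this
    have hnw : Tendsto (fun j => ‖w (φ (ψ j) + 1) - b‖) atTop (𝓝 0) :=
      tendsto_iff_norm_sub_tendsto_zero.1 hwb
    have hFw : Tendsto (fun j => F (w (φ (ψ j) + 1))) atTop (𝓝 (F b)) := by
      have h1 : Tendsto (fun j => ‖F (w (φ (ψ j) + 1)) - F b‖ ^ 2) atTop (𝓝 0) := by
        refine squeeze_zero (fun j => by positivity) (fun j => hFdist _ (hwM _)) ?_
        simpa using (hnw.pow 2).sub (hin.const_mul 2)
      rw [tendsto_iff_norm_sub_tendsto_zero]
      simpa using h1.sqrt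
    have hin2 : Tendsto (fun j => inner ℝ (q - b) (F (w (φ (ψ j) + 1)) - b)) atTop (𝓝 0) := by
      have := (tendsto_const_nhds (x := q - b)).inner (𝕜 := ℝ) (hFw.sub_const b)
      rwa [horth] at this
    have hL : Tendsto (fun j => ‖F (z (φ (ψ j) + 1)) - F b‖ ^ 2) atTop (𝓝 (‖b - F b‖ ^ 2)) :=
      ((hψb.sub_const (F b)).norm).pow 2
    -- A bound for `‖F (z n) - F b‖²` free of `δ n`, which need not converge.
    have hR : Tendsto (fun j => (‖w (φ (ψ j) + 1) - b‖ + (1 - ε) * ‖F (w (φ (ψ j) + 1)) - b‖) ^ 2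
        + 2 * (|inner ℝ (q - b) (w (φ (ψ j) + 1) - b)|
          + |inner ℝ (q - b) (F (w (φ (ψ j) + 1)) - b)|)) atTop
        (𝓝 ((0 + (1 - ε) * ‖F b - b‖) ^ 2 + 2 * (|0| + |0|))) :=
      ((hnw.add ((hFw.sub_const b).norm.const_mul _)).pow 2).add
        ((hin.abs.add hin2.abs).const_mul 2)
    have hle := le_of_tendsto_of_tendsto' hL hR (fun j => by
      generalize φ (ψ j) + 1 = n
      have e : z n - b = (1 - δ n) • (w n - b) + δ n • (F (w n) - b) := by rw [hz]; module
      have h1 : ‖z n - b‖ ≤ ‖w n - b‖ + (1 - ε) * ‖F (w n) - b‖ := by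
        rw [e]
        refine (norm_add_le _ _).trans ?_
        rw [norm_smul, norm_smul, Real.norm_of_nonneg (hδ0 n), Real.norm_of_nonneg (hδ1 n)]
        have h2 := hδ0 n
        have h3 := (hδ n).2.le
        gcongr
        exact mul_le_of_le_one_left (norm_nonneg _) (by linarith)
      have h2 : -(|inner ℝ (q - b) (w n - b)| + |inner ℝ (q - b) (F (w n) - b)|)
          ≤ inner ℝ (q - b) (z n - b) := by
        rw [e, inner_add_right, inner_smul_right, inner_smul_right]
        have h3 := neg_abs_le (inner ℝ (q - b) (w n - b))
        have h4 := neg_abs_le (inner ℝ (q - b) (F (w n) - b))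
        nlinarith [abs_nonneg (inner ℝ (q - b) (w n - b)),
          abs_nonneg (inner ℝ (q - b) (F (w n) - b)), hδ0 n, hδ1 n]
      have h3 := hFdist _ (hzM n)
      have h4 : ‖z n - b‖ ^ 2 ≤ (‖w n - b‖ + (1 - ε) * ‖F (w n) - b‖) ^ 2 := by gcongr
      linarith)
    rw [norm_sub_rev b] at hle
    have h1 : ‖F b - b‖ ≤ (1 - ε) * ‖F b - b‖ :=
      le_of_sq_le_sq (by simpa using hle)
        (mul_nonneg (by linarith [hε.2]) (norm_nonneg _))
    have h2 : ‖F b - b‖ = 0 := le_antisymm (by nlinarith) (norm_nonneg _)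
    exact sub_eq_zero.1 (norm_eq_zero.1 h2)
  refine ⟨b, hFb, ?_⟩
  have hFq : F q = q := by
    rw [hFb] at hFqb
    exact sub_left_injective hFqb
  have hcomb : ∀ (t : ℝ) (x y : X), 0 ≤ t → 0 ≤ 1 - t → ‖y - q‖ ≤ ‖x - q‖ →
      ‖(1 - t) • x + t • y - q‖ ≤ ‖x - q‖ := by
    intro t x y ht ht' hxy
    have e : (1 - t) • x + t • y - q = (1 - t) • (x - q) + t • (y - q) := by module
    rw [e]
    refine (norm_add_le _ _).trans ?_
    rw [norm_smul, norm_smul, Real.norm_of_nonneg ht, Real.norm_of_nonneg ht']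
    nlinarith
  have hFq_le : ∀ m ∈ M, ‖F m - q‖ ≤ ‖m - q‖ := fun m hm => by
    have := hFne m hm q hqN
    rwa [hFq] at this
  have hPit_le : ∀ n : ℕ, ∀ x ∈ M, ‖P^[n] x - q‖ ≤ ‖x - q‖ := by
    intro n x hx
    induction n with
    | zero => exact le_rfl
    | succ k ih =>
      rw [Function.iterate_succ_apply']
      exact (altProj_dist_le_of_pair hMconv hNconv hPM hPN hbM hqdef hb (hPit k x hx)).trans ih
  have hanti : Antitone fun n => ‖w n - q‖ := antitone_nat_of_succ_le fun n => by
    have h1 : ‖z n - q‖ ≤ ‖w n - q‖ := by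
      rw [hz]; exact hcomb _ _ _ (hδ0 n) (hδ1 n) (hFq_le _ (hwM n))
    rw [hw]
    exact (hPit_le n _ (huM n)).trans
      (hcomb _ _ _ (hη0 n) (hη1 n) ((hFq_le _ (hzM n)).trans h1))
  have hlim := tendsto_atTop_ciInf hanti ⟨0, by rintro _ ⟨n, rfl⟩; positivity⟩
  have hval := tendsto_nhds_unique (hlim.comp hs) ((hwb.sub_const q).norm)
  rw [hval] at hlim
  have hsq : Tendsto (fun n => ‖w n - b‖ ^ 2) atTop (𝓝 0) := by
    refine squeeze_zero (fun n => by positivity)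
      (fun n => le_sub_iff_add_le.2 (sq_add_sq_le_of_pair hb (hwM n))) ?_
    have := (hlim.pow 2).sub_const (‖q - b‖ ^ 2)
    rwa [norm_sub_rev b, sub_self] at this
  rw [tendsto_iff_norm_sub_tendsto_zero]
  simpa using hsq.sqrt
end

section
/- Let M and N be nonempty closed bounded convex subsets of a Hilbert space X and let F : M ∪ N → M ∪ N satisfy (i) F(M) ⊆ N and F(N) ⊆ M, and (ii) ‖Fw − Fz‖ ≤ ‖w − z‖ for all w ∈ M, z ∈ N. Suppose F(M) is contained in a compact subset of N. Fix ε ∈ (0, 1/2) and sequences η_n, δ_n ∈ (ε, 1−ε). Then for any w_0 ∈ M_0, the sequence defined by w_{n+1} = (1−η_n) w_n + η_n P_M(F((1−δ_n) w_n + δ_n P_M F w_n)) converges to a point w ∈ M_0 satisfying ‖w − Fw‖ = d(M,N), i.e. a best proximity point of F. -/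
/-!
The idea is to reduce the cyclic map `F` to a nonexpansive self-map of `M₀`.

* In a Hilbert space the pairs `(a, b) ∈ M × N` with `‖a - b‖ = d(M, N)` all have the same
  difference `v` (`sub_eq_of_norm_eq`, by the parallelogram law). Hence `M₀ = M ∩ (N + v)` is closed
  and convex, and on it `P_M ∘ F` is the map `x ↦ F x + v = F (x - v)`, which sends `M₀` to itself.
* Relative nonexpansiveness, applied to the pairs `(x, y - v)` and `(y, x - v)`, bounds
  `‖T x - T y ± v‖` by `‖x - y ± v‖` for `T = P_M ∘ F`. Adding the squares and using the
  parallelogram law shows that `T` is nonexpansive on `M₀`.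
* `T` has relatively compact range, so it has a fixed point `p`: the contractions
  `x ↦ (1 - t) T x + t u` have fixed points, which are approximate fixed points of `T`, and
  approximate fixed points accumulate at fixed points by compactness (`exists_fixed_of_approx`).
* The Ishikawa iteration satisfies `‖w (n+1) - p‖² + ε³ ‖w n - T (w n)‖² ≤ ‖w n - p‖²` for each
  fixed point `p`. Thus `‖w n - T (w n)‖ → 0`, so `w` has a cluster point `q` that is fixed by `T`,
  and since `‖w n - q‖` is decreasing the whole sequence converges to `q`.
-/

open Filter Topology

section IshikawaAux

variable {X : Type*} [NormedAddCommGroup X] [InnerProductSpace ℝ X]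

/-- The element of minimal norm of the convex set `M - N`, if it is attained, is unique. -/
lemma sub_eq_of_norm_eq {M N : Set X} (hM : Convex ℝ M) (hN : Convex ℝ N) {d : ℝ}
    (hd0 : 0 ≤ d) (hd : ∀ a ∈ M, ∀ b ∈ N, d ≤ ‖a - b‖) {a a' b b' : X}
    (ha : a ∈ M) (ha' : a' ∈ M) (hb : b ∈ N) (hb' : b' ∈ N)
    (h : ‖a - b‖ = d) (h' : ‖a' - b'‖ = d) : a - b = a' - b' := by
  have h1 := hd _ (hM ha ha' (by norm_num : (0 : ℝ) ≤ 1 / 2) (by norm_num : (0 : ℝ) ≤ 1 / 2)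
    (by norm_num)) _ (hN hb hb' (by norm_num : (0 : ℝ) ≤ 1 / 2)
    (by norm_num : (0 : ℝ) ≤ 1 / 2) (by norm_num))
  have h2 : ((1 / 2 : ℝ) • a + (1 / 2 : ℝ) • a') - ((1 / 2 : ℝ) • b + (1 / 2 : ℝ) • b')
      = (1 / 2 : ℝ) • ((a - b) + (a' - b')) := by module
  rw [h2, norm_smul, Real.norm_of_nonneg (by norm_num)] at h1
  have h3 := parallelogram_law_with_norm ℝ (a - b) (a' - b')
  rw [h, h'] at h3
  have h4 : ‖(a - b) - (a' - b')‖ = 0 := by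
    have := norm_nonneg ((a - b) - (a' - b'))
    nlinarith
  exact sub_eq_zero.mp (norm_eq_zero.mp h4)

/-- The Hilbert space identity for the distance from `p` to a convex combination. -/
lemma norm_combo_sub_sq (a b p : X) (t : ℝ) :
    ‖(1 - t) • a + t • b - p‖ ^ 2 =
      (1 - t) * ‖a - p‖ ^ 2 + t * ‖b - p‖ ^ 2 - t * (1 - t) * ‖a - b‖ ^ 2 := by
  have e1 : (1 - t) • a + t • b - p = (1 - t) • (a - p) + t • (b - p) := by module
  have e2 : a - b = (a - p) - (b - p) := by abel
  rw [e1, e2, norm_add_sq_real, norm_sub_sq_real (a - p) (b - p), norm_smul, norm_smul,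
    real_inner_smul_left, real_inner_smul_right, mul_pow, mul_pow, Real.norm_eq_abs,
    Real.norm_eq_abs, sq_abs, sq_abs]
  ring

/-- An approximate fixed point sequence of a nonexpansive map with relatively compact range has a
subsequence converging to a fixed point. -/
lemma exists_fixed_of_approx {K C : Set X} (hK : IsClosed K) (hC : IsCompact C) {T : X → X}
    (hTC : ∀ x ∈ K, T x ∈ C) (hTn : ∀ x ∈ K, ∀ y ∈ K, ‖T x - T y‖ ≤ ‖x - y‖)
    {x : ℕ → X} (hx : ∀ n, x n ∈ K) (hlim : Tendsto (fun n => x n - T (x n)) atTop (𝓝 0)) :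
    ∃ q ∈ K, T q = q ∧ ∃ φ : ℕ → ℕ, StrictMono φ ∧ Tendsto (x ∘ φ) atTop (𝓝 q) := by
  obtain ⟨q, -, φ, hφ, hq⟩ := hC.tendsto_subseq (fun n => hTC _ (hx n))
  have hl := hlim.comp hφ.tendsto_atTop
  have hxq : Tendsto (x ∘ φ) atTop (𝓝 q) := by
    simpa [Function.comp_def] using hl.add hq
  have hqK : q ∈ K := hK.mem_of_tendsto hxq (Eventually.of_forall fun n => hx _)
  have hTq : Tendsto (fun n => T (x (φ n))) atTop (𝓝 (T q)) := by
    rw [tendsto_iff_norm_sub_tendsto_zero]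
    exact squeeze_zero (fun _ => norm_nonneg _) (fun n => hTn _ (hx _) _ hqK)
      (tendsto_iff_norm_sub_tendsto_zero.mp hxq)
  exact ⟨q, hqK, tendsto_nhds_unique hTq hq, φ, hφ, hxq⟩

/-- The case of Schauder's theorem for nonexpansive maps, for which Banach's theorem suffices. -/
lemma exists_fixed_of_nonexpansive [CompleteSpace X] {K C : Set X} (hK : IsClosed K)
    (hKc : Convex ℝ K) (hC : IsCompact C) {T : X → X} (hTK : ∀ x ∈ K, T x ∈ K)
    (hTC : ∀ x ∈ K, T x ∈ C) (hTn : ∀ x ∈ K, ∀ y ∈ K, ‖T x - T y‖ ≤ ‖x - y‖)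
    (hne : K.Nonempty) : ∃ p ∈ K, T p = p := by
  obtain ⟨u, hu⟩ := hne
  have key : ∀ n : ℕ, ∃ x ∈ K,
      (1 - 1 / ((n : ℝ) + 2)) • T x + (1 / ((n : ℝ) + 2)) • u = x := by
    intro n
    set t : ℝ := 1 / ((n : ℝ) + 2) with ht
    have ht0 : 0 < t := by positivity
    have ht1 : t < 1 := by
      rw [ht, div_lt_one (by positivity)]
      have : (0 : ℝ) ≤ n := n.cast_nonneg
      linarith
    have hmaps : Set.MapsTo (fun x => (1 - t) • T x + t • u) K K := fun x hx =>
      hKc (hTK x hx) hu (by linarith) ht0.le (by ring)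
    have hcon : ContractingWith (1 - t).toNNReal (hmaps.restrict _ K K) := by
      refine ⟨by rw [Real.toNNReal_lt_one]; linarith, LipschitzWith.of_dist_le_mul ?_⟩
      rintro ⟨x, hx⟩ ⟨y, hy⟩
      rw [Real.coe_toNNReal _ (by linarith)]
      change dist ((1 - t) • T x + t • u) ((1 - t) • T y + t • u) ≤ (1 - t) * dist x y
      rw [dist_add_right, dist_smul₀, Real.norm_of_nonneg (by linarith), dist_eq_norm,
        dist_eq_norm]
      exact mul_le_mul_of_nonneg_left (hTn x hx y hy) (by linarith)
    obtain ⟨x, hxK, hx, -⟩ := hcon.exists_fixedPoint' hK.isComplete hmaps hu (edist_ne_top _ _)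
    exact ⟨x, hxK, hx⟩
  choose x hxK hx using key
  have hlim : Tendsto (fun n => x n - T (x n)) atTop (𝓝 0) := by
    obtain ⟨B, hB⟩ := hC.isBounded.exists_norm_le
    have h0 : Tendsto (fun n : ℕ => 1 / ((n : ℝ) + 2)) atTop (𝓝 0) := by
      have := (tendsto_one_div_add_atTop_nhds_zero_nat (𝕜 := ℝ)).comp (tendsto_add_atTop_nat 1)
      refine this.congr fun n => ?_
      simp only [Function.comp_apply]
      push_cast
      ring
    have h1 : Tendsto (fun n : ℕ => 1 / ((n : ℝ) + 2) * (‖u‖ + B)) atTop (𝓝 0) := by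
      simpa using h0.mul_const (‖u‖ + B)
    refine squeeze_zero_norm (fun n => ?_) h1
    have e : x n - T (x n) = (1 / ((n : ℝ) + 2)) • (u - T (x n)) := by
      nth_rewrite 1 [← hx n]
      module
    rw [e, norm_smul, Real.norm_of_nonneg (by positivity)]
    exact mul_le_mul_of_nonneg_left
      ((norm_sub_le _ _).trans (by linarith [hB _ (hTC _ (hxK n))])) (by positivity)
  obtain ⟨q, hqK, hq, -⟩ := exists_fixed_of_approx hK hC hTC hTn hxK hlim
  exact ⟨q, hqK, hq⟩

/-- Strong convergence of the Ishikawa iteration of a nonexpansive self-map with relatively compact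
range. -/
lemma ishikawa_tendsto_fixed [CompleteSpace X] {K C : Set X} (hK : IsClosed K)
    (hKc : Convex ℝ K) (hC : IsCompact C) {T : X → X} (hTK : ∀ x ∈ K, T x ∈ K)
    (hTC : ∀ x ∈ K, T x ∈ C) (hTn : ∀ x ∈ K, ∀ y ∈ K, ‖T x - T y‖ ≤ ‖x - y‖)
    {ε : ℝ} (hε : 0 < ε) {η δ : ℕ → ℝ}
    (hη : ∀ n, η n ∈ Set.Ioo ε (1 - ε)) (hδ : ∀ n, δ n ∈ Set.Ioo ε (1 - ε))
    {w : ℕ → X} (hw0 : w 0 ∈ K)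
    (hw : ∀ n, w (n + 1) =
      (1 - η n) • w n + η n • T ((1 - δ n) • w n + δ n • T (w n))) :
    ∃ q ∈ K, T q = q ∧ Tendsto w atTop (𝓝 q) := by
  have hy : ∀ n, w n ∈ K → (1 - δ n) • w n + δ n • T (w n) ∈ K := fun n h =>
    hKc h (hTK _ h) (by linarith [(hδ n).2]) (by linarith [(hδ n).1]) (by ring)
  have hwK : ∀ n, w n ∈ K := by
    intro n
    induction n with
    | zero => exact hw0
    | succ n ih =>
      rw [hw]
      exact hKc ih (hTK _ (hy n ih)) (by linarith [(hη n).2]) (by linarith [(hη n).1]) (by ring)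
  have fejer : ∀ p ∈ K, T p = p → ∀ n,
      ‖w (n + 1) - p‖ ^ 2 + ε ^ 3 * ‖w n - T (w n)‖ ^ 2 ≤ ‖w n - p‖ ^ 2 := by
    intro p hp hTp n
    obtain ⟨e1, e2⟩ := hη n
    obtain ⟨d1, d2⟩ := hδ n
    have i1 : ‖T (w n) - p‖ ^ 2 ≤ ‖w n - p‖ ^ 2 := by
      have := hTn _ (hwK n) _ hp
      rw [hTp] at this
      gcongr
    have i2 : ‖T ((1 - δ n) • w n + δ n • T (w n)) - p‖ ^ 2
        ≤ ‖(1 - δ n) • w n + δ n • T (w n) - p‖ ^ 2 := by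
      have := hTn _ (hy n (hwK n)) _ hp
      rw [hTp] at this
      gcongr
    rw [norm_combo_sub_sq] at i2
    rw [hw n, norm_combo_sub_sq]
    have i3 : 0 ≤ η n * (1 - η n) *
        ‖w n - T ((1 - δ n) • w n + δ n • T (w n))‖ ^ 2 :=
      mul_nonneg (mul_nonneg (by linarith) (by linarith)) (sq_nonneg _)
    have i4 : ε ^ 3 ≤ η n * (δ n * (1 - δ n)) := by
      calc ε ^ 3 = ε * (ε * ε) := by ring
        _ ≤ η n * (δ n * (1 - δ n)) := by
          have : ε ≤ 1 - δ n := by linarith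
          have : 0 ≤ δ n := by linarith
          have : 0 ≤ η n := by linarith
          gcongr
    have i5 := mul_le_mul_of_nonneg_right i4 (sq_nonneg ‖w n - T (w n)‖)
    have i6 := mul_le_mul_of_nonneg_left i1 (show 0 ≤ δ n by linarith)
    have i7 := mul_le_mul_of_nonneg_left
      (show ‖T ((1 - δ n) • w n + δ n • T (w n)) - p‖ ^ 2
        ≤ ‖w n - p‖ ^ 2 - δ n * (1 - δ n) * ‖w n - T (w n)‖ ^ 2 by linarith)
      (show 0 ≤ η n by linarith)
    nlinarith
  have anti : ∀ p ∈ K, T p = p → Antitone fun n => ‖w n - p‖ ^ 2 := fun p hp hTp =>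
    antitone_nat_of_succ_le fun n => by
      have := fejer p hp hTp n
      have : 0 ≤ ε ^ 3 * ‖w n - T (w n)‖ ^ 2 := by positivity
      linarith
  obtain ⟨p, hp, hTp⟩ := exists_fixed_of_nonexpansive hK hKc hC hTK hTC hTn ⟨_, hw0⟩
  have hlim : Tendsto (fun n => w n - T (w n)) atTop (𝓝 0) := by
    have hL := tendsto_atTop_ciInf (anti p hp hTp) ⟨0, by rintro _ ⟨n, rfl⟩; positivity⟩
    have hdiff := (hL.sub (hL.comp (tendsto_add_atTop_nat 1))).const_mul (ε ^ 3)⁻¹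
    rw [sub_self, mul_zero] at hdiff
    have hsq : Tendsto (fun n => ‖w n - T (w n)‖ ^ 2) atTop (𝓝 0) := by
      refine squeeze_zero (fun n => sq_nonneg _) (fun n => ?_) hdiff
      rw [← div_eq_inv_mul, le_div_iff₀ (by positivity)]
      have := fejer p hp hTp n
      simp only [Function.comp_apply]
      linarith
    rw [tendsto_zero_iff_norm_tendsto_zero]
    have := hsq.sqrt
    simpa [Real.sqrt_sq] using this
  obtain ⟨q, hq, hTq, φ, hφ, hconv⟩ := exists_fixed_of_approx hK hC hTC hTn hwK hlim
  refine ⟨q, hq, hTq, ?_⟩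
  have hsub : Tendsto (fun n => ‖w (φ n) - q‖ ^ 2) atTop (𝓝 0) := by
    simpa using (tendsto_iff_norm_sub_tendsto_zero.mp hconv).pow 2
  -- A decreasing sequence has the limit of any of its subsequences.
  have hall : Tendsto (fun n => ‖w n - q‖ ^ 2) atTop (𝓝 0) :=
    (tendsto_iff_tendsto_subseq_of_antitone (anti q hq hTq) hφ.tendsto_atTop).mpr hsub
  rw [tendsto_iff_norm_sub_tendsto_zero]
  simpa [Real.sqrt_sq] using hall.sqrt

end IshikawaAux

/-- Corollary 2.7: for a cyclic relatively nonexpansive map `F` (`F(M) ⊆ N`,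
`F(N) ⊆ M`) on bounded closed convex subsets of a Hilbert space, with `F '' M`
contained in a compact subset of `N`, the Ishikawa-type iteration with the
projected map `P_M ∘ F`, started at `w 0 ∈ M₀`, converges to a best proximity
point `x ∈ M₀` of `F`, i.e. `‖x - F x‖ = d(M,N)`. -/
theorem ishikawa_proj_tendsto_bestProximityPoint_of_mem_M0
    {X : Type*} [NormedAddCommGroup X] [InnerProductSpace ℝ X] [CompleteSpace X]
    (M N : Set X)
    (hMne : M.Nonempty) (hMb : Bornology.IsBounded M) (hMcl : IsClosed M)
    (hMconv : Convex ℝ M)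
    (hNne : N.Nonempty) (hNb : Bornology.IsBounded N) (hNcl : IsClosed N)
    (hNconv : Convex ℝ N)
    (F : X → X) (hFM : ∀ w ∈ M, F w ∈ N) (hFN : ∀ z ∈ N, F z ∈ M)
    (hFne : ∀ w ∈ M, ∀ z ∈ N, ‖F w - F z‖ ≤ ‖w - z‖)
    (hcpt : ∃ C : Set X, C ⊆ N ∧ IsCompact C ∧ F '' M ⊆ C)
    (PM : X → X)
    (hPM : ∀ x : X, PM x ∈ M ∧ ∀ y ∈ M, ‖x - PM x‖ ≤ ‖x - y‖)
    (ε : ℝ) (hε : ε ∈ Set.Ioo (0 : ℝ) (1 / 2))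
    (η δ : ℕ → ℝ)
    (hη : ∀ n, η n ∈ Set.Ioo ε (1 - ε)) (hδ : ∀ n, δ n ∈ Set.Ioo ε (1 - ε))
    (w : ℕ → X)
    (hw0 : w 0 ∈
      {x ∈ M | ∃ z ∈ N, ‖x - z‖ = sInf {r : ℝ | ∃ a ∈ M, ∃ b ∈ N, r = ‖a - b‖}})
    (hw : ∀ n, w (n + 1) =
      (1 - η n) • w n + η n • PM (F ((1 - δ n) • w n + δ n • PM (F (w n))))) :
    ∃ x ∈ {x ∈ M | ∃ z ∈ N, ‖x - z‖ = sInf {r : ℝ | ∃ a ∈ M, ∃ b ∈ N, r = ‖a - b‖}},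
      Tendsto w atTop (𝓝 x) ∧
      ‖x - F x‖ = sInf {r : ℝ | ∃ a ∈ M, ∃ b ∈ N, r = ‖a - b‖} := by
  set d : ℝ := sInf {r : ℝ | ∃ a ∈ M, ∃ b ∈ N, r = ‖a - b‖} with hd
  have hdle : ∀ a ∈ M, ∀ b ∈ N, d ≤ ‖a - b‖ := fun a ha b hb =>
    csInf_le ⟨0, by rintro _ ⟨a, -, b, -, rfl⟩; exact norm_nonneg _⟩ ⟨a, ha, b, hb, rfl⟩
  have hd0 : 0 ≤ d := Real.sInf_nonneg (by rintro _ ⟨a, -, b, -, rfl⟩; exact norm_nonneg _)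
  obtain ⟨hw0M, z0, hz0, hwz⟩ := hw0
  set v : X := w 0 - z0 with hv
  -- A pair at distance at most `d` is automatically at distance `d`, so it differs by `v`.
  have huniq : ∀ a ∈ M, ∀ b ∈ N, ‖a - b‖ ≤ d → a - b = v := fun a ha b hb h =>
    sub_eq_of_norm_eq hMconv hNconv hd0 hdle ha hw0M hb hz0 (le_antisymm h (hdle a ha b hb)) hwz
  clear_value v
  set K : Set X := {x | x ∈ M ∧ x - v ∈ N} with hKdef
  have hFv : ∀ x ∈ K, F (x - v) = F x + v := by
    rintro x ⟨hx, hxv⟩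
    have h := hFne x hx _ hxv
    rw [sub_sub_cancel, hwz, norm_sub_rev] at h
    have := huniq _ (hFN _ hxv) _ (hFM _ hx) h
    rw [add_comm, ← sub_eq_iff_eq_add, this]
  have hT : ∀ x ∈ K, PM (F x) = F x + v := by
    rintro x ⟨hx, hxv⟩
    have hm : F x + v ∈ M := hFv x ⟨hx, hxv⟩ ▸ hFN _ hxv
    have h := (hPM (F x)).2 _ hm
    rw [sub_add_cancel_left, norm_neg, hwz, norm_sub_rev] at h
    rw [← huniq _ (hPM (F x)).1 _ (hFM _ hx) h]
    abel
  have hKcl : IsClosed K :=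
    hMcl.inter (hNcl.preimage (continuous_id.sub continuous_const))
  have hKc : Convex ℝ K := by
    rintro x ⟨hx, hxv⟩ y ⟨hy, hyv⟩ a b ha hb hab
    refine ⟨hMconv hx hy ha hb hab, ?_⟩
    have h := hNconv hxv hyv ha hb hab
    have e : a • (x - v) + b • (y - v) = a • x + b • y - v := by
      rw [smul_sub, smul_sub, sub_add_sub_comm, ← add_smul, hab, one_smul]
    rwa [e] at h
  have hTK : ∀ x ∈ K, PM (F x) ∈ K := by
    intro x hx
    refine ⟨(hPM _).1, ?_⟩
    rw [hT x hx, add_sub_cancel_right]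
    exact hFM _ hx.1
  obtain ⟨C, -, hC, hFC⟩ := hcpt
  have hTC : ∀ x ∈ K, PM (F x) ∈ (fun z => z + v) '' C := fun x hx =>
    ⟨F x, hFC ⟨x, hx.1, rfl⟩, (hT x hx).symm⟩
  have hTn : ∀ x ∈ K, ∀ y ∈ K, ‖PM (F x) - PM (F y)‖ ≤ ‖x - y‖ := by
    intro x hx y hy
    rw [hT x hx, hT y hy, add_sub_add_right_eq_sub]
    have h1 := hFne x hx.1 _ hy.2
    have h2 := hFne y hy.1 _ hx.2
    rw [hFv y hy, show F x - (F y + v) = (F x - F y) - v by abel,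
      show x - (y - v) = (x - y) + v by abel] at h1
    rw [hFv x hx, norm_sub_rev, show F x + v - F y = (F x - F y) + v by abel,
      norm_sub_rev y, show x - v - y = (x - y) - v by abel] at h2
    have p1 := parallelogram_law_with_norm ℝ (F x - F y) v
    have p2 := parallelogram_law_with_norm ℝ (x - y) v
    have s1 := mul_self_le_mul_self (norm_nonneg _) h1
    have s2 := mul_self_le_mul_self (norm_nonneg _) h2
    exact abs_le_of_sq_le_sq' (by nlinarith) (norm_nonneg _) |>.2
  have hw0K : w 0 ∈ K := ⟨hw0M, by rwa [hv, sub_sub_cancel]⟩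
  obtain ⟨q, hq, hTq, hlim⟩ := ishikawa_tendsto_fixed (T := fun x => PM (F x)) hKcl hKc
    (hC.image (continuous_id.add continuous_const)) hTK hTC hTn hε.1 hη hδ hw0K hw
  refine ⟨q, ⟨hq.1, q - v, hq.2, by rw [sub_sub_cancel, hwz]⟩, hlim, ?_⟩
  have hqv : q - F q = v := by
    have h := hT q hq
    rw [show PM (F q) = q from hTq] at h
    rw [sub_eq_iff_eq_add, add_comm]
    exact h
  rw [hqv, hwz]
end
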